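/- Let ω be a renormalizer on (−2,2) with L ln ω = 0, and let (Φ,v) be a classical solution of the renormalized harmonic map system on (−2,2)×S² with constants Λ ≥ 1 and a > 0. For P₀ ∈ S² and δ > 0 let B_δ(P₀) denote the open geodesic ball in S² (round metric) and Q_δ(t₀,P₀) = (t₀−δ, t₀+δ)×B_δ(P₀). Let c₁ ∈ [−Λ,Λ] be arbitrary, and let c₂ be a constant with c₂ = a if N ∈ B_{2δ}(P₀), c₂ = −a if S ∈ B_{2δ}(P₀), and arbitrary otherwise. Then there is a constant C > 0 depending only on Λ and A₁ such that for every Q_δ(t₀,P₀) ⊆ (−2,2)×S² with 0 < δ < 1/2: ∫_{Q_{δ/2}(t₀,P₀)} ( |∇_gΦ|² + e^{4u}|∇_g v|² ) dvol_{g₀} dt ≤ (C/δ²) ∫_{Q_δ(t₀,P₀)∖Q_{δ/2}(t₀,P₀)} ( |Φ − c₁|² + ω⁻⁴|v − c₂|² ) dvol_{g₀} dt. -/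

import Mathlib

open Real MeasureTheory Set Filter

noncomputable section

/-- `θ`-partial derivative of a function of `(θ, φ)`. -/
def pdθ (f : ℝ → ℝ → ℝ) : ℝ → ℝ → ℝ := fun θ φ => deriv (fun x => f x φ) θ

/-- `φ`-partial derivative of a function of `(θ, φ)`. -/
def pdφ (f : ℝ → ℝ → ℝ) : ℝ → ℝ → ℝ := fun θ φ => deriv (fun x => f θ x) φ

/-- coordinate derivative in direction `i` (`0 = θ`, `1 = φ`). -/
def pder2 (i : Fin 2) : (ℝ → ℝ → ℝ) → (ℝ → ℝ → ℝ) := if i = 0 then pdθ else pdφ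

/-- Christoffel symbols `Γ^m_{i j}` of the round metric on `S²` in `(θ, φ)`. -/
def christoffel (m i j : Fin 2) (θ : ℝ) : ℝ :=
  if m = 0 ∧ i = 1 ∧ j = 1 then -(Real.sin θ * Real.cos θ)
  else if m = 1 ∧ ((i = 0 ∧ j = 1) ∨ (i = 1 ∧ j = 0)) then Real.cos θ / Real.sin θ
  else 0

/-- covariant derivative (in the round metric) of a `k`-tensor on `S²`,
given by its coordinate components. -/
def covDer {k : ℕ} (T : (Fin k → Fin 2) → ℝ → ℝ → ℝ) :
    (Fin (k + 1) → Fin 2) → ℝ → ℝ → ℝ := fun I θ φ =>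
  pder2 (I 0) (T fun j => I j.succ) θ φ
    - ∑ j : Fin k, ∑ m : Fin 2,
        christoffel m (I 0) (I j.succ) θ *
          T (Function.update (fun j' => I j'.succ) j m) θ φ

/-- the `k`-th covariant derivative of a function on `S²`. -/
def covIter (f : ℝ → ℝ → ℝ) : (k : ℕ) → (Fin k → Fin 2) → ℝ → ℝ → ℝ
  | 0 => fun _ => f
  | k + 1 => covDer (covIter f k)

/-- inverse-metric weight used to compute tensor norms. -/
def sphWeight (i : Fin 2) (θ : ℝ) : ℝ := if i = 0 then 1 else (Real.sin θ ^ 2)⁻¹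

/-- `|∇_{g₀}^k f|`, the norm of the `k`-th covariant derivative in the round metric. -/
def covNorm (k : ℕ) (f : ℝ → ℝ → ℝ) (θ φ : ℝ) : ℝ :=
  Real.sqrt (∑ I : Fin k → Fin 2, (∏ j, sphWeight (I j) θ) * (covIter f k I θ φ) ^ 2)

/-- `∇_{g₀}f·∇_{g₀}h` on the round sphere. -/
def gradDotS2 (f g : ℝ → ℝ → ℝ) (θ φ : ℝ) : ℝ :=
  pdθ f θ φ * pdθ g θ φ + (Real.sin θ ^ 2)⁻¹ * pdφ f θ φ * pdφ g θ φ

/-- `|∇_{g₀}f|²` on the round sphere. -/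
def gradNormSqS2 (f : ℝ → ℝ → ℝ) (θ φ : ℝ) : ℝ := gradDotS2 f f θ φ

/-- `Δ_{g₀}f`, the round Laplacian in coordinates. -/
def lapS2 (f : ℝ → ℝ → ℝ) (θ φ : ℝ) : ℝ :=
  pdθ (pdθ f) θ φ + (Real.cos θ / Real.sin θ) * pdθ f θ φ +
    (Real.sin θ ^ 2)⁻¹ * pdφ (pdφ f) θ φ

/-- integral over `S²` with respect to `dvol_{g₀} = sinθ dθ dφ`. -/
def sphInt (f : ℝ → ℝ → ℝ) : ℝ :=
  ∫ θ in Ioo (0 : ℝ) π, (∫ φ in Ioo (0 : ℝ) (2 * π), f θ φ) * Real.sin θ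

/-- round distance between the points with coordinates `(θ, φ)` and `(θ', φ')`. -/
def sDist (θ φ θ' φ' : ℝ) : ℝ :=
  Real.arccos (Real.cos θ * Real.cos θ' + Real.sin θ * Real.sin θ' * Real.cos (φ - φ'))

/-- a function on `S²` (in coordinates), of class `C^k`, with bounded covariant
derivatives up to order `k`. -/
def CkSphere (k : ℕ) (f : ℝ → ℝ → ℝ) : Prop :=
  ContDiffOn ℝ k (fun p : ℝ × ℝ => f p.1 p.2) (Ioo 0 π ×ˢ (univ : Set ℝ)) ∧
  (∀ θ φ : ℝ, f θ (φ + 2 * π) = f θ φ) ∧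
  ∃ C : ℝ, ∀ j ≤ k, ∀ θ ∈ Ioo (0 : ℝ) π, ∀ φ : ℝ, covNorm j f θ φ ≤ C

/-- a smooth function on `S²` (in coordinates), with bounded covariant derivatives
of all orders. -/
def SmoothSphere (f : ℝ → ℝ → ℝ) : Prop :=
  ContDiffOn ℝ (⊤ : ℕ∞) (fun p : ℝ × ℝ => f p.1 p.2) (Ioo 0 π ×ˢ (univ : Set ℝ)) ∧
  (∀ θ φ : ℝ, f θ (φ + 2 * π) = f θ φ) ∧
  ∀ j : ℕ, ∃ C : ℝ, ∀ θ ∈ Ioo (0 : ℝ) π, ∀ φ : ℝ, covNorm j f θ φ ≤ C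
/-- `t`-partial derivative on the cylinder. -/
def cdt (F : ℝ → ℝ → ℝ → ℝ) : ℝ → ℝ → ℝ → ℝ := fun t θ φ => deriv (fun s => F s θ φ) t

/-- `θ`-partial derivative on the cylinder. -/
def cdθ (F : ℝ → ℝ → ℝ → ℝ) : ℝ → ℝ → ℝ → ℝ := fun t => pdθ (F t)

/-- `φ`-partial derivative on the cylinder. -/
def cdφ (F : ℝ → ℝ → ℝ → ℝ) : ℝ → ℝ → ℝ → ℝ := fun t => pdφ (F t)

/-- the operator `L = ∂_t² − ∂_t + Δ_{g₀}` on the cylinder. -/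
def cL (F : ℝ → ℝ → ℝ → ℝ) : ℝ → ℝ → ℝ → ℝ := fun t θ φ =>
  cdt (cdt F) t θ φ - cdt F t θ φ + lapS2 (F t) θ φ

/-- `∇_g F·∇_g G` for the product metric `g = dt² + g₀`. -/
def cgradDot (F G : ℝ → ℝ → ℝ → ℝ) (t θ φ : ℝ) : ℝ :=
  cdt F t θ φ * cdt G t θ φ + gradDotS2 (F t) (G t) θ φ

/-- `|∇_g F|²` for the product metric `g = dt² + g₀`. -/
def cgradNormSq (F : ℝ → ℝ → ℝ → ℝ) (t θ φ : ℝ) : ℝ := cgradDot F F t θ φ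

/-- a renormalizer `ω` on the interval `I`: positive and smooth away from the poles,
with `ln ω − ln sinθ` extending continuously to `I×S²` together with all its
coordinate derivatives of order `≤ 10`, bounded in absolute value by `A₁ ≥ 1`. -/
structure Renormalizer (I : Set ℝ) (A₁ : ℝ) : Type where
  ω : ℝ → ℝ → ℝ → ℝ
  A₁_ge : 1 ≤ A₁
  pos : ∀ t ∈ I, ∀ θ ∈ Ioo (0 : ℝ) π, ∀ φ : ℝ, 0 < ω t θ φ
  periodic : ∀ t θ φ : ℝ, ω t θ (φ + 2 * π) = ω t θ φ
  smooth : ContDiffOn ℝ (⊤ : ℕ∞) (fun p : ℝ × ℝ × ℝ => ω p.1 p.2.1 p.2.2)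
    (I ×ˢ (Ioo (0 : ℝ) π ×ˢ (univ : Set ℝ)))
  deriv_ext : ∀ m l n : ℕ, m + l + n ≤ 10 →
    ∃ G : ℝ → ℝ → ℝ → ℝ,
      ContinuousOn (fun p : ℝ × ℝ × ℝ => G p.1 p.2.1 p.2.2)
        (I ×ˢ (Icc (0 : ℝ) π ×ˢ (univ : Set ℝ))) ∧
      (∀ t ∈ I, ∀ θ ∈ Ioo (0 : ℝ) π, ∀ φ : ℝ,
        G t θ φ = (cdt^[m] (cdθ^[l] (cdφ^[n]
          (fun t θ φ => Real.log (ω t θ φ) - Real.log (Real.sin θ))))) t θ φ) ∧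
      (∀ t ∈ I, ∀ θ ∈ Icc (0 : ℝ) π, ∀ φ : ℝ, |G t θ φ| ≤ A₁)

/-- a classical solution `(Φ, v)` of the renormalized harmonic map system on `I×S²`,
with constants `Λ ≥ 1` and `a > 0`:  `C³` on `I×S²` and smooth in `t` and `φ`,
satisfying `LΦ = 2e^{4u}|∇_g v|² + L ln ω` and `Lv = −4∇_g u·∇_g v` (where
`u = Φ − ln ω`), `|Φ| ≤ Λ`, with locally finite renormalized energy, and with
traces `v = a` at the north pole and `v = −a` at the south pole. -/
structure RHMSolution (I : Set ℝ) (A₁ : ℝ) (R : Renormalizer I A₁) (Λ a : ℝ) :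
    Type where
  Φ : ℝ → ℝ → ℝ → ℝ
  v : ℝ → ℝ → ℝ → ℝ
  Λ_ge : 1 ≤ Λ
  a_pos : 0 < a
  periodicΦ : ∀ t θ φ : ℝ, Φ t θ (φ + 2 * π) = Φ t θ φ
  periodicv : ∀ t θ φ : ℝ, v t θ (φ + 2 * π) = v t θ φ
  regΦ : ContDiffOn ℝ 3 (fun p : ℝ × ℝ × ℝ => Φ p.1 p.2.1 p.2.2)
    (I ×ˢ (Icc (0 : ℝ) π ×ˢ (univ : Set ℝ)))
  regv : ContDiffOn ℝ 3 (fun p : ℝ × ℝ × ℝ => v p.1 p.2.1 p.2.2)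
    (I ×ˢ (Icc (0 : ℝ) π ×ˢ (univ : Set ℝ)))
  smooth_tφ_Φ : ∀ θ ∈ Icc (0 : ℝ) π,
    ContDiffOn ℝ (⊤ : ℕ∞) (fun q : ℝ × ℝ => Φ q.1 θ q.2) (I ×ˢ (univ : Set ℝ))
  smooth_tφ_v : ∀ θ ∈ Icc (0 : ℝ) π,
    ContDiffOn ℝ (⊤ : ℕ∞) (fun q : ℝ × ℝ => v q.1 θ q.2) (I ×ˢ (univ : Set ℝ))
  eqΦ : ∀ t ∈ I, ∀ θ ∈ Ioo (0 : ℝ) π, ∀ φ : ℝ,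
    cL Φ t θ φ =
      2 * Real.exp (4 * (Φ t θ φ - Real.log (R.ω t θ φ))) * cgradNormSq v t θ φ
        + cL (fun t θ φ => Real.log (R.ω t θ φ)) t θ φ
  eqv : ∀ t ∈ I, ∀ θ ∈ Ioo (0 : ℝ) π, ∀ φ : ℝ,
    cL v t θ φ =
      -4 * cgradDot (fun t θ φ => Φ t θ φ - Real.log (R.ω t θ φ)) v t θ φ
  bddΦ : ∀ t ∈ I, ∀ θ ∈ Icc (0 : ℝ) π, ∀ φ : ℝ, |Φ t θ φ| ≤ Λ
  energy_loc : ∀ J : Set ℝ, J ⊆ I → IsCompact J →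
    IntegrableOn (fun p : ℝ × ℝ × ℝ =>
      (cgradNormSq Φ p.1 p.2.1 p.2.2
        + ((R.ω p.1 p.2.1 p.2.2) ^ 4)⁻¹ * cgradNormSq v p.1 p.2.1 p.2.2)
        * Real.sin p.2.1)
      (J ×ˢ (Ioo (0 : ℝ) π ×ˢ Ioo (0 : ℝ) (2 * π))) volume
  traceN : ∀ t ∈ I, ∀ φ : ℝ, v t 0 φ = a
  traceS : ∀ t ∈ I, ∀ φ : ℝ, v t π φ = -a
/-- the cylinder `Q_δ(t₀,P₀) = (t₀−δ,t₀+δ) × B_δ(P₀)` in coordinates, using the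
fundamental domain `φ ∈ (φ₀−π, φ₀+π)`. -/
def Qset (t₀ θ₀ φ₀ δ : ℝ) : Set (ℝ × ℝ × ℝ) :=
  {p : ℝ × ℝ × ℝ | p.1 ∈ Ioo (t₀ - δ) (t₀ + δ) ∧ p.2.1 ∈ Ioo 0 π ∧
    p.2.2 ∈ Ioo (φ₀ - π) (φ₀ + π) ∧ sDist p.2.1 p.2.2 θ₀ φ₀ < δ}

noncomputable section

/-! ### Partial derivatives -/

/-- uncurried form -/
def unc (F : ℝ → ℝ → ℝ → ℝ) (p : ℝ × ℝ × ℝ) : ℝ := F p.1 p.2.1 p.2.2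

/-- the regular part of the cylinder in coordinates -/
def Om : Set (ℝ × ℝ × ℝ) := Ioo (-2 : ℝ) 2 ×ˢ (Ioo (0 : ℝ) π ×ˢ (univ : Set ℝ))

lemma isOpen_Om : IsOpen Om := isOpen_Ioo.prod (isOpen_Ioo.prod isOpen_univ)

lemma mem_Om {t θ φ : ℝ} : (t, θ, φ) ∈ Om ↔ t ∈ Ioo (-2 : ℝ) 2 ∧ θ ∈ Ioo (0 : ℝ) π := by
  simp [Om]

lemma hasDerivAt_slice_t {F : ℝ → ℝ → ℝ → ℝ} {t θ φ : ℝ}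
    (h : DifferentiableAt ℝ (unc F) (t, θ, φ)) :
    HasDerivAt (fun s => F s θ φ) (fderiv ℝ (unc F) (t, θ, φ) (1, 0, 0)) t := by
  have h2 : HasDerivAt (fun s : ℝ => (s, θ, φ)) ((1 : ℝ), (0 : ℝ), (0 : ℝ)) t :=
    (hasDerivAt_id t).prodMk ((hasDerivAt_const t θ).prodMk (hasDerivAt_const t φ))
  exact h.hasFDerivAt.comp_hasDerivAt t h2

lemma hasDerivAt_slice_th {F : ℝ → ℝ → ℝ → ℝ} {t θ φ : ℝ}
    (h : DifferentiableAt ℝ (unc F) (t, θ, φ)) :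
    HasDerivAt (fun s => F t s φ) (fderiv ℝ (unc F) (t, θ, φ) (0, 1, 0)) θ := by
  have h2 : HasDerivAt (fun s : ℝ => (t, s, φ)) ((0 : ℝ), (1 : ℝ), (0 : ℝ)) θ :=
    (hasDerivAt_const θ t).prodMk ((hasDerivAt_id θ).prodMk (hasDerivAt_const θ φ))
  exact h.hasFDerivAt.comp_hasDerivAt θ h2

lemma hasDerivAt_slice_ph {F : ℝ → ℝ → ℝ → ℝ} {t θ φ : ℝ}
    (h : DifferentiableAt ℝ (unc F) (t, θ, φ)) :
    HasDerivAt (fun s => F t θ s) (fderiv ℝ (unc F) (t, θ, φ) (0, 0, 1)) φ := by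
  have h2 : HasDerivAt (fun s : ℝ => (t, θ, s)) ((0 : ℝ), (0 : ℝ), (1 : ℝ)) φ :=
    (hasDerivAt_const φ t).prodMk ((hasDerivAt_const φ θ).prodMk (hasDerivAt_id φ))
  exact h.hasFDerivAt.comp_hasDerivAt φ h2

/-- `C^n` on the regular part -/
def Cn (n : ℕ) (F : ℝ → ℝ → ℝ → ℝ) : Prop := ContDiffOn ℝ n (unc F) Om

lemma Cn.mono {n m : ℕ} {F} (h : Cn n F) (hm : m ≤ n) : Cn m F :=
  ContDiffOn.of_le h (by exact_mod_cast hm)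

lemma Cn.cont {n : ℕ} {F} (h : Cn n F) : ContinuousOn (unc F) Om := ContDiffOn.continuousOn h

lemma Cn.diffAt {n : ℕ} {F} (h : Cn (n + 1) F) {p} (hp : p ∈ Om) :
    DifferentiableAt ℝ (unc F) p :=
  (ContDiffOn.contDiffAt h (isOpen_Om.mem_nhds hp)).differentiableAt (by simp)

lemma Cn.hdt {n : ℕ} {F} (h : Cn (n + 1) F) {t θ φ : ℝ} (hp : (t, θ, φ) ∈ Om) :
    HasDerivAt (fun s => F s θ φ) (cdt F t θ φ) t :=
  (hasDerivAt_slice_t (h.diffAt hp)).differentiableAt.hasDerivAt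

lemma Cn.hdθ {n : ℕ} {F} (h : Cn (n + 1) F) {t θ φ : ℝ} (hp : (t, θ, φ) ∈ Om) :
    HasDerivAt (fun s => F t s φ) (cdθ F t θ φ) θ :=
  (hasDerivAt_slice_th (h.diffAt hp)).differentiableAt.hasDerivAt

lemma Cn.hdφ {n : ℕ} {F} (h : Cn (n + 1) F) {t θ φ : ℝ} (hp : (t, θ, φ) ∈ Om) :
    HasDerivAt (fun s => F t θ s) (cdφ F t θ φ) φ :=
  (hasDerivAt_slice_ph (h.diffAt hp)).differentiableAt.hasDerivAt

lemma Cn.fd {n : ℕ} {F} (h : Cn (n + 1) F) (w : ℝ × ℝ × ℝ) :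
    ContDiffOn ℝ n (fun p => fderiv ℝ (unc F) p w) Om := by
  have h1 : ContDiffOn ℝ n (fderiv ℝ (unc F)) Om :=
    ContDiffOn.fderiv_of_isOpen h isOpen_Om (by norm_cast)
  exact h1.clm_apply contDiffOn_const

lemma Cn.dt {n : ℕ} {F} (h : Cn (n + 1) F) : Cn n (cdt F) := by
  refine (h.fd (1, 0, 0)).congr ?_
  rintro ⟨t, θ, φ⟩ hp
  exact (hasDerivAt_slice_t (h.diffAt hp)).deriv

lemma Cn.dθ {n : ℕ} {F} (h : Cn (n + 1) F) : Cn n (cdθ F) := by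
  refine (h.fd (0, 1, 0)).congr ?_
  rintro ⟨t, θ, φ⟩ hp
  exact (hasDerivAt_slice_th (h.diffAt hp)).deriv

lemma Cn.dφ {n : ℕ} {F} (h : Cn (n + 1) F) : Cn n (cdφ F) := by
  refine (h.fd (0, 0, 1)).congr ?_
  rintro ⟨t, θ, φ⟩ hp
  exact (hasDerivAt_slice_ph (h.diffAt hp)).deriv

lemma Cn.mul {n : ℕ} {F G} (h : Cn n F) (k : Cn n G) :
    Cn n (fun t θ φ => F t θ φ * G t θ φ) := ContDiffOn.mul h k

lemma Cn.add {n : ℕ} {F G} (h : Cn n F) (k : Cn n G) :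
    Cn n (fun t θ φ => F t θ φ + G t θ φ) := ContDiffOn.add h k

lemma Cn.sub {n : ℕ} {F G} (h : Cn n F) (k : Cn n G) :
    Cn n (fun t θ φ => F t θ φ - G t θ φ) := ContDiffOn.sub h k

lemma Cn.of {n : ℕ} {F} (h : ContDiff ℝ n (unc F)) : Cn n F := h.contDiffOn

/-! ### Box integrals -/

/-- coordinate box -/
def box (t₁ t₂ α β φ₁ φ₂ : ℝ) : Set (ℝ × ℝ × ℝ) := Ioo t₁ t₂ ×ˢ (Ioo α β ×ˢ Ioo φ₁ φ₂)

/-- closed coordinate box -/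
def cbox (t₁ t₂ α β φ₁ φ₂ : ℝ) : Set (ℝ × ℝ × ℝ) := Icc t₁ t₂ ×ˢ (Icc α β ×ˢ Icc φ₁ φ₂)

lemma box_sub_cbox {t₁ t₂ α β φ₁ φ₂ : ℝ} : box t₁ t₂ α β φ₁ φ₂ ⊆ cbox t₁ t₂ α β φ₁ φ₂ :=
  prod_mono Ioo_subset_Icc_self (prod_mono Ioo_subset_Icc_self Ioo_subset_Icc_self)

lemma cbox_sub_Om {t₁ t₂ α β φ₁ φ₂ : ℝ} (h1 : -2 < t₁) (h2 : t₂ < 2) (h3 : 0 < α) (h4 : β < π) :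
    cbox t₁ t₂ α β φ₁ φ₂ ⊆ Om := by
  rintro ⟨t, θ, φ⟩ ⟨⟨a1, a2⟩, ⟨a3, a4⟩, -⟩
  simp only at a1 a2 a3 a4
  exact mem_Om.2 ⟨⟨by linarith, by linarith⟩, ⟨by linarith, by linarith⟩⟩

lemma isCompact_cbox {t₁ t₂ α β φ₁ φ₂ : ℝ} : IsCompact (cbox t₁ t₂ α β φ₁ φ₂) :=
  isCompact_Icc.prod (isCompact_Icc.prod isCompact_Icc)

lemma measurableSet_box {t₁ t₂ α β φ₁ φ₂ : ℝ} : MeasurableSet (box t₁ t₂ α β φ₁ φ₂) :=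
  measurableSet_Ioo.prod (measurableSet_Ioo.prod measurableSet_Ioo)

lemma integrableOn_box {f : ℝ × ℝ × ℝ → ℝ} {t₁ t₂ α β φ₁ φ₂ : ℝ}
    (hf : ContinuousOn f (cbox t₁ t₂ α β φ₁ φ₂)) : IntegrableOn f (box t₁ t₂ α β φ₁ φ₂) :=
  (hf.integrableOn_compact isCompact_cbox).mono_set box_sub_cbox

lemma vol_Ioo_prod {α β φ₁ φ₂ : ℝ} (h1 : α ≤ β) (h2 : φ₁ ≤ φ₂) :
    (volume (Ioo α β ×ˢ Ioo φ₁ φ₂)).toReal = (β - α) * (φ₂ - φ₁) := by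
  rw [Measure.volume_eq_prod, Measure.prod_prod, Real.volume_Ioo, Real.volume_Ioo,
    ENNReal.toReal_mul, ENNReal.toReal_ofReal (by linarith), ENNReal.toReal_ofReal (by linarith)]

lemma vol_Ioo_prod_lt {α β φ₁ φ₂ : ℝ} : volume (Ioo α β ×ˢ Ioo φ₁ φ₂) < ⊤ := by
  rw [Measure.volume_eq_prod, Measure.prod_prod, Real.volume_Ioo, Real.volume_Ioo]
  exact ENNReal.mul_lt_top ENNReal.ofReal_lt_top ENNReal.ofReal_lt_top

/-- integrals of a derivative along one direction of a product -/
lemma Ioo_integral_eq {a b : ℝ} (hab : a ≤ b) (f : ℝ → ℝ) :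
    ∫ x in Ioo a b, f x = ∫ x in a..b, f x := by
  rw [intervalIntegral.integral_of_le hab, integral_Ioc_eq_integral_Ioo]

lemma box_fubini_t {f : ℝ × ℝ × ℝ → ℝ} {t₁ t₂ α β φ₁ φ₂ : ℝ}
    (hf : IntegrableOn f (box t₁ t₂ α β φ₁ φ₂)) :
    ∫ p in box t₁ t₂ α β φ₁ φ₂, f p
      = ∫ q in Ioo α β ×ˢ Ioo φ₁ φ₂, ∫ t in Ioo t₁ t₂, f (t, q.1, q.2) := by
  unfold box at *
  rw [Measure.volume_eq_prod] at *
  rw [IntegrableOn, ← Measure.prod_restrict] at hf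
  rw [← Measure.prod_restrict, integral_prod_symm _ hf]

lemma box_fubini_th {f : ℝ × ℝ × ℝ → ℝ} {t₁ t₂ α β φ₁ φ₂ : ℝ}
    (hf : IntegrableOn f (box t₁ t₂ α β φ₁ φ₂)) :
    ∫ p in box t₁ t₂ α β φ₁ φ₂, f p
      = ∫ t in Ioo t₁ t₂, ∫ φ in Ioo φ₁ φ₂, ∫ θ in Ioo α β, f (t, θ, φ) := by
  unfold box at *
  rw [Measure.volume_eq_prod] at *
  rw [IntegrableOn, ← Measure.prod_restrict] at hf
  rw [← Measure.prod_restrict, integral_prod _ hf]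
  refine integral_congr_ae ?_
  filter_upwards [hf.prod_right_ae] with t ht
  rw [Measure.volume_eq_prod] at *
  rw [← Measure.prod_restrict] at *
  exact integral_prod_symm _ ht

lemma box_fubini_ph {f : ℝ × ℝ × ℝ → ℝ} {t₁ t₂ α β φ₁ φ₂ : ℝ}
    (hf : IntegrableOn f (box t₁ t₂ α β φ₁ φ₂)) :
    ∫ p in box t₁ t₂ α β φ₁ φ₂, f p
      = ∫ t in Ioo t₁ t₂, ∫ θ in Ioo α β, ∫ φ in Ioo φ₁ φ₂, f (t, θ, φ) := by
  unfold box at *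
  rw [Measure.volume_eq_prod] at *
  rw [IntegrableOn, ← Measure.prod_restrict] at hf
  rw [← Measure.prod_restrict, integral_prod _ hf]
  refine integral_congr_ae ?_
  filter_upwards [hf.prod_right_ae] with t ht
  rw [Measure.volume_eq_prod] at *
  rw [← Measure.prod_restrict] at *
  exact integral_prod _ ht

end

noncomputable section

lemma box_ftc_t {G : ℝ → ℝ → ℝ → ℝ} {t₁ t₂ α β φ₁ φ₂ : ℝ} (h1 : -2 < t₁) (h2 : t₂ < 2)
    (h3 : 0 < α) (h4 : β < π) (h12 : t₁ ≤ t₂) (hG : Cn 1 G)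
    (hz : ∀ θ φ, G t₂ θ φ = G t₁ θ φ) :
    ∫ p in box t₁ t₂ α β φ₁ φ₂, cdt G p.1 p.2.1 p.2.2 = 0 := by
  have hc : ContinuousOn (unc (cdt G)) Om := (Cn.dt (n := 0) hG).cont
  have hi : IntegrableOn (unc (cdt G)) (box t₁ t₂ α β φ₁ φ₂) :=
    integrableOn_box (hc.mono (cbox_sub_Om h1 h2 h3 h4))
  have := box_fubini_t hi
  refine this.trans ?_
  rw [setIntegral_congr_fun (g := fun _ => (0 : ℝ)) (measurableSet_Ioo.prod measurableSet_Ioo)]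
  · simp
  rintro ⟨θ, φ⟩ ⟨hθ, hφ⟩
  simp only at hθ hφ ⊢
  rw [Ioo_integral_eq h12]
  have hm : ∀ t ∈ uIcc t₁ t₂, (t, θ, φ) ∈ Om := by
    intro t ht
    rw [uIcc_of_le h12] at ht
    exact mem_Om.2 ⟨⟨by linarith [ht.1], by linarith [ht.2]⟩,
      ⟨by linarith [hθ.1], by linarith [hθ.2]⟩⟩
  have : ∫ t in t₁..t₂, unc (cdt G) (t, θ, φ) = G t₂ θ φ - G t₁ θ φ := by
    refine intervalIntegral.integral_eq_sub_of_hasDerivAt (f := fun s => G s θ φ)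
      (fun t ht => Cn.hdt (n := 0) hG (hm t ht)) ?_
    apply ContinuousOn.intervalIntegrable
    exact hc.comp (by fun_prop) hm
  rw [this, hz, sub_self]

lemma box_ftc_ph {G : ℝ → ℝ → ℝ → ℝ} {t₁ t₂ α β φ₁ φ₂ : ℝ} (h1 : -2 < t₁) (h2 : t₂ < 2)
    (h3 : 0 < α) (h4 : β < π) (h12 : φ₁ ≤ φ₂) (hG : Cn 1 G)
    (hz : ∀ t θ, G t θ φ₂ = G t θ φ₁) :
    ∫ p in box t₁ t₂ α β φ₁ φ₂, cdφ G p.1 p.2.1 p.2.2 = 0 := by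
  have hc : ContinuousOn (unc (cdφ G)) Om := (Cn.dφ (n := 0) hG).cont
  have hi : IntegrableOn (unc (cdφ G)) (box t₁ t₂ α β φ₁ φ₂) :=
    integrableOn_box (hc.mono (cbox_sub_Om h1 h2 h3 h4))
  have := box_fubini_ph hi
  refine this.trans ?_
  rw [setIntegral_congr_fun (g := fun _ => (0 : ℝ)) measurableSet_Ioo]
  · simp
  intro t ht
  simp only
  rw [setIntegral_congr_fun (g := fun _ => (0 : ℝ)) measurableSet_Ioo]
  · simp
  intro θ hθ
  simp only
  rw [Ioo_integral_eq h12]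
  have hm : ∀ φ ∈ uIcc φ₁ φ₂, (t, θ, φ) ∈ Om := by
    intro φ _
    exact mem_Om.2 ⟨⟨by linarith [ht.1], by linarith [ht.2]⟩,
      ⟨by linarith [hθ.1], by linarith [hθ.2]⟩⟩
  have : ∫ φ in φ₁..φ₂, unc (cdφ G) (t, θ, φ) = G t θ φ₂ - G t θ φ₁ := by
    refine intervalIntegral.integral_eq_sub_of_hasDerivAt (f := fun s => G t θ s)
      (fun φ hφ => Cn.hdφ (n := 0) hG (hm φ hφ)) ?_
    apply ContinuousOn.intervalIntegrable
    exact hc.comp (by fun_prop) hm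
  rw [this, hz, sub_self]

lemma box_ftc_th {G : ℝ → ℝ → ℝ → ℝ} {t₁ t₂ α β φ₁ φ₂ κ : ℝ} (h1 : -2 < t₁) (h2 : t₂ < 2)
    (h3 : 0 < α) (h4 : β < π) (h12 : t₁ ≤ t₂) (hab : α ≤ β) (hp : φ₁ ≤ φ₂) (hG : Cn 1 G)
    (hα : ∀ t ∈ Ioo t₁ t₂, ∀ φ ∈ Ioo φ₁ φ₂, |G t α φ| ≤ κ)
    (hβ : ∀ t ∈ Ioo t₁ t₂, ∀ φ ∈ Ioo φ₁ φ₂, |G t β φ| ≤ κ) :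
    |∫ p in box t₁ t₂ α β φ₁ φ₂, cdθ G p.1 p.2.1 p.2.2| ≤ 2 * κ * (φ₂ - φ₁) * (t₂ - t₁) := by
  have hc : ContinuousOn (unc (cdθ G)) Om := (Cn.dθ (n := 0) hG).cont
  have hi : IntegrableOn (unc (cdθ G)) (box t₁ t₂ α β φ₁ φ₂) :=
    integrableOn_box (hc.mono (cbox_sub_Om h1 h2 h3 h4))
  have := box_fubini_th hi
  have this' : ∫ p in box t₁ t₂ α β φ₁ φ₂, cdθ G p.1 p.2.1 p.2.2 = _ := this
  rw [this', ← Real.norm_eq_abs]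
  have key : ∀ t ∈ Ioo t₁ t₂, ‖∫ φ in Ioo φ₁ φ₂, ∫ θ in Ioo α β, unc (cdθ G) (t, θ, φ)‖
      ≤ 2 * κ * (φ₂ - φ₁) := by
    intro t ht
    have k2 : ∀ φ ∈ Ioo φ₁ φ₂, ‖∫ θ in Ioo α β, unc (cdθ G) (t, θ, φ)‖ ≤ 2 * κ := by
      intro φ hφ
      rw [Ioo_integral_eq hab]
      have hm : ∀ θ ∈ uIcc α β, (t, θ, φ) ∈ Om := by
        intro θ hθ
        rw [uIcc_of_le hab] at hθ
        exact mem_Om.2 ⟨⟨by linarith [ht.1], by linarith [ht.2]⟩,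
          ⟨by linarith [hθ.1], by linarith [hθ.2]⟩⟩
      have : ∫ θ in α..β, unc (cdθ G) (t, θ, φ) = G t β φ - G t α φ := by
        refine intervalIntegral.integral_eq_sub_of_hasDerivAt (f := fun s => G t s φ)
          (fun θ hθ => Cn.hdθ (n := 0) hG (hm θ hθ)) ?_
        apply ContinuousOn.intervalIntegrable
        exact hc.comp (by fun_prop) hm
      rw [this, Real.norm_eq_abs]
      have a1 := abs_le.1 (hα t ht φ hφ)
      have a2 := abs_le.1 (hβ t ht φ hφ)
      exact abs_le.2 ⟨by linarith, by linarith⟩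
    have := norm_setIntegral_le_of_norm_le_const (μ := volume) (s := Ioo φ₁ φ₂)
      (by simp) k2
    refine this.trans (le_of_eq ?_)
    rw [Measure.real, Real.volume_Ioo, ENNReal.toReal_ofReal (by linarith)]
  have := norm_setIntegral_le_of_norm_le_const (μ := volume) (s := Ioo t₁ t₂)
      (by simp) key
  refine this.trans (le_of_eq ?_)
  rw [Measure.real, Real.volume_Ioo, ENNReal.toReal_ofReal (by linarith)]

lemma cdφ_per {F : ℝ → ℝ → ℝ → ℝ} (h : ∀ t θ φ, F t θ (φ + 2 * π) = F t θ φ) (t θ φ : ℝ) :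
    cdφ F t θ (φ + 2 * π) = cdφ F t θ φ := by
  unfold cdφ pdφ
  rw [← deriv_comp_add_const (f := fun x => F t θ x)]
  simp only [h]

lemma sin_pos_Om {t θ φ : ℝ} (hp : (t, θ, φ) ∈ Om) : 0 < Real.sin θ :=
  Real.sin_pos_of_pos_of_lt_pi (mem_Om.1 hp).2.1 (mem_Om.1 hp).2.2

lemma Cn_wt (n : ℕ) : Cn n (fun t θ _ => Real.exp (-t) * Real.sin θ) := by
  apply Cn.of
  unfold unc
  fun_prop

lemma Cn_wti (n : ℕ) : Cn n (fun t θ _ => Real.exp (-t) * (Real.sin θ)⁻¹) := by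
  have h : ContDiffOn ℝ n (fun p : ℝ × ℝ × ℝ => Real.exp (-p.1) * (Real.sin p.2.1)⁻¹) Om := by
    apply ContDiffOn.mul (by fun_prop)
    apply ContDiffOn.inv (by fun_prop)
    rintro ⟨t, θ, φ⟩ hp
    exact (sin_pos_Om hp).ne'
  exact h

lemma cont_cL {f : ℝ → ℝ → ℝ → ℝ} (hf : Cn 2 f) : ContinuousOn (unc (cL f)) Om := by
  have hft : Cn 1 (cdt f) := Cn.dt (n := 1) hf
  have hfθ : Cn 1 (cdθ f) := Cn.dθ (n := 1) hf
  have hfφ : Cn 1 (cdφ f) := Cn.dφ (n := 1) hf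
  have c1 := (Cn.dt (n := 0) hft).cont
  have c2 := (Cn.dθ (n := 0) hfθ).cont
  have c3 := (Cn.dφ (n := 0) hfφ).cont
  have c4 := hft.cont
  have c5 := hfθ.cont
  have s1 : ContinuousOn (fun p : ℝ × ℝ × ℝ => (Real.sin p.2.1)) Om := by fun_prop
  have s2 : ContinuousOn (fun p : ℝ × ℝ × ℝ => (Real.cos p.2.1)) Om := by fun_prop
  have hs : ∀ p ∈ Om, Real.sin p.2.1 ≠ 0 := fun p hp => (sin_pos_Om (φ := p.2.2) hp).ne'
  exact ((c1.sub c4).add ((c2.add ((s2.div s1 hs).mul c5)).add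
    (((s1.pow 2).inv₀ (fun p hp => pow_ne_zero 2 (hs p hp))).mul c3)))

lemma cont_cgradDot {f g : ℝ → ℝ → ℝ → ℝ} (hf : Cn 1 f) (hg : Cn 1 g) :
    ContinuousOn (unc (cgradDot f g)) Om := by
  have c1 := (Cn.dt (n := 0) hf).cont
  have c2 := (Cn.dθ (n := 0) hf).cont
  have c3 := (Cn.dφ (n := 0) hf).cont
  have d1 := (Cn.dt (n := 0) hg).cont
  have d2 := (Cn.dθ (n := 0) hg).cont
  have d3 := (Cn.dφ (n := 0) hg).cont
  have s1 : ContinuousOn (fun p : ℝ × ℝ × ℝ => (Real.sin p.2.1)) Om := by fun_prop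
  have hs : ∀ p ∈ Om, Real.sin p.2.1 ≠ 0 := fun p hp => (sin_pos_Om (φ := p.2.2) hp).ne'
  exact (c1.mul d1).add ((c2.mul d2).add
    ((((s1.pow 2).inv₀ (fun p hp => pow_ne_zero 2 (hs p hp))).mul c3).mul d3))

/-- Green's identity on a box, as an estimate. -/
lemma green {f ζ : ℝ → ℝ → ℝ → ℝ} {t₁ t₂ α β φ₁ κ : ℝ} (h1 : -2 < t₁) (h2 : t₂ < 2)
    (h3 : 0 < α) (h4 : β < π) (h12 : t₁ ≤ t₂) (hab : α ≤ β)
    (hf : Cn 2 f) (hζ : Cn 1 ζ)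
    (perf : ∀ t θ φ, f t θ (φ + 2 * π) = f t θ φ) (perζ : ∀ t θ φ, ζ t θ (φ + 2 * π) = ζ t θ φ)
    (hz1 : ∀ θ φ, ζ t₁ θ φ = 0) (hz2 : ∀ θ φ, ζ t₂ θ φ = 0)
    (hα : ∀ t ∈ Ioo t₁ t₂, ∀ φ ∈ Ioo φ₁ (φ₁ + 2 * π),
      |ζ t α φ * (Real.exp (-t) * Real.sin α) * cdθ f t α φ| ≤ κ)
    (hβ : ∀ t ∈ Ioo t₁ t₂, ∀ φ ∈ Ioo φ₁ (φ₁ + 2 * π),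
      |ζ t β φ * (Real.exp (-t) * Real.sin β) * cdθ f t β φ| ≤ κ) :
    |∫ p in box t₁ t₂ α β φ₁ (φ₁ + 2 * π), (Real.exp (-p.1) * Real.sin p.2.1) *
      (ζ p.1 p.2.1 p.2.2 * cL f p.1 p.2.1 p.2.2 + cgradDot ζ f p.1 p.2.1 p.2.2)|
      ≤ 2 * κ * (2 * π) * (t₂ - t₁) := by
  have hpi := Real.pi_pos
  have hft : Cn 1 (cdt f) := Cn.dt (n := 1) hf
  have hfθ : Cn 1 (cdθ f) := Cn.dθ (n := 1) hf
  have hfφ : Cn 1 (cdφ f) := Cn.dφ (n := 1) hf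
  set Gt : ℝ → ℝ → ℝ → ℝ :=
    fun t θ φ => ζ t θ φ * (Real.exp (-t) * Real.sin θ) * cdt f t θ φ with hGt
  set Gθ : ℝ → ℝ → ℝ → ℝ :=
    fun t θ φ => ζ t θ φ * (Real.exp (-t) * Real.sin θ) * cdθ f t θ φ with hGθ
  set Gφ : ℝ → ℝ → ℝ → ℝ :=
    fun t θ φ => ζ t θ φ * (Real.exp (-t) * (Real.sin θ)⁻¹) * cdφ f t θ φ with hGφ
  have cGt : Cn 1 Gt := (hζ.mul (Cn_wt 1)).mul hft
  have cGθ : Cn 1 Gθ := (hζ.mul (Cn_wt 1)).mul hfθ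
  have cGφ : Cn 1 Gφ := (hζ.mul (Cn_wti 1)).mul hfφ
  have i1 := box_ftc_t (φ₁ := φ₁) (φ₂ := φ₁ + 2 * π) h1 h2 h3 h4 h12 cGt
    (by intro θ φ; simp [hGt, hz1, hz2])
  have i2 := box_ftc_ph (t₁ := t₁) (t₂ := t₂) (α := α) (β := β) (φ₁ := φ₁) (φ₂ := φ₁ + 2 * π)
    h1 h2 h3 h4 (by linarith) cGφ
    (by intro t θ; simp only [hGφ, perζ, cdφ_per perf])
  have i3 := box_ftc_th (φ₁ := φ₁) (φ₂ := φ₁ + 2 * π) h1 h2 h3 h4 h12 hab (by linarith) cGθ hα hβ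
  have hsub := cbox_sub_Om (φ₁ := φ₁) (φ₂ := φ₁ + 2 * π) h1 h2 h3 h4
  have I1 : IntegrableOn (unc (cdt Gt)) (box t₁ t₂ α β φ₁ (φ₁ + 2 * π)) :=
    integrableOn_box ((Cn.dt (n := 0) cGt).cont.mono hsub)
  have I2 : IntegrableOn (unc (cdφ Gφ)) (box t₁ t₂ α β φ₁ (φ₁ + 2 * π)) :=
    integrableOn_box ((Cn.dφ (n := 0) cGφ).cont.mono hsub)
  have I3 : IntegrableOn (unc (cdθ Gθ)) (box t₁ t₂ α β φ₁ (φ₁ + 2 * π)) :=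
    integrableOn_box ((Cn.dθ (n := 0) cGθ).cont.mono hsub)
  have hsum : ∫ p in box t₁ t₂ α β φ₁ (φ₁ + 2 * π), (Real.exp (-p.1) * Real.sin p.2.1) *
      (ζ p.1 p.2.1 p.2.2 * cL f p.1 p.2.1 p.2.2 + cgradDot ζ f p.1 p.2.1 p.2.2)
      = ∫ p in box t₁ t₂ α β φ₁ (φ₁ + 2 * π),
        (unc (cdt Gt) p + unc (cdφ Gφ) p + unc (cdθ Gθ) p) := by
    apply setIntegral_congr_fun measurableSet_box
    rintro ⟨t, θ, φ⟩ hp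
    have hO : (t, θ, φ) ∈ Om := hsub (box_sub_cbox hp)
    have hs := (sin_pos_Om hO).ne'
    have e1 : cdt Gt t θ φ = (cdt ζ t θ φ * (Real.exp (-t) * Real.sin θ)
        + ζ t θ φ * (-Real.exp (-t) * Real.sin θ)) * cdt f t θ φ
        + ζ t θ φ * (Real.exp (-t) * Real.sin θ) * cdt (cdt f) t θ φ := by
      have d1 : HasDerivAt (fun s : ℝ => Real.exp (-s) * Real.sin θ)
          (-Real.exp (-t) * Real.sin θ) t := by
        have := ((hasDerivAt_neg t).exp).mul_const (Real.sin θ)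
        simpa using this
      exact (((Cn.hdt (n := 0) hζ hO).mul d1).mul (Cn.hdt (n := 0) hft hO)).deriv
    have e2 : cdθ Gθ t θ φ = (cdθ ζ t θ φ * (Real.exp (-t) * Real.sin θ)
        + ζ t θ φ * (Real.exp (-t) * Real.cos θ)) * cdθ f t θ φ
        + ζ t θ φ * (Real.exp (-t) * Real.sin θ) * cdθ (cdθ f) t θ φ := by
      have d1 : HasDerivAt (fun s : ℝ => Real.exp (-t) * Real.sin s)
          (Real.exp (-t) * Real.cos θ) θ := (Real.hasDerivAt_sin θ).const_mul _
      exact (((Cn.hdθ (n := 0) hζ hO).mul d1).mul (Cn.hdθ (n := 0) hfθ hO)).deriv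
    have e3 : cdφ Gφ t θ φ = (cdφ ζ t θ φ * (Real.exp (-t) * (Real.sin θ)⁻¹)) * cdφ f t θ φ
        + ζ t θ φ * (Real.exp (-t) * (Real.sin θ)⁻¹) * cdφ (cdφ f) t θ φ := by
      exact (((Cn.hdφ (n := 0) hζ hO).mul_const _).mul (Cn.hdφ (n := 0) hfφ hO)).deriv
    simp only [unc, e1, e2, e3, cL, cgradDot, lapS2, gradDotS2]
    have u1 : pdθ (pdθ (f t)) θ φ = cdθ (cdθ f) t θ φ := rfl
    have u2 : pdφ (pdφ (f t)) θ φ = cdφ (cdφ f) t θ φ := rfl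
    have u3 : pdθ (f t) θ φ = cdθ f t θ φ := rfl
    have u4 : pdφ (f t) θ φ = cdφ f t θ φ := rfl
    have u5 : pdθ (ζ t) θ φ = cdθ ζ t θ φ := rfl
    have u6 : pdφ (ζ t) θ φ = cdφ ζ t θ φ := rfl
    rw [u1, u2, u3, u4, u5, u6]
    field_simp
    ring
  have I12 : IntegrableOn (fun p => unc (cdt Gt) p + unc (cdφ Gφ) p)
      (box t₁ t₂ α β φ₁ (φ₁ + 2 * π)) := I1.add I2
  rw [hsum, integral_add I12 I3, integral_add I1 I2]
  have i1' : ∫ p in box t₁ t₂ α β φ₁ (φ₁ + 2 * π), unc (cdt Gt) p = 0 := i1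
  have i2' : ∫ p in box t₁ t₂ α β φ₁ (φ₁ + 2 * π), unc (cdφ Gφ) p = 0 := i2
  rw [i1', i2', zero_add, zero_add]
  refine i3.trans (le_of_eq ?_)
  ring

end

noncomputable section

/-! ### The comparison function -/

/-- hyperbolic-distance type function -/
def EE (c₁ c₂ : ℝ) (P l v : ℝ → ℝ → ℝ → ℝ) : ℝ → ℝ → ℝ → ℝ := fun t θ φ =>
  Real.cosh (2 * (P t θ φ - c₁))
    + 2 * Real.exp (2 * P t θ φ + 2 * c₁ - 4 * l t θ φ) * (v t θ φ - c₂) ^ 2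

lemma EE_1d_first (c₁ c₂ : ℝ) {p l q : ℝ → ℝ} {p1 l1 q1 x : ℝ}
    (hp : HasDerivAt p p1 x) (hl : HasDerivAt l l1 x) (hq : HasDerivAt q q1 x) :
    HasDerivAt (fun y => Real.cosh (2 * (p y - c₁))
      + 2 * Real.exp (2 * p y + 2 * c₁ - 4 * l y) * (q y - c₂) ^ 2)
      (2 * Real.sinh (2 * (p x - c₁)) * p1 + 2 * Real.exp (2 * p x + 2 * c₁ - 4 * l x) *
        ((2 * p1 - 4 * l1) * (q x - c₂) ^ 2 + 2 * (q x - c₂) * q1)) x := by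
  have h1 := ((hp.sub_const c₁).const_mul 2).cosh
  have h2 := ((((hp.const_mul 2).add_const (2 * c₁)).sub (hl.const_mul 4)).exp).const_mul 2
  have h3 := (hq.sub_const c₂).pow 2
  have := h1.add (h2.mul h3)
  refine this.congr_deriv ?_
  simp
  ring

lemma EE_1d_second (c₁ c₂ : ℝ) {p l q p1 l1 q1 : ℝ → ℝ} {p2 l2 q2 x : ℝ}
    (hp : HasDerivAt p (p1 x) x) (hl : HasDerivAt l (l1 x) x) (hq : HasDerivAt q (q1 x) x)
    (hp1 : HasDerivAt p1 p2 x) (hl1 : HasDerivAt l1 l2 x) (hq1 : HasDerivAt q1 q2 x) :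
    HasDerivAt (fun y => 2 * Real.sinh (2 * (p y - c₁)) * p1 y
        + 2 * Real.exp (2 * p y + 2 * c₁ - 4 * l y) *
        ((2 * p1 y - 4 * l1 y) * (q y - c₂) ^ 2 + 2 * (q y - c₂) * q1 y))
      (4 * Real.cosh (2 * (p x - c₁)) * p1 x ^ 2 + 2 * Real.sinh (2 * (p x - c₁)) * p2
        + 2 * Real.exp (2 * p x + 2 * c₁ - 4 * l x) *
        ((2 * p1 x - 4 * l1 x) ^ 2 * (q x - c₂) ^ 2 + (2 * p2 - 4 * l2) * (q x - c₂) ^ 2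
          + 4 * (2 * p1 x - 4 * l1 x) * (q x - c₂) * q1 x + 2 * q1 x ^ 2
          + 2 * (q x - c₂) * q2)) x := by
  have h1 := ((((hp.sub_const c₁).const_mul 2).sinh).const_mul 2).mul hp1
  have h2 := ((((hp.const_mul 2).add_const (2 * c₁)).sub (hl.const_mul 4)).exp).const_mul 2
  have h3 := (hq.sub_const c₂).pow 2
  have h4 := (((hp1.const_mul 2).sub (hl1.const_mul 4)).mul h3).add
    (((hq.sub_const c₂).const_mul 2).mul hq1)
  have := h1.add (h2.mul h4)
  refine this.congr_deriv ?_
  simp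
  ring

lemma EE_1d (c₁ c₂ : ℝ) {p l q p1 l1 q1 : ℝ → ℝ} {p2 l2 q2 x : ℝ}
    (hp : ∀ᶠ y in nhds x, HasDerivAt p (p1 y) y) (hl : ∀ᶠ y in nhds x, HasDerivAt l (l1 y) y)
    (hq : ∀ᶠ y in nhds x, HasDerivAt q (q1 y) y)
    (hp1 : HasDerivAt p1 p2 x) (hl1 : HasDerivAt l1 l2 x) (hq1 : HasDerivAt q1 q2 x) :
    deriv (deriv (fun y => Real.cosh (2 * (p y - c₁))
      + 2 * Real.exp (2 * p y + 2 * c₁ - 4 * l y) * (q y - c₂) ^ 2)) x =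
      (4 * Real.cosh (2 * (p x - c₁)) * p1 x ^ 2 + 2 * Real.sinh (2 * (p x - c₁)) * p2
        + 2 * Real.exp (2 * p x + 2 * c₁ - 4 * l x) *
        ((2 * p1 x - 4 * l1 x) ^ 2 * (q x - c₂) ^ 2 + (2 * p2 - 4 * l2) * (q x - c₂) ^ 2
          + 4 * (2 * p1 x - 4 * l1 x) * (q x - c₂) * q1 x + 2 * q1 x ^ 2
          + 2 * (q x - c₂) * q2)) := by
  have he : deriv (fun y => Real.cosh (2 * (p y - c₁))
      + 2 * Real.exp (2 * p y + 2 * c₁ - 4 * l y) * (q y - c₂) ^ 2) =ᶠ[nhds x]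
      (fun y => 2 * Real.sinh (2 * (p y - c₁)) * p1 y
        + 2 * Real.exp (2 * p y + 2 * c₁ - 4 * l y) *
        ((2 * p1 y - 4 * l1 y) * (q y - c₂) ^ 2 + 2 * (q y - c₂) * q1 y)) := by
    filter_upwards [hp, hl, hq] with y h1 h2 h3
    exact (EE_1d_first c₁ c₂ h1 h2 h3).deriv
  rw [he.deriv_eq]
  exact (EE_1d_second c₁ c₂ hp.self_of_nhds hl.self_of_nhds hq.self_of_nhds hp1 hl1 hq1).deriv

lemma ev_t {t θ φ : ℝ} (hO : (t, θ, φ) ∈ Om) : ∀ᶠ s in nhds t, (s, θ, φ) ∈ Om := by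
  have hc : Continuous (fun s : ℝ => (s, θ, φ)) := by fun_prop
  exact hc.continuousAt.eventually (isOpen_Om.mem_nhds hO)

lemma ev_th {t θ φ : ℝ} (hO : (t, θ, φ) ∈ Om) : ∀ᶠ s in nhds θ, (t, s, φ) ∈ Om := by
  have hc : Continuous (fun s : ℝ => (t, s, φ)) := by fun_prop
  exact hc.continuousAt.eventually (isOpen_Om.mem_nhds hO)

lemma ev_ph {t θ φ : ℝ} (hO : (t, θ, φ) ∈ Om) : ∀ᶠ s in nhds φ, (t, θ, s) ∈ Om := by
  have hc : Continuous (fun s : ℝ => (t, θ, s)) := by fun_prop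
  exact hc.continuousAt.eventually (isOpen_Om.mem_nhds hO)

/-- second-order expression appearing in `EE_1d` -/
def E2 (C S X P1 P2 l1 l2 q q1 q2 : ℝ) : ℝ :=
  4 * C * P1 ^ 2 + 2 * S * P2 + 2 * X * ((2 * P1 - 4 * l1) ^ 2 * q ^ 2 + (2 * P2 - 4 * l2) * q ^ 2
          + 4 * (2 * P1 - 4 * l1) * q * q1 + 2 * q1 ^ 2 + 2 * q * q2)

/-- first-order expression appearing in `EE_1d_first` -/
def E1 (S X P1 l1 q q1 : ℝ) : ℝ :=
  2 * S * P1 + 2 * X * ((2 * P1 - 4 * l1) * q ^ 2 + 2 * q * q1)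

section
variable {P l v : ℝ → ℝ → ℝ → ℝ} (c₁ c₂ : ℝ) {t θ φ : ℝ}

lemma EE_t (hP : Cn 2 P) (hl : Cn 2 l) (hv : Cn 2 v) (hO : (t, θ, φ) ∈ Om) :
    cdt (EE c₁ c₂ P l v) t θ φ = E1 (Real.sinh (2 * (P t θ φ - c₁)))
      (Real.exp (2 * P t θ φ + 2 * c₁ - 4 * l t θ φ)) (cdt P t θ φ) (cdt l t θ φ)
      (v t θ φ - c₂) (cdt v t θ φ) :=
  (EE_1d_first c₁ c₂ (Cn.hdt (n := 1) hP hO) (Cn.hdt (n := 1) hl hO)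
    (Cn.hdt (n := 1) hv hO)).deriv

lemma EE_th (hP : Cn 2 P) (hl : Cn 2 l) (hv : Cn 2 v) (hO : (t, θ, φ) ∈ Om) :
    cdθ (EE c₁ c₂ P l v) t θ φ = E1 (Real.sinh (2 * (P t θ φ - c₁)))
      (Real.exp (2 * P t θ φ + 2 * c₁ - 4 * l t θ φ)) (cdθ P t θ φ) (cdθ l t θ φ)
      (v t θ φ - c₂) (cdθ v t θ φ) :=
  (EE_1d_first c₁ c₂ (Cn.hdθ (n := 1) hP hO) (Cn.hdθ (n := 1) hl hO)
    (Cn.hdθ (n := 1) hv hO)).deriv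

lemma EE_ph (hP : Cn 2 P) (hl : Cn 2 l) (hv : Cn 2 v) (hO : (t, θ, φ) ∈ Om) :
    cdφ (EE c₁ c₂ P l v) t θ φ = E1 (Real.sinh (2 * (P t θ φ - c₁)))
      (Real.exp (2 * P t θ φ + 2 * c₁ - 4 * l t θ φ)) (cdφ P t θ φ) (cdφ l t θ φ)
      (v t θ φ - c₂) (cdφ v t θ φ) :=
  (EE_1d_first c₁ c₂ (Cn.hdφ (n := 1) hP hO) (Cn.hdφ (n := 1) hl hO)
    (Cn.hdφ (n := 1) hv hO)).deriv

lemma EE_tt (hP : Cn 2 P) (hl : Cn 2 l) (hv : Cn 2 v) (hO : (t, θ, φ) ∈ Om) :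
    cdt (cdt (EE c₁ c₂ P l v)) t θ φ = E2 (Real.cosh (2 * (P t θ φ - c₁)))
      (Real.sinh (2 * (P t θ φ - c₁)))
      (Real.exp (2 * P t θ φ + 2 * c₁ - 4 * l t θ φ)) (cdt P t θ φ) (cdt (cdt P) t θ φ)
      (cdt l t θ φ) (cdt (cdt l) t θ φ)
      (v t θ φ - c₂) (cdt v t θ φ) (cdt (cdt v) t θ φ) :=
  EE_1d c₁ c₂ (p := fun s => P s θ φ) (l := fun s => l s θ φ) (q := fun s => v s θ φ)
    (p1 := fun s => cdt P s θ φ) (l1 := fun s => cdt l s θ φ) (q1 := fun s => cdt v s θ φ)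
    ((ev_t hO).mono fun _ h => Cn.hdt (n := 1) hP h)
    ((ev_t hO).mono fun _ h => Cn.hdt (n := 1) hl h)
    ((ev_t hO).mono fun _ h => Cn.hdt (n := 1) hv h)
    (Cn.hdt (n := 0) (Cn.dt (n := 1) hP) hO) (Cn.hdt (n := 0) (Cn.dt (n := 1) hl) hO)
    (Cn.hdt (n := 0) (Cn.dt (n := 1) hv) hO)

lemma EE_thth (hP : Cn 2 P) (hl : Cn 2 l) (hv : Cn 2 v) (hO : (t, θ, φ) ∈ Om) :
    cdθ (cdθ (EE c₁ c₂ P l v)) t θ φ = E2 (Real.cosh (2 * (P t θ φ - c₁)))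
      (Real.sinh (2 * (P t θ φ - c₁)))
      (Real.exp (2 * P t θ φ + 2 * c₁ - 4 * l t θ φ)) (cdθ P t θ φ) (cdθ (cdθ P) t θ φ)
      (cdθ l t θ φ) (cdθ (cdθ l) t θ φ)
      (v t θ φ - c₂) (cdθ v t θ φ) (cdθ (cdθ v) t θ φ) :=
  EE_1d c₁ c₂ (p := fun s => P t s φ) (l := fun s => l t s φ) (q := fun s => v t s φ)
    (p1 := fun s => cdθ P t s φ) (l1 := fun s => cdθ l t s φ) (q1 := fun s => cdθ v t s φ)
    ((ev_th hO).mono fun _ h => Cn.hdθ (n := 1) hP h)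
    ((ev_th hO).mono fun _ h => Cn.hdθ (n := 1) hl h)
    ((ev_th hO).mono fun _ h => Cn.hdθ (n := 1) hv h)
    (Cn.hdθ (n := 0) (Cn.dθ (n := 1) hP) hO) (Cn.hdθ (n := 0) (Cn.dθ (n := 1) hl) hO)
    (Cn.hdθ (n := 0) (Cn.dθ (n := 1) hv) hO)

lemma EE_phph (hP : Cn 2 P) (hl : Cn 2 l) (hv : Cn 2 v) (hO : (t, θ, φ) ∈ Om) :
    cdφ (cdφ (EE c₁ c₂ P l v)) t θ φ = E2 (Real.cosh (2 * (P t θ φ - c₁)))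
      (Real.sinh (2 * (P t θ φ - c₁)))
      (Real.exp (2 * P t θ φ + 2 * c₁ - 4 * l t θ φ)) (cdφ P t θ φ) (cdφ (cdφ P) t θ φ)
      (cdφ l t θ φ) (cdφ (cdφ l) t θ φ)
      (v t θ φ - c₂) (cdφ v t θ φ) (cdφ (cdφ v) t θ φ) :=
  EE_1d c₁ c₂ (p := fun s => P t θ s) (l := fun s => l t θ s) (q := fun s => v t θ s)
    (p1 := fun s => cdφ P t θ s) (l1 := fun s => cdφ l t θ s) (q1 := fun s => cdφ v t θ s)
    ((ev_ph hO).mono fun _ h => Cn.hdφ (n := 1) hP h)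
    ((ev_ph hO).mono fun _ h => Cn.hdφ (n := 1) hl h)
    ((ev_ph hO).mono fun _ h => Cn.hdφ (n := 1) hv h)
    (Cn.hdφ (n := 0) (Cn.dφ (n := 1) hP) hO) (Cn.hdφ (n := 0) (Cn.dφ (n := 1) hl) hO)
    (Cn.hdφ (n := 0) (Cn.dφ (n := 1) hv) hO)

end

lemma comp_ineq {g : ℝ} (hg : 0 < g) (A Y Z W η N : ℝ) :
    g * η ^ 2 * (A ^ 2 + Y ^ 2)
      - N ^ 2 * ((g - g⁻¹) ^ 2 * g⁻¹ + (2 * g⁻¹ + 4 * g⁻¹ ^ 3) * Z ^ 2) ≤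
    η ^ 2 * (2 * g * (A ^ 2 + Y ^ 2) + 2 * g⁻¹ * ((A - 2 * Z * Y) ^ 2 + (Y + 2 * W) ^ 2))
      + 2 * η * N * ((g - g⁻¹) * A + 4 * g⁻¹ * (W * Z + Z * Y)) := by
  have hk : g * g⁻¹ = 1 := mul_inv_cancel₀ hg.ne'
  set k := g⁻¹ with hkd
  have hk0 : 0 < k := inv_pos.2 hg
  have s1 : 0 ≤ k * (g * η * A + N * (g - k)) ^ 2 := by positivity
  have s2 : 0 ≤ k * (g * η * Y + 2 * k * N * Z) ^ 2 := by positivity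
  have s3 : 0 ≤ 2 * k * (η * (Y + 2 * W) + N * Z) ^ 2 := by positivity
  have s4 : 0 ≤ 2 * k * η ^ 2 * (A - 2 * Z * Y) ^ 2 := by positivity
  have e1 : k * (g * η * A + N * (g - k)) ^ 2
      = g * η ^ 2 * A ^ 2 + 2 * η * A * N * (g - k) + N ^ 2 * (g - k) ^ 2 * k := by
    linear_combination (η ^ 2 * A ^ 2 * g + 2 * η * A * N * (g - k)) * hk
  have e2 : k * (g * η * Y + 2 * k * N * Z) ^ 2
      = g * η ^ 2 * Y ^ 2 + 4 * k * η * Y * N * Z + 4 * k ^ 3 * N ^ 2 * Z ^ 2 := by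
    linear_combination (η ^ 2 * Y ^ 2 * g + 4 * k * η * Y * N * Z) * hk
  nlinarith [s1, s2, s3, s4, e1, e2]

/-- pure algebra behind the pointwise inequality -/
lemma pw_alg {g X i : ℝ} (hg : 0 < g) (b q η
    At Ath Aph lt lth lph Vt Vth Vph Nt Nth Nph Att Athth Aphph ltt lthth lphph Vtt Vthth Vphph : ℝ)
    (hΦ : Att - At + (Athth + b * Ath + i ^ 2 * Aphph)
      = 2 * X ^ 2 * (Vt * Vt + (Vth * Vth + i ^ 2 * Vph * Vph)))
    (hl : ltt - lt + (lthth + b * lth + i ^ 2 * lphph) = 0)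
    (hv : Vtt - Vt + (Vthth + b * Vth + i ^ 2 * Vphph)
      = -4 * ((At - lt) * Vt + ((Ath - lth) * Vth + i ^ 2 * (Aph - lph) * Vph))) :
    g * η ^ 2 * ((At * At + (Ath * Ath + i ^ 2 * Aph * Aph))
        + X ^ 2 * (Vt * Vt + (Vth * Vth + i ^ 2 * Vph * Vph)))
      - (Nt * Nt + (Nth * Nth + i ^ 2 * Nph * Nph)) *
        ((g - g⁻¹) ^ 2 * g⁻¹ + (2 * g⁻¹ + 4 * g⁻¹ ^ 3) * (X * q) ^ 2) ≤
    η ^ 2 * (E2 ((g + g⁻¹) / 2) ((g - g⁻¹) / 2) (X ^ 2 * g⁻¹) At Att lt ltt q Vt Vtt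
        - E1 ((g - g⁻¹) / 2) (X ^ 2 * g⁻¹) At lt q Vt
        + (E2 ((g + g⁻¹) / 2) ((g - g⁻¹) / 2) (X ^ 2 * g⁻¹) Ath Athth lth lthth q Vth Vthth
          + b * E1 ((g - g⁻¹) / 2) (X ^ 2 * g⁻¹) Ath lth q Vth
          + i ^ 2 * E2 ((g + g⁻¹) / 2) ((g - g⁻¹) / 2) (X ^ 2 * g⁻¹)
            Aph Aphph lph lphph q Vph Vphph))
      + (2 * η * Nt * E1 ((g - g⁻¹) / 2) (X ^ 2 * g⁻¹) At lt q Vt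
        + (2 * η * Nth * E1 ((g - g⁻¹) / 2) (X ^ 2 * g⁻¹) Ath lth q Vth
          + i ^ 2 * (2 * η * Nph) * E1 ((g - g⁻¹) / 2) (X ^ 2 * g⁻¹) Aph lph q Vph)) := by
  have k1 := comp_ineq hg At (X * Vt) (X * q) (X * q * (At - 2 * lt)) η Nt
  have k2 := comp_ineq hg Ath (X * Vth) (X * q) (X * q * (Ath - 2 * lth)) η Nth
  have k3 := comp_ineq hg (i * Aph) (X * (i * Vph)) (X * q)
    (X * q * (i * Aph - 2 * (i * lph))) η (i * Nph)
  have hk : g * g⁻¹ = 1 := mul_inv_cancel₀ hg.ne'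
  set k := g⁻¹ with hkd
  have key := add_le_add k1 (add_le_add k2 k3)
  refine le_trans (le_of_eq ?_) (key.trans (le_of_eq ?_))
  · ring
  · simp only [E1, E2]
    linear_combination (-(η ^ 2 * ((g - k) + 4 * X ^ 2 * k * q ^ 2))) * hΦ
      + (8 * X ^ 2 * k * q ^ 2 * η ^ 2) * hl
      - (4 * X ^ 2 * k * q * η ^ 2) * hv
end

noncomputable section

section
variable {P l v η : ℝ → ℝ → ℝ → ℝ} {t θ φ : ℝ}

lemma cgradNormSq_nonneg (F : ℝ → ℝ → ℝ → ℝ) (t θ φ : ℝ) : 0 ≤ cgradNormSq F t θ φ := by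
  have e : cgradNormSq F t θ φ = cdt F t θ φ ^ 2 + cdθ F t θ φ ^ 2
      + ((Real.sin θ)⁻¹ * cdφ F t θ φ) ^ 2 := by
    simp only [cgradNormSq, cgradDot, gradDotS2, cdθ, cdφ]
    rw [← inv_pow]
    ring
  rw [e]
  positivity

lemma cdt_sq_le (F : ℝ → ℝ → ℝ → ℝ) (t θ φ : ℝ) : cdt F t θ φ ^ 2 ≤ cgradNormSq F t θ φ := by
  have e : cgradNormSq F t θ φ = cdt F t θ φ ^ 2 + cdθ F t θ φ ^ 2
      + ((Real.sin θ)⁻¹ * cdφ F t θ φ) ^ 2 := by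
    simp only [cgradNormSq, cgradDot, gradDotS2, cdθ, cdφ]
    rw [← inv_pow]
    ring
  rw [e]
  nlinarith [sq_nonneg (cdθ F t θ φ), sq_nonneg ((Real.sin θ)⁻¹ * cdφ F t θ φ)]

lemma cdth_sq_le (F : ℝ → ℝ → ℝ → ℝ) (t θ φ : ℝ) : cdθ F t θ φ ^ 2 ≤ cgradNormSq F t θ φ := by
  have e : cgradNormSq F t θ φ = cdt F t θ φ ^ 2 + cdθ F t θ φ ^ 2
      + ((Real.sin θ)⁻¹ * cdφ F t θ φ) ^ 2 := by
    simp only [cgradNormSq, cgradDot, gradDotS2, cdθ, cdφ]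
    rw [← inv_pow]
    ring
  rw [e]
  nlinarith [sq_nonneg (cdt F t θ φ), sq_nonneg ((Real.sin θ)⁻¹ * cdφ F t θ φ)]

lemma pw (c₁ c₂ : ℝ) (hP : Cn 2 P) (hl : Cn 2 l) (hv : Cn 2 v) (hη : Cn 1 η)
    (hO : (t, θ, φ) ∈ Om)
    (eΦ : cL P t θ φ = 2 * Real.exp (4 * (P t θ φ - l t θ φ)) * cgradNormSq v t θ φ)
    (el : cL l t θ φ = 0)
    (ev : cL v t θ φ = -4 * cgradDot (fun t θ φ => P t θ φ - l t θ φ) v t θ φ)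
    {g : ℝ} (hg : g = Real.exp (2 * (P t θ φ - c₁))) :
    g * η t θ φ ^ 2 * (cgradNormSq P t θ φ
        + Real.exp (4 * (P t θ φ - l t θ φ)) * cgradNormSq v t θ φ)
      - cgradNormSq η t θ φ *
        ((g - g⁻¹) ^ 2 * g⁻¹ + (2 * g⁻¹ + 4 * g⁻¹ ^ 3) *
          (Real.exp (2 * (P t θ φ - l t θ φ)) * (v t θ φ - c₂)) ^ 2) ≤
    η t θ φ ^ 2 * cL (EE c₁ c₂ P l v) t θ φ
      + cgradDot (fun t θ φ => η t θ φ ^ 2) (EE c₁ c₂ P l v) t θ φ := by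
  have hs := (sin_pos_Om hO).ne'
  have hg0 : 0 < g := hg ▸ Real.exp_pos _
  have hgi : g⁻¹ = Real.exp (-(2 * (P t θ φ - c₁))) := by rw [hg, Real.exp_neg]
  have hX2 : Real.exp (4 * (P t θ φ - l t θ φ)) = Real.exp (2 * (P t θ φ - l t θ φ)) ^ 2 := by
    rw [← Real.exp_nat_mul]; congr 1; push_cast; ring
  have hψ : Real.exp (2 * P t θ φ + 2 * c₁ - 4 * l t θ φ)
      = Real.exp (2 * (P t θ φ - l t θ φ)) ^ 2 * g⁻¹ := by
    rw [← hX2, hgi, ← Real.exp_add]; congr 1; ring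
  have hch : Real.cosh (2 * (P t θ φ - c₁)) = (g + g⁻¹) / 2 := by
    rw [Real.cosh_eq, hgi, hg]
  have hsh : Real.sinh (2 * (P t θ φ - c₁)) = (g - g⁻¹) / 2 := by
    rw [Real.sinh_eq, hgi, hg]
  set X := Real.exp (2 * (P t θ φ - l t θ φ)) with hXd
  have n1 : cdt (fun t θ φ => η t θ φ ^ 2) t θ φ = 2 * η t θ φ * cdt η t θ φ := by
    have := ((Cn.hdt (n := 0) hη hO).pow 2).deriv
    refine Eq.trans this ?_
    simp
  have n2 : cdθ (fun t θ φ => η t θ φ ^ 2) t θ φ = 2 * η t θ φ * cdθ η t θ φ := by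
    have := ((Cn.hdθ (n := 0) hη hO).pow 2).deriv
    refine Eq.trans this ?_
    simp
  have n3 : cdφ (fun t θ φ => η t θ φ ^ 2) t θ φ = 2 * η t θ φ * cdφ η t θ φ := by
    have := ((Cn.hdφ (n := 0) hη hO).pow 2).deriv
    refine Eq.trans this ?_
    simp
  have d1 : cdt (fun t θ φ => P t θ φ - l t θ φ) t θ φ = cdt P t θ φ - cdt l t θ φ :=
    ((Cn.hdt (n := 1) hP hO).sub (Cn.hdt (n := 1) hl hO)).deriv
  have d2 : cdθ (fun t θ φ => P t θ φ - l t θ φ) t θ φ = cdθ P t θ φ - cdθ l t θ φ :=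
    ((Cn.hdθ (n := 1) hP hO).sub (Cn.hdθ (n := 1) hl hO)).deriv
  have d3 : cdφ (fun t θ φ => P t θ φ - l t θ φ) t θ φ = cdφ P t θ φ - cdφ l t θ φ :=
    ((Cn.hdφ (n := 1) hP hO).sub (Cn.hdφ (n := 1) hl hO)).deriv
  have hcL : ∀ F : ℝ → ℝ → ℝ → ℝ, cL F t θ φ = cdt (cdt F) t θ φ - cdt F t θ φ
      + (cdθ (cdθ F) t θ φ + (Real.cos θ / Real.sin θ) * cdθ F t θ φ
        + ((Real.sin θ)⁻¹) ^ 2 * cdφ (cdφ F) t θ φ) := by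
    intro F; rw [inv_pow]; rfl
  have hcg : ∀ F G : ℝ → ℝ → ℝ → ℝ, cgradDot F G t θ φ = cdt F t θ φ * cdt G t θ φ
      + (cdθ F t θ φ * cdθ G t θ φ + ((Real.sin θ)⁻¹) ^ 2 * cdφ F t θ φ * cdφ G t θ φ) := by
    intro F G; rw [inv_pow]; rfl
  simp only [cgradNormSq] at eΦ ⊢
  rw [hX2] at eΦ ⊢
  rw [hcL, hcg] at eΦ ev
  rw [hcL] at el
  rw [d1, d2, d3] at ev
  rw [hcL, hcg, hcg, hcg, hcg, n1, n2, n3, EE_t c₁ c₂ hP hl hv hO, EE_th c₁ c₂ hP hl hv hO,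
    EE_ph c₁ c₂ hP hl hv hO, EE_tt c₁ c₂ hP hl hv hO, EE_thth c₁ c₂ hP hl hv hO,
    EE_phph c₁ c₂ hP hl hv hO, hψ, hch, hsh]
  exact pw_alg hg0 _ _ _ _ _ _ _ _ _ _ _ _ _ _ _ _ _ _ _ _ _ _ _ _ eΦ el ev

lemma g_bound {x Λ : ℝ} (hx : |x| ≤ 2 * Λ) {g : ℝ} (hg : g = Real.exp (2 * x)) :
    Real.exp (-4 * Λ) ≤ g ∧ g⁻¹ ≤ Real.exp (4 * Λ) ∧
      (g - g⁻¹) ^ 2 ≤ 16 * Real.exp (8 * Λ) * x ^ 2 := by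
  have hx' := abs_le.1 hx
  have hgi : g⁻¹ = Real.exp (-(2 * x)) := by rw [hg, Real.exp_neg]
  have b1 : g ≤ Real.exp (4 * Λ) := by rw [hg]; apply Real.exp_le_exp.2; linarith
  have b2 : g⁻¹ ≤ Real.exp (4 * Λ) := by rw [hgi]; apply Real.exp_le_exp.2; linarith
  have hg0 : 0 < g := hg ▸ Real.exp_pos _
  have hk0 : 0 < g⁻¹ := inv_pos.2 hg0
  have hk : g * g⁻¹ = 1 := mul_inv_cancel₀ hg0.ne'
  refine ⟨by rw [hg]; apply Real.exp_le_exp.2; linarith, b2, ?_⟩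
  have e8 : Real.exp (8 * Λ) = Real.exp (4 * Λ) ^ 2 := by
    rw [← Real.exp_nat_mul]; congr 1; push_cast; ring
  have q1 : g⁻¹ ^ 2 ≥ 1 - 4 * x := by
    have := Real.add_one_le_exp (-(4 * x))
    have e : Real.exp (-(4 * x)) = g⁻¹ ^ 2 := by
      rw [hgi, ← Real.exp_nat_mul]; congr 1; push_cast; ring
    linarith
  have q2 : g ^ 2 ≥ 1 + 4 * x := by
    have := Real.add_one_le_exp (4 * x)
    have e : Real.exp (4 * x) = g ^ 2 := by
      rw [hg, ← Real.exp_nat_mul]; congr 1; push_cast; ring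
    linarith
  have up : g - g⁻¹ ≤ 4 * x * g := by nlinarith
  have lo : 4 * x * g⁻¹ ≤ g - g⁻¹ := by nlinarith
  rw [e8]
  set M := Real.exp (4 * Λ)
  have hab : |g - g⁻¹| ≤ 4 * |x| * M := by
    rw [abs_le]
    constructor
    · have : -(|x|) * M ≤ x * g⁻¹ := by
        rcases le_total 0 x with h | h
        · have := abs_nonneg x
          nlinarith [mul_nonneg h hk0.le, mul_nonneg this (hk0.le.trans b2)]
        · rw [abs_of_nonpos h]; nlinarith
      linarith
    · have : x * g ≤ |x| * M := by
        rcases le_total 0 x with h | h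
        · rw [abs_of_nonneg h]; nlinarith
        · have := abs_nonneg x
          nlinarith [mul_nonneg this (hk0.le.trans b2)]
      linarith
  calc (g - g⁻¹) ^ 2 = |g - g⁻¹| ^ 2 := (sq_abs _).symm
    _ ≤ (4 * |x| * M) ^ 2 := by gcongr
    _ = 16 * M ^ 2 * x ^ 2 := by rw [mul_pow, mul_pow, sq_abs]; ring

lemma pw2 (c₁ c₂ : ℝ) {ω : ℝ → ℝ → ℝ → ℝ} {Λ : ℝ} (hΛ : 0 ≤ Λ) (hω : 0 < ω t θ φ)
    (hP : Cn 2 P) (hl : Cn 2 (fun t θ φ => Real.log (ω t θ φ)))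
    (hv : Cn 2 v) (hη : Cn 1 η)
    (hO : (t, θ, φ) ∈ Om) (hb : |P t θ φ| ≤ Λ) (hc : |c₁| ≤ Λ)
    (eΦ : cL P t θ φ = 2 * Real.exp (4 * (P t θ φ - Real.log (ω t θ φ))) * cgradNormSq v t θ φ)
    (el : cL (fun t θ φ => Real.log (ω t θ φ)) t θ φ = 0)
    (ev : cL v t θ φ = -4 * cgradDot (fun t θ φ => P t θ φ - Real.log (ω t θ φ)) v t θ φ) :
    Real.exp (-4 * Λ) * η t θ φ ^ 2 * (cgradNormSq P t θ φ
        + Real.exp (4 * (P t θ φ - Real.log (ω t θ φ))) * cgradNormSq v t θ φ)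
      - cgradNormSq η t θ φ * (16 * Real.exp (16 * Λ)) *
        ((P t θ φ - c₁) ^ 2 + ((ω t θ φ) ^ 4)⁻¹ * (v t θ φ - c₂) ^ 2) ≤
    η t θ φ ^ 2 * cL (EE c₁ c₂ P (fun t θ φ => Real.log (ω t θ φ)) v) t θ φ
      + cgradDot (fun t θ φ => η t θ φ ^ 2)
        (EE c₁ c₂ P (fun t θ φ => Real.log (ω t θ φ)) v) t θ φ := by
  have main := pw c₁ c₂ hP hl hv hη hO eΦ el ev rfl
  refine le_trans ?_ main
  have hx : |P t θ φ - c₁| ≤ 2 * Λ := by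
    have := abs_sub (P t θ φ) c₁
    linarith
  obtain ⟨b1, b2, b3⟩ := g_bound hx rfl
  set g := Real.exp (2 * (P t θ φ - c₁)) with hgd
  have hk0 : 0 < g⁻¹ := inv_pos.2 (Real.exp_pos _)
  have N0 := cgradNormSq_nonneg η t θ φ
  have G0 : 0 ≤ cgradNormSq P t θ φ
        + Real.exp (4 * (P t θ φ - Real.log (ω t θ φ))) * cgradNormSq v t θ φ := by
    have := cgradNormSq_nonneg P t θ φ
    have := cgradNormSq_nonneg v t θ φ
    positivity
  have hΩ : (Real.exp (2 * (P t θ φ - Real.log (ω t θ φ))) * (v t θ φ - c₂)) ^ 2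
      ≤ Real.exp (4 * Λ) * (((ω t θ φ) ^ 4)⁻¹ * (v t θ φ - c₂) ^ 2) := by
    have e1 : Real.exp (2 * (P t θ φ - Real.log (ω t θ φ))) ^ 2
        = Real.exp (4 * P t θ φ) * ((ω t θ φ) ^ 4)⁻¹ := by
      rw [← Real.exp_nat_mul]
      have : ((ω t θ φ) ^ 4)⁻¹ = Real.exp (-(4 * Real.log (ω t θ φ))) := by
        rw [Real.exp_neg]
        congr 1
        have := Real.exp_nat_mul (Real.log (ω t θ φ)) 4
        rw [Real.exp_log hω] at this
        push_cast at this
        exact this.symm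
      rw [this, ← Real.exp_add]
      congr 1; push_cast; ring
    rw [mul_pow, e1, mul_assoc]
    have : Real.exp (4 * P t θ φ) ≤ Real.exp (4 * Λ) :=
      Real.exp_le_exp.2 (by linarith [(abs_le.1 hb).2])
    gcongr
  have T1 : (g - g⁻¹) ^ 2 * g⁻¹ ≤ 16 * Real.exp (16 * Λ) * (P t θ φ - c₁) ^ 2 := by
    calc (g - g⁻¹) ^ 2 * g⁻¹ ≤ 16 * Real.exp (8 * Λ) * (P t θ φ - c₁) ^ 2 * Real.exp (4 * Λ) := by
          gcongr
      _ = 16 * Real.exp (12 * Λ) * (P t θ φ - c₁) ^ 2 := by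
          have : Real.exp (12 * Λ) = Real.exp (8 * Λ) * Real.exp (4 * Λ) := by
            rw [← Real.exp_add]; congr 1; ring
          rw [this]; ring
      _ ≤ _ := by
          have : Real.exp (12 * Λ) ≤ Real.exp (16 * Λ) := Real.exp_le_exp.2 (by linarith)
          gcongr
  have T2 : (2 * g⁻¹ + 4 * g⁻¹ ^ 3) *
          (Real.exp (2 * (P t θ φ - Real.log (ω t θ φ))) * (v t θ φ - c₂)) ^ 2
      ≤ 16 * Real.exp (16 * Λ) * (((ω t θ φ) ^ 4)⁻¹ * (v t θ φ - c₂) ^ 2) := by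
    have c0 : 0 ≤ ((ω t θ φ) ^ 4)⁻¹ * (v t θ φ - c₂) ^ 2 := by positivity
    calc _ ≤ (2 * Real.exp (4 * Λ) + 4 * Real.exp (4 * Λ) ^ 3) *
          (Real.exp (4 * Λ) * (((ω t θ φ) ^ 4)⁻¹ * (v t θ φ - c₂) ^ 2)) := by
          gcongr
      _ = (2 * Real.exp (8 * Λ) + 4 * Real.exp (16 * Λ)) *
          (((ω t θ φ) ^ 4)⁻¹ * (v t θ φ - c₂) ^ 2) := by
          have e1 : Real.exp (8 * Λ) = Real.exp (4 * Λ) ^ 2 := by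
            rw [← Real.exp_nat_mul]; congr 1; push_cast; ring
          have e2 : Real.exp (16 * Λ) = Real.exp (4 * Λ) ^ 4 := by
            rw [← Real.exp_nat_mul]; congr 1; push_cast; ring
          rw [e1, e2]; ring
      _ ≤ _ := by
          have h1 : Real.exp (8 * Λ) ≤ Real.exp (16 * Λ) := Real.exp_le_exp.2 (by linarith)
          have h2 := Real.exp_pos (16 * Λ)
          gcongr
          linarith
  have F1 : Real.exp (-4 * Λ) * η t θ φ ^ 2 * (cgradNormSq P t θ φ
        + Real.exp (4 * (P t θ φ - Real.log (ω t θ φ))) * cgradNormSq v t θ φ)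
      ≤ g * η t θ φ ^ 2 * (cgradNormSq P t θ φ
        + Real.exp (4 * (P t θ φ - Real.log (ω t θ φ))) * cgradNormSq v t θ φ) := by
    gcongr
  have F2 := mul_le_mul_of_nonneg_left (add_le_add T1 T2) N0
  linarith

end

/-! ### The exponential energy estimate, pointwise -/

lemma exp_1d {p p1 : ℝ → ℝ} {p2 x : ℝ}
    (hp : ∀ᶠ y in nhds x, HasDerivAt p (p1 y) y) (hp1 : HasDerivAt p1 p2 x) :
    deriv (deriv (fun y => Real.exp (p y))) x = Real.exp (p x) * (p2 + p1 x ^ 2) := by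
  have he : deriv (fun y => Real.exp (p y)) =ᶠ[nhds x] (fun y => Real.exp (p y) * p1 y) := by
    filter_upwards [hp] with y h1
    exact h1.exp.deriv
  rw [he.deriv_eq]
  refine (hp.self_of_nhds.exp.mul hp1).deriv.trans ?_
  ring

lemma pw_exp {P v l : ℝ → ℝ → ℝ → ℝ} {t θ φ τ : ℝ} (hP : Cn 2 P)
    (hO : (t, θ, φ) ∈ Om)
    (eΦ : cL P t θ φ = 2 * Real.exp (4 * (P t θ φ - l t θ φ)) * cgradNormSq v t θ φ) :
    Real.exp (P t θ φ) * (2 * (τ ^ 2 - t ^ 2) ^ 2 *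
      (Real.exp (4 * (P t θ φ - l t θ φ)) * cdt v t θ φ ^ 2) - 4 * t ^ 2) ≤
    (τ ^ 2 - t ^ 2) ^ 2 * cL (fun t θ φ => Real.exp (P t θ φ)) t θ φ
      + cgradDot (fun t _ _ => (τ ^ 2 - t ^ 2) ^ 2) (fun t θ φ => Real.exp (P t θ φ)) t θ φ := by
  have hs := (sin_pos_Om hO).ne'
  have a1 : cdt (fun t θ φ => Real.exp (P t θ φ)) t θ φ = Real.exp (P t θ φ) * cdt P t θ φ :=
    (Cn.hdt (n := 1) hP hO).exp.deriv
  have a2 : cdθ (fun t θ φ => Real.exp (P t θ φ)) t θ φ = Real.exp (P t θ φ) * cdθ P t θ φ :=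
    (Cn.hdθ (n := 1) hP hO).exp.deriv
  have b1 : cdt (cdt (fun t θ φ => Real.exp (P t θ φ))) t θ φ
      = Real.exp (P t θ φ) * (cdt (cdt P) t θ φ + cdt P t θ φ ^ 2) :=
    exp_1d (p := fun s => P s θ φ) (p1 := fun s => cdt P s θ φ)
      ((ev_t hO).mono fun _ h => Cn.hdt (n := 1) hP h) (Cn.hdt (n := 0) (Cn.dt (n := 1) hP) hO)
  have b2 : cdθ (cdθ (fun t θ φ => Real.exp (P t θ φ))) t θ φ
      = Real.exp (P t θ φ) * (cdθ (cdθ P) t θ φ + cdθ P t θ φ ^ 2) :=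
    exp_1d (p := fun s => P t s φ) (p1 := fun s => cdθ P t s φ)
      ((ev_th hO).mono fun _ h => Cn.hdθ (n := 1) hP h) (Cn.hdθ (n := 0) (Cn.dθ (n := 1) hP) hO)
  have b3 : cdφ (cdφ (fun t θ φ => Real.exp (P t θ φ))) t θ φ
      = Real.exp (P t θ φ) * (cdφ (cdφ P) t θ φ + cdφ P t θ φ ^ 2) :=
    exp_1d (p := fun s => P t θ s) (p1 := fun s => cdφ P t θ s)
      ((ev_ph hO).mono fun _ h => Cn.hdφ (n := 1) hP h) (Cn.hdφ (n := 0) (Cn.dφ (n := 1) hP) hO)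
  have z1 : cdt (fun t _ _ => (τ ^ 2 - t ^ 2) ^ 2) t θ φ = 2 * (τ ^ 2 - t ^ 2) * (-2 * t) := by
    have := (((hasDerivAt_id t).pow 2).const_sub (τ ^ 2)).pow 2
    refine Eq.trans this.deriv ?_
    simp
  have z2 : cdθ (fun t _ _ => (τ ^ 2 - t ^ 2) ^ 2) t θ φ = 0 := by simp [cdθ, pdθ]
  have z3 : cdφ (fun t _ _ => (τ ^ 2 - t ^ 2) ^ 2) t θ φ = 0 := by simp [cdφ, pdφ]
  have hcL : ∀ F : ℝ → ℝ → ℝ → ℝ, cL F t θ φ = cdt (cdt F) t θ φ - cdt F t θ φ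
      + (cdθ (cdθ F) t θ φ + (Real.cos θ / Real.sin θ) * cdθ F t θ φ
        + ((Real.sin θ)⁻¹) ^ 2 * cdφ (cdφ F) t θ φ) := by
    intro F; rw [inv_pow]; rfl
  have hcg : ∀ F G : ℝ → ℝ → ℝ → ℝ, cgradDot F G t θ φ = cdt F t θ φ * cdt G t θ φ
      + (cdθ F t θ φ * cdθ G t θ φ + ((Real.sin θ)⁻¹) ^ 2 * cdφ F t θ φ * cdφ G t θ φ) := by
    intro F G; rw [inv_pow]; rfl
  have hV := cdt_sq_le v t θ φ
  rw [hcL] at eΦ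
  rw [hcL, hcg, b1, b2, b3, a1, a2, z1, z2, z3]
  set X := Real.exp (4 * (P t θ φ - l t θ φ))
  have hX : 0 < X := Real.exp_pos _
  have hE : 0 < Real.exp (P t θ φ) := Real.exp_pos _
  set e := Real.exp (P t θ φ)
  have k : 2 * (τ ^ 2 - t ^ 2) ^ 2 * (X * cdt v t θ φ ^ 2) - 4 * t ^ 2
      ≤ (τ ^ 2 - t ^ 2) ^ 2 * (2 * X * cgradNormSq v t θ φ + cdt P t θ φ ^ 2 + cdθ P t θ φ ^ 2
        + ((Real.sin θ)⁻¹) ^ 2 * cdφ P t θ φ ^ 2)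
        + 2 * (τ ^ 2 - t ^ 2) * (-2 * t) * cdt P t θ φ := by
    have s1 : 0 ≤ ((τ ^ 2 - t ^ 2) * cdt P t θ φ - 2 * t) ^ 2 := sq_nonneg _
    have s2 : 0 ≤ (τ ^ 2 - t ^ 2) ^ 2 * cdθ P t θ φ ^ 2 := by positivity
    have s3 : 0 ≤ (τ ^ 2 - t ^ 2) ^ 2 * (((Real.sin θ)⁻¹) ^ 2 * cdφ P t θ φ ^ 2) := by positivity
    have s4 : (τ ^ 2 - t ^ 2) ^ 2 * (X * cdt v t θ φ ^ 2)
      ≤ (τ ^ 2 - t ^ 2) ^ 2 * (X * cgradNormSq v t θ φ) := by gcongr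
    nlinarith
  have k2 := mul_le_mul_of_nonneg_left k hE.le
  refine k2.trans (le_of_eq ?_)
  rw [← eΦ]
  ring
end

noncomputable section

/-! ### Behaviour at the poles -/

/-- the closed cylinder in coordinates -/
def UU : Set (ℝ × ℝ × ℝ) := Ioo (-2 : ℝ) 2 ×ˢ (Icc (0 : ℝ) π ×ˢ (univ : Set ℝ))

lemma mem_UU {t θ φ : ℝ} : (t, θ, φ) ∈ UU ↔ t ∈ Ioo (-2 : ℝ) 2 ∧ θ ∈ Icc (0 : ℝ) π := by
  simp [UU]

lemma Om_sub_UU : Om ⊆ UU :=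
  prod_mono_right (prod_mono_left Ioo_subset_Icc_self)

lemma uniqueDiffOn_UU : UniqueDiffOn ℝ UU :=
  (uniqueDiffOn_Ioo _ _).prod ((uniqueDiffOn_Icc Real.pi_pos).prod uniqueDiffOn_univ)

/-- one-sided `θ`-derivative -/
def Dw (F : ℝ × ℝ × ℝ → ℝ) (p : ℝ × ℝ × ℝ) : ℝ := fderivWithin ℝ F UU p (0, 1, 0)

lemma Dw_contDiffOn {F : ℝ × ℝ × ℝ → ℝ} {n : ℕ} (h : ContDiffOn ℝ (n + 1 : ℕ) F UU) :
    ContDiffOn ℝ n (Dw F) UU := by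
  have h1 : ContDiffOn ℝ n (fderivWithin ℝ F UU) UU :=
    ContDiffOn.fderivWithin h uniqueDiffOn_UU (by norm_cast)
  exact h1.clm_apply contDiffOn_const

lemma Dw_hasDeriv {F : ℝ × ℝ × ℝ → ℝ} {n : ℕ} (h : ContDiffOn ℝ (n + 1 : ℕ) F UU)
    {t θ φ : ℝ} (hp : (t, θ, φ) ∈ UU) :
    HasDerivWithinAt (fun x => F (t, x, φ)) (Dw F (t, θ, φ)) (Icc 0 π) θ := by
  have h1 : HasFDerivWithinAt F (fderivWithin ℝ F UU (t, θ, φ)) UU (t, θ, φ) :=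
    (h.differentiableOn (by simp) _ hp).hasFDerivWithinAt
  have h2 : HasDerivWithinAt (fun s : ℝ => (t, s, φ)) ((0 : ℝ), (1 : ℝ), (0 : ℝ)) (Icc 0 π) θ :=
    ((hasDerivAt_const θ t).prodMk ((hasDerivAt_id θ).prodMk (hasDerivAt_const θ φ))).hasDerivWithinAt
  exact h1.comp_hasDerivWithinAt θ h2 (fun x hx => mem_UU.2 ⟨(mem_UU.1 hp).1, hx⟩)

lemma Dw_hasDerivAt {F : ℝ × ℝ × ℝ → ℝ} {n : ℕ} (h : ContDiffOn ℝ (n + 1 : ℕ) F UU)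
    {t θ φ : ℝ} (hp : (t, θ, φ) ∈ Om) :
    HasDerivAt (fun x => F (t, x, φ)) (Dw F (t, θ, φ)) θ :=
  (Dw_hasDeriv h (Om_sub_UU hp)).hasDerivAt (Icc_mem_nhds (mem_Om.1 hp).2.1 (mem_Om.1 hp).2.2)

lemma Dw_eq {F : ℝ → ℝ → ℝ → ℝ} {n : ℕ} (h : ContDiffOn ℝ (n + 1 : ℕ) (unc F) UU)
    {t θ φ : ℝ} (hp : (t, θ, φ) ∈ Om) : cdθ F t θ φ = Dw (unc F) (t, θ, φ) :=
  (Dw_hasDerivAt h hp).deriv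

lemma ne_of_ae {a b : ℝ} (h : a < b) {p : ℝ → Prop} (hp : ∀ᵐ x ∂(volume.restrict (Ioo a b)), p x) :
    ∃ x, p x := by
  have : NeZero (volume.restrict (Ioo a b)) := by
    constructor
    rw [Ne, Measure.restrict_eq_zero, Real.volume_Ioo]
    simp [h]
  exact hp.exists

lemma not_int_inv {t₁ t₂ φ₁ φ₂ h : ℝ} (ht : t₁ < t₂) (hφ : φ₁ < φ₂) (hh : 0 < h) :
    ¬ IntegrableOn (fun p : ℝ × ℝ × ℝ => (p.2.1)⁻¹) (box t₁ t₂ 0 h φ₁ φ₂) := by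
  intro hi
  unfold box at hi
  rw [Measure.volume_eq_prod, IntegrableOn, ← Measure.prod_restrict] at hi
  obtain ⟨t, h1⟩ := ne_of_ae ht hi.prod_right_ae
  rw [Measure.volume_eq_prod, ← Measure.prod_restrict] at h1
  obtain ⟨φ, h2⟩ := ne_of_ae hφ h1.prod_left_ae
  have h3 : IntegrableOn (fun x : ℝ => x ^ (-1 : ℝ)) (Ioo 0 h) := by
    refine IntegrableOn.congr_fun (f := fun x : ℝ => x⁻¹) h2 ?_ measurableSet_Ioo
    intro x hx
    simp only
    rw [Real.rpow_neg_one]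
  rw [intervalIntegral.integrableOn_Ioo_rpow_iff hh] at h3
  exact lt_irrefl _ h3

/-- the finite-energy hypothesis used at the poles -/
def FE (F : ℝ → ℝ → ℝ → ℝ) : Prop := ∀ s : ℝ, s < 2 →
  IntegrableOn (fun p : ℝ × ℝ × ℝ => cdθ F p.1 p.2.1 p.2.2 ^ 2 * (Real.sin p.2.1 ^ 3)⁻¹)
    (Icc (-s) s ×ˢ (Ioo (0 : ℝ) π ×ˢ Ioo (0 : ℝ) (2 * π)))

lemma FE_contra {F : ℝ → ℝ → ℝ → ℝ} (hF : FE F) {t φ h c : ℝ} (ht : t ∈ Ioo (-2 : ℝ) 2)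
    (ht' : t + h < 2) (hh : 0 < h) (hπ : h ≤ π) (hφ : 0 ≤ φ) (hφ' : φ + h ≤ 2 * π) (hc : 0 < c)
    (hb : ∀ p ∈ box t (t + h) 0 h φ (φ + h), c * p.2.1 ≤ |cdθ F p.1 p.2.1 p.2.2|) : False := by
  refine not_int_inv (t₁ := t) (t₂ := t + h) (φ₁ := φ) (φ₂ := φ + h) (h := h)
    (by linarith) (by linarith) hh ?_
  obtain ⟨s, hs1, hs2⟩ : ∃ s < 2, Icc t (t + h) ⊆ Icc (-s) s := by
    refine ⟨max (-t) (t + h), max_lt (by linarith [ht.1]) ht', ?_⟩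
    apply Icc_subset_Icc
    · linarith [le_max_left (-t) (t + h)]
    · exact le_max_right _ _
  have hi := (hF s hs1).mono_set (s := box t (t + h) 0 h φ (φ + h))
    (prod_mono (Ioo_subset_Icc_self.trans hs2) (prod_mono (Ioo_subset_Ioo_right hπ)
      (Ioo_subset_Ioo hφ hφ')))
  refine Integrable.mono' (hi.const_mul (c ^ 2)⁻¹) ?_ ?_
  · exact (measurable_snd.fst.inv).aestronglyMeasurable
  · refine (ae_restrict_iff' measurableSet_box).2 (Eventually.of_forall ?_)
    intro p hp
    have h1 := hb p hp
    obtain ⟨-, ⟨h2, h3⟩, -⟩ := hp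
    have hsin : 0 < Real.sin p.2.1 := Real.sin_pos_of_pos_of_lt_pi h2 (by linarith)
    have hsl : Real.sin p.2.1 ≤ p.2.1 := Real.sin_le h2.le
    rw [Real.norm_eq_abs, abs_of_pos (inv_pos.2 h2)]
    have k1 : c ^ 2 * p.2.1 ^ 2 ≤ cdθ F p.1 p.2.1 p.2.2 ^ 2 := by
      rw [← mul_pow, ← sq_abs (cdθ F _ _ _)]
      gcongr
    have k2 : (p.2.1 ^ 3)⁻¹ ≤ (Real.sin p.2.1 ^ 3)⁻¹ := by
      gcongr
    calc (p.2.1)⁻¹ = (c ^ 2)⁻¹ * ((c ^ 2 * p.2.1 ^ 2) * (p.2.1 ^ 3)⁻¹) := by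
          field_simp
      _ ≤ _ := by gcongr

lemma cont_box {G : ℝ × ℝ × ℝ → ℝ} (hG : ContinuousOn G UU) {t φ : ℝ} (ht : t ∈ Ioo (-2 : ℝ) 2)
    (hφ : φ < 2 * π) (h0 : G (t, 0, φ) ≠ 0) :
    ∃ h c : ℝ, 0 < h ∧ h ≤ 1 ∧ 0 < c ∧ t + h < 2 ∧ φ + h ≤ 2 * π ∧
      ∀ t' θ φ', t < t' → t' < t + h → 0 ≤ θ → θ < h → φ < φ' → φ' < φ + h →
        c ≤ |G (t', θ, φ')| := by
  have hpi := Real.pi_gt_three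
  have hm : (t, (0 : ℝ), φ) ∈ UU := mem_UU.2 ⟨ht, le_refl _, by linarith⟩
  have := Metric.continuousWithinAt_iff.1 (hG _ hm) (|G (t, 0, φ)| / 2) (by positivity)
  obtain ⟨d, hd, hd'⟩ := this
  refine ⟨min (min d 1) (min ((2 - t) / 2) (2 * π - φ)), |G (t, 0, φ)| / 2, ?_, ?_, by positivity,
    ?_, ?_, ?_⟩
  · have := ht.2
    refine lt_min (lt_min hd one_pos) (lt_min (by linarith) (by linarith))
  · exact (min_le_left _ _).trans (min_le_right _ _)
  · have := (min_le_right (min d 1) (min ((2 - t) / 2) (2 * π - φ))).trans (min_le_left _ _)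
    linarith [ht.2]
  · have := (min_le_right (min d 1) (min ((2 - t) / 2) (2 * π - φ))).trans (min_le_right _ _)
    linarith
  · intro t' θ φ' a1 a2 a3 a4 a5 a6
    have l1 := (min_le_left (min d 1) (min ((2 - t) / 2) (2 * π - φ))).trans (min_le_left _ _)
    have l2 := (min_le_left (min d 1) (min ((2 - t) / 2) (2 * π - φ))).trans (min_le_right _ _)
    have l3 := (min_le_right (min d 1) (min ((2 - t) / 2) (2 * π - φ))).trans (min_le_left _ _)
    have hm' : (t', θ, φ') ∈ UU :=
      mem_UU.2 ⟨⟨by linarith [ht.1], by linarith [ht.2]⟩, a3, by linarith⟩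
    have := hd' hm' (by
      rw [Prod.dist_eq, Prod.dist_eq]
      simp only [Real.dist_eq, sup_lt_iff, sub_zero]
      refine ⟨?_, ?_, ?_⟩ <;> rw [abs_lt] <;> constructor <;> linarith)
    rw [Real.dist_eq] at this
    have h3 := abs_sub_abs_le_abs_sub (G (t, 0, φ)) (G (t', θ, φ'))
    rw [abs_sub_comm] at h3
    linarith

lemma vanish1 {F : ℝ → ℝ → ℝ → ℝ} (hF : FE F) (h3 : ContDiffOn ℝ (3 : ℕ) (unc F) UU) {t φ : ℝ}
    (ht : t ∈ Ioo (-2 : ℝ) 2) (h0 : 0 ≤ φ) (hφ : φ < 2 * π) : Dw (unc F) (t, 0, φ) = 0 := by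
  have hpi := Real.pi_gt_three
  by_contra hne
  have c1 : ContDiffOn ℝ (2 : ℕ) (Dw (unc F)) UU := Dw_contDiffOn (n := 2) h3
  obtain ⟨h, c, hh, hh1, hc, ht', hφ', hb⟩ := cont_box c1.continuousOn ht hφ hne
  refine FE_contra hF ht ht' hh (by linarith) h0 hφ' hc ?_
  rintro ⟨t', θ, φ'⟩ ⟨⟨a1, a2⟩, ⟨a3, a4⟩, a5, a6⟩
  simp only at a1 a2 a3 a4 a5 a6 ⊢
  have hO : (t', θ, φ') ∈ Om :=
      mem_Om.2 ⟨⟨by linarith [ht.1], by linarith [ht.2]⟩, a3, by linarith⟩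
  rw [Dw_eq (n := 2) h3 hO]
  have := hb t' θ φ' a1 a2 a3.le a4 a5 a6
  nlinarith

lemma vanish2 {F : ℝ → ℝ → ℝ → ℝ} (hF : FE F) (h3 : ContDiffOn ℝ (3 : ℕ) (unc F) UU) {t φ : ℝ}
    (ht : t ∈ Ioo (-2 : ℝ) 2) (h0 : 0 ≤ φ) (hφ : φ < 2 * π) : Dw (Dw (unc F)) (t, 0, φ) = 0 := by
  have hpi := Real.pi_gt_three
  by_contra hne
  have c1 : ContDiffOn ℝ (2 : ℕ) (Dw (unc F)) UU := Dw_contDiffOn (n := 2) h3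
  have c2 : ContDiffOn ℝ (1 : ℕ) (Dw (Dw (unc F))) UU := Dw_contDiffOn (n := 1) c1
  obtain ⟨h, c, hh, hh1, hc, ht', hφ', hb⟩ := cont_box c2.continuousOn ht hφ hne
  refine FE_contra hF ht ht' hh (by linarith) h0 hφ' hc ?_
  rintro ⟨t', θ, φ'⟩ ⟨⟨a1, a2⟩, ⟨a3, a4⟩, a5, a6⟩
  simp only at a1 a2 a3 a4 a5 a6 ⊢
  have hI : t' ∈ Ioo (-2 : ℝ) 2 := ⟨by linarith [ht.1], by linarith [ht.2]⟩
  have hO : (t', θ, φ') ∈ Om := mem_Om.2 ⟨hI, a3, by linarith⟩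
  rw [Dw_eq (n := 2) h3 hO]
  have hz := vanish1 hF h3 (φ := φ') hI (by linarith) (by linarith)
  obtain ⟨ξ, hξ, hξ'⟩ := exists_hasDerivAt_eq_slope (fun x => Dw (unc F) (t', x, φ'))
    (fun x => Dw (Dw (unc F)) (t', x, φ')) a3
    (by
      intro x hx
      exact ((Dw_hasDeriv (n := 1) c1 (mem_UU.2 ⟨hI, hx.1, by linarith [hx.2]⟩)).continuousWithinAt).mono
        (Icc_subset_Icc_right (by linarith)))
    (by
      intro x hx
      exact Dw_hasDerivAt (n := 1) c1 (mem_Om.2 ⟨hI, hx.1, by linarith [hx.2]⟩))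
  rw [hz, sub_zero, sub_zero, eq_div_iff a3.ne'] at hξ'
  rw [← hξ', abs_mul, abs_of_pos a3]
  have := hb t' ξ φ' a1 a2 hξ.1.le (by linarith [hξ.2]) a5 a6
  gcongr

lemma mv {f f' : ℝ → ℝ} {θ C : ℝ} (hθ : 0 ≤ θ) (hπ : θ ≤ π)
    (hf : ∀ x ∈ Icc 0 π, HasDerivWithinAt f (f' x) (Icc 0 π) x)
    (hb : ∀ x ∈ Icc 0 θ, |f' x| ≤ C) : |f θ - f 0| ≤ C * θ := by
  have := Convex.norm_image_sub_le_of_norm_hasDerivWithin_le (f := f) (f' := f') (s := Icc 0 θ)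
    (C := C) (x := 0) (y := θ)
    (fun x hx => (hf x ⟨hx.1, hx.2.trans hπ⟩).mono (Icc_subset_Icc_right hπ))
    hb (convex_Icc _ _) ⟨le_refl _, hθ⟩ ⟨hθ, le_refl _⟩
  simpa [Real.norm_eq_abs, abs_of_nonneg hθ] using this

lemma per_red {G : ℝ → Prop} (hG : ∀ x, G (x + 2 * π) ↔ G x) (h : ∀ x, 0 ≤ x → x < 2 * π → G x)
    (x : ℝ) : G x := by
  have hpi := Real.pi_pos
  have hz : ∀ n : ℤ, ∀ x, G (x + n * (2 * π)) ↔ G x := by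
    intro n
    induction n using Int.induction_on with
    | zero => intro x; simp
    | succ i ih =>
      intro x
      rw [← ih x, ← hG (x + ((i : ℤ) : ℝ) * (2 * π))]
      have : x + ((i : ℤ) + 1 : ℤ) * (2 * π) = x + (i : ℤ) * (2 * π) + 2 * π := by push_cast; ring
      rw [this]
    | pred i ih =>
      intro x
      rw [← ih x, ← hG]
      have : x + (-(i : ℤ) - 1 : ℤ) * (2 * π) + 2 * π = x + (-(i : ℤ) : ℤ) * (2 * π) := by
        push_cast; ring
      rw [this]
  have := (hz (-⌊x / (2 * π)⌋) x).1
  apply this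
  have f1 := Int.floor_le (x / (2 * π))
  have f2 := Int.lt_floor_add_one (x / (2 * π))
  have e : x = x / (2 * π) * (2 * π) := by field_simp
  apply h
  · push_cast
    nlinarith
  · push_cast
    nlinarith

/-- vanishing of third order at the north pole -/
lemma north {F : ℝ → ℝ → ℝ → ℝ} {a : ℝ} (hF : FE F) (h3 : ContDiffOn ℝ (3 : ℕ) (unc F) UU)
    (hper : ∀ t θ φ, F t θ (φ + 2 * π) = F t θ φ)
    (ha : ∀ t ∈ Ioo (-2 : ℝ) 2, ∀ φ, F t 0 φ = a) {s : ℝ} (hs : s < 2) :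
    ∃ M : ℝ, 0 ≤ M ∧ ∀ t ∈ Icc (-s) s, ∀ θ ∈ Ioo 0 π, ∀ φ,
      |F t θ φ - a| ≤ M * θ ^ 3 ∧ |cdθ F t θ φ| ≤ M * θ ^ 2 := by
  have c1 : ContDiffOn ℝ (2 : ℕ) (Dw (unc F)) UU := Dw_contDiffOn (n := 2) h3
  have c2 : ContDiffOn ℝ (1 : ℕ) (Dw (Dw (unc F))) UU := Dw_contDiffOn (n := 1) c1
  have c3 : ContDiffOn ℝ (0 : ℕ) (Dw (Dw (Dw (unc F)))) UU := Dw_contDiffOn (n := 0) c2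
  have hsub : cbox (-s) s 0 π 0 (2 * π) ⊆ UU := by
    rintro ⟨t, θ, φ⟩ ⟨⟨a1, a2⟩, ⟨a3, a4⟩, -⟩
    simp only at a1 a2 a3 a4
    exact mem_UU.2 ⟨⟨by linarith, by linarith⟩, ⟨by linarith, by linarith⟩⟩
  obtain ⟨M, hM⟩ := isCompact_cbox.exists_bound_of_continuousOn (c3.continuousOn.mono hsub)
  refine ⟨|M|, abs_nonneg _, ?_⟩
  intro t ht θ hθ
  have hI : t ∈ Ioo (-2 : ℝ) 2 := ⟨by linarith [ht.1, ht.2], by linarith [ht.1, ht.2]⟩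
  apply per_red
  · intro φ
    have : cdθ F t θ (φ + 2 * π) = cdθ F t θ φ := by
      unfold cdθ pdθ
      simp only [hper]
    rw [this, hper]
  intro φ h0 hφ
  have b3 : ∀ x ∈ Icc 0 π, |Dw (Dw (Dw (unc F))) (t, x, φ)| ≤ |M| := by
    intro x hx
    exact (hM (t, x, φ) ⟨ht, hx, h0, hφ.le⟩).trans (le_abs_self _)
  have b2 : ∀ x ∈ Icc 0 π, |Dw (Dw (unc F)) (t, x, φ)| ≤ |M| * x := by
    intro x hx
    have := mv (f := fun y => Dw (Dw (unc F)) (t, y, φ)) hx.1 hx.2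
      (fun y hy => Dw_hasDeriv (n := 0) c2 (mem_UU.2 ⟨hI, hy⟩))
      (fun y hy => b3 y ⟨hy.1, hy.2.trans hx.2⟩)
    simpa [vanish2 hF h3 hI h0 hφ] using this
  have b1 : ∀ x ∈ Icc 0 π, |Dw (unc F) (t, x, φ)| ≤ |M| * x ^ 2 := by
    intro x hx
    have := mv (f := fun y => Dw (unc F) (t, y, φ)) (C := |M| * x) hx.1 hx.2
      (fun y hy => Dw_hasDeriv (n := 1) c1 (mem_UU.2 ⟨hI, hy⟩))
      (fun y hy => (b2 y ⟨hy.1, hy.2.trans hx.2⟩).trans (by gcongr; exact hy.2))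
    simp only [vanish1 hF h3 hI h0 hφ, sub_zero] at this
    linarith
  have hθ' : θ ∈ Icc 0 π := ⟨hθ.1.le, hθ.2.le⟩
  constructor
  · have := mv (f := fun y => unc F (t, y, φ)) (C := |M| * θ ^ 2) hθ'.1 hθ'.2
      (fun y hy => Dw_hasDeriv (n := 2) h3 (mem_UU.2 ⟨hI, hy⟩))
      (fun y hy => (b1 y ⟨hy.1, hy.2.trans hθ'.2⟩).trans (by gcongr; exact hy.1; exact hy.2))
    simp only [unc, ha t hI φ] at this
    linarith
  · rw [Dw_eq (n := 2) h3 (mem_Om.2 ⟨hI, hθ⟩)]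
    exact b1 θ hθ'

lemma c1_bound {F : ℝ → ℝ → ℝ → ℝ} (h3 : ContDiffOn ℝ (3 : ℕ) (unc F) UU)
    (hper : ∀ t θ φ, F t θ (φ + 2 * π) = F t θ φ) {s : ℝ} (hs : s < 2) :
    ∃ M : ℝ, 0 ≤ M ∧ ∀ t ∈ Icc (-s) s, ∀ θ ∈ Ioo 0 π, ∀ φ,
      |F t θ φ| ≤ M ∧ |cdθ F t θ φ| ≤ M := by
  have c1 : ContDiffOn ℝ (2 : ℕ) (Dw (unc F)) UU := Dw_contDiffOn (n := 2) h3
  have hsub : cbox (-s) s 0 π 0 (2 * π) ⊆ UU := by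
    rintro ⟨t, θ, φ⟩ ⟨⟨a1, a2⟩, ⟨a3, a4⟩, -⟩
    simp only at a1 a2 a3 a4
    exact mem_UU.2 ⟨⟨by linarith, by linarith⟩, ⟨by linarith, by linarith⟩⟩
  obtain ⟨M, hM⟩ := isCompact_cbox.exists_bound_of_continuousOn (h3.continuousOn.mono hsub)
  obtain ⟨M', hM'⟩ := isCompact_cbox.exists_bound_of_continuousOn (c1.continuousOn.mono hsub)
  refine ⟨max |M| |M'|, le_max_of_le_left (abs_nonneg _), ?_⟩
  intro t ht θ hθ
  have hI : t ∈ Ioo (-2 : ℝ) 2 := ⟨by linarith [ht.1, ht.2], by linarith [ht.1, ht.2]⟩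
  apply per_red
  · intro φ
    have : cdθ F t θ (φ + 2 * π) = cdθ F t θ φ := by
      unfold cdθ pdθ
      simp only [hper]
    rw [this, hper]
  intro φ h0 hφ
  have hm : (t, θ, φ) ∈ cbox (-s) s 0 π 0 (2 * π) := ⟨ht, ⟨hθ.1.le, hθ.2.le⟩, h0, hφ.le⟩
  constructor
  · exact ((hM _ hm).trans (le_abs_self _)).trans (le_max_left _ _)
  · rw [Dw_eq (n := 2) h3 (mem_Om.2 ⟨hI, hθ⟩)]
    exact ((hM' _ hm).trans (le_abs_self _)).trans (le_max_right _ _)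

lemma cdth_refl (F : ℝ → ℝ → ℝ → ℝ) (t θ φ : ℝ) :
    cdθ (fun t θ φ => F t (π - θ) φ) t θ φ = - cdθ F t (π - θ) φ := by
  unfold cdθ pdθ
  exact deriv_comp_const_sub (f := fun x => F t x φ) π θ

lemma FE_refl {F : ℝ → ℝ → ℝ → ℝ} (hF : FE F) : FE (fun t θ φ => F t (π - θ) φ) := by
  intro s hs
  have h := hF s hs
  set e : ℝ × ℝ × ℝ → ℝ × ℝ × ℝ := Prod.map id (Prod.map (fun x => π - x) id) with he
  have mp : MeasurePreserving e volume volume := by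
    refine (MeasurePreserving.id volume).prod ?_
    exact (Measure.measurePreserving_sub_left volume π).prod (MeasurePreserving.id volume)
  have me : MeasurableEmbedding e := by
    have hI : Function.Involutive e := by
      rintro ⟨x, y, z⟩
      simp [he]
    exact (MeasurableEquiv.ofInvolutive e hI mp.measurable).measurableEmbedding
  have := (mp.integrableOn_comp_preimage me).2 h
  have hpre : e ⁻¹' (Icc (-s) s ×ˢ (Ioo (0 : ℝ) π ×ˢ Ioo (0 : ℝ) (2 * π)))
      = Icc (-s) s ×ˢ (Ioo (0 : ℝ) π ×ˢ Ioo (0 : ℝ) (2 * π)) := by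
    ext ⟨x, y, z⟩
    simp only [he, mem_preimage, Prod.map, mem_prod, id, mem_Ioo, mem_Icc]
    constructor
    · rintro ⟨a, ⟨b, c⟩, d⟩
      exact ⟨a, ⟨by linarith, by linarith⟩, d⟩
    · rintro ⟨a, ⟨b, c⟩, d⟩
      exact ⟨a, ⟨by linarith, by linarith⟩, d⟩
  rw [hpre] at this
  refine this.congr (Eventually.of_forall ?_)
  rintro ⟨x, y, z⟩
  simp only [he, Function.comp, Prod.map, id, cdth_refl, neg_sq, Real.sin_pi_sub]

lemma south {F : ℝ → ℝ → ℝ → ℝ} {a : ℝ} (hF : FE F) (h3 : ContDiffOn ℝ (3 : ℕ) (unc F) UU)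
    (hper : ∀ t θ φ, F t θ (φ + 2 * π) = F t θ φ)
    (ha : ∀ t ∈ Ioo (-2 : ℝ) 2, ∀ φ, F t π φ = a) {s : ℝ} (hs : s < 2) :
    ∃ M : ℝ, 0 ≤ M ∧ ∀ t ∈ Icc (-s) s, ∀ θ ∈ Ioo 0 π, ∀ φ,
      |F t θ φ - a| ≤ M * (π - θ) ^ 3 ∧ |cdθ F t θ φ| ≤ M * (π - θ) ^ 2 := by
  have h3' : ContDiffOn ℝ (3 : ℕ) (unc (fun t θ φ => F t (π - θ) φ)) UU := by
    have hc : ContDiff ℝ (3 : ℕ) (fun p : ℝ × ℝ × ℝ => (p.1, π - p.2.1, p.2.2)) := by fun_prop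
    refine h3.comp hc.contDiffOn ?_
    rintro ⟨t, θ, φ⟩ hp
    have := mem_UU.1 hp
    exact mem_UU.2 ⟨this.1, by linarith [this.2.2], by linarith [this.2.1]⟩
  obtain ⟨M, hM0, hM⟩ := north (F := fun t θ φ => F t (π - θ) φ) (a := a) (FE_refl hF) h3'
    (fun t θ φ => hper _ _ _) (fun t ht φ => by simpa using ha t ht φ) hs
  refine ⟨M, hM0, ?_⟩
  intro t ht θ hθ φ
  have := hM t ht (π - θ) ⟨by linarith [hθ.2], by linarith [hθ.1]⟩ φ
  rw [cdth_refl] at this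
  simpa using this

/-- bounds on the region that a ball of radius `δ` can reach -/
lemma master {F : ℝ → ℝ → ℝ → ℝ} {a c₂ θ₀ δ : ℝ} (hF : FE F)
    (h3 : ContDiffOn ℝ (3 : ℕ) (unc F) UU)
    (hper : ∀ t θ φ, F t θ (φ + 2 * π) = F t θ φ)
    (haN : ∀ t ∈ Ioo (-2 : ℝ) 2, ∀ φ, F t 0 φ = a) (haS : ∀ t ∈ Ioo (-2 : ℝ) 2, ∀ φ, F t π φ = -a)
    (hδ : 0 < δ) (hcN : θ₀ < 2 * δ → c₂ = a) (hcS : π - θ₀ < 2 * δ → c₂ = -a)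
    {s : ℝ} (hs : s < 2) :
    ∃ M : ℝ, 0 ≤ M ∧ ∀ t ∈ Icc (-s) s, ∀ θ ∈ Ioo 0 π, |θ - θ₀| < δ → ∀ φ,
      |F t θ φ - c₂| ≤ M * Real.sin θ ^ 3 ∧ |cdθ F t θ φ| ≤ M * Real.sin θ ^ 2 := by
  have hpi := Real.pi_pos
  obtain ⟨M1, hM1, k1⟩ := north hF h3 hper haN hs
  obtain ⟨M2, hM2, k2⟩ := south hF h3 hper haS hs
  obtain ⟨M3, hM3, k3⟩ := c1_bound h3 hper hs
  -- a general conversion, with `x` the distance to the nearest pole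
  have conv : ∀ x S, 0 < x → 2 / π * x ≤ S →
      (x ^ 3 ≤ (π / 2) ^ 3 * S ^ 3 ∧ x ^ 2 ≤ (π / 2) ^ 2 * S ^ 2) := by
    intro x S hx hS
    have : x ≤ π / 2 * S := by
      calc x = π / 2 * (2 / π * x) := by field_simp
        _ ≤ _ := by gcongr
    constructor
    · rw [← mul_pow]; gcongr
    · rw [← mul_pow]; gcongr
  set K := (M3 + |c₂|) * (δ⁻¹ ^ 3 + δ⁻¹ ^ 2) with hK
  have hK0 : 0 ≤ K := by positivity
  set B := (π / 2) ^ 3 + (π / 2) ^ 2 with hB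
  refine ⟨(M1 + M2 + K) * B, by positivity, ?_⟩
  -- the abstract final step
  have fin : ∀ x S q d, 0 < x → 0 ≤ S → 2 / π * x ≤ S →
      |q| ≤ (M1 + M2 + K) * x ^ 3 → |d| ≤ (M1 + M2 + K) * x ^ 2 →
      |q| ≤ (M1 + M2 + K) * B * S ^ 3 ∧ |d| ≤ (M1 + M2 + K) * B * S ^ 2 := by
    intro x S q d hx hS0 hS hq hd
    obtain ⟨p1, p2⟩ := conv x S hx hS
    have hMK : 0 ≤ M1 + M2 + K := by positivity
    constructor
    · refine hq.trans ?_
      rw [mul_assoc]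
      gcongr
      refine p1.trans ?_
      gcongr
      rw [hB]; linarith [sq_nonneg (π / 2)]
    · refine hd.trans ?_
      rw [mul_assoc]
      gcongr
      refine p2.trans ?_
      gcongr
      have : 0 ≤ (π / 2) ^ 3 := by positivity
      rw [hB]; linarith
  have far : ∀ x q d, δ ≤ x → |q| ≤ M3 + |c₂| → |d| ≤ M3 →
      |q| ≤ (M1 + M2 + K) * x ^ 3 ∧ |d| ≤ (M1 + M2 + K) * x ^ 2 := by
    intro x q d hx hq hd
    have hi : 1 ≤ δ⁻¹ * x := by
      rw [inv_mul_eq_div, le_div_iff₀ hδ]; linarith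
    have hx0 : 0 < x := hδ.trans_le hx
    have hc := abs_nonneg c₂
    have e3 : 1 ≤ δ⁻¹ ^ 3 * x ^ 3 := by rw [← mul_pow]; exact one_le_pow₀ hi
    have e2 : 1 ≤ δ⁻¹ ^ 2 * x ^ 2 := by rw [← mul_pow]; exact one_le_pow₀ hi
    constructor
    · have : M3 + |c₂| ≤ K * x ^ 3 := by
        calc M3 + |c₂| ≤ (M3 + |c₂|) * (δ⁻¹ ^ 3 * x ^ 3 + δ⁻¹ ^ 2 * x ^ 3) := by
              have : 0 ≤ δ⁻¹ ^ 2 * x ^ 3 := by positivity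
              nlinarith
          _ = K * x ^ 3 := by rw [hK]; ring
      have h2 : 0 ≤ (M1 + M2) * x ^ 3 := by positivity
      linarith
    · have : M3 + |c₂| ≤ K * x ^ 2 := by
        calc M3 + |c₂| ≤ (M3 + |c₂|) * (δ⁻¹ ^ 3 * x ^ 2 + δ⁻¹ ^ 2 * x ^ 2) := by
              have : 0 ≤ δ⁻¹ ^ 3 * x ^ 2 := by positivity
              nlinarith
          _ = K * x ^ 2 := by rw [hK]; ring
      have h2 : 0 ≤ (M1 + M2) * x ^ 2 := by positivity
      linarith
  intro t ht θ hθ hθδ φ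
  have hd := abs_lt.1 hθδ
  have hS0 : 0 < Real.sin θ := Real.sin_pos_of_pos_of_lt_pi hθ.1 hθ.2
  have t1 := k1 t ht θ hθ φ
  have t2 := k2 t ht θ hθ φ
  have t3 := k3 t ht θ hθ φ
  have tq : |F t θ φ - c₂| ≤ M3 + |c₂| := (abs_sub _ _).trans (by linarith [t3.1])
  rcases le_total θ (π / 2) with hh | hh
  · refine fin θ (Real.sin θ) _ _ hθ.1 hS0.le (Real.mul_le_sin hθ.1.le hh) ?_ ?_
    · by_cases hc : θ₀ < 2 * δ
      · rw [hcN hc]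
        refine t1.1.trans ?_
        have : 0 ≤ (M2 + K) * θ ^ 3 := by have := hθ.1; positivity
        linarith
      · exact (far θ _ _ (by linarith) tq t3.2).1
    · refine t1.2.trans ?_
      have : 0 ≤ (M2 + K) * θ ^ 2 := by positivity
      linarith
  · have hx0 : 0 < π - θ := by linarith [hθ.2]
    have hsin : 2 / π * (π - θ) ≤ Real.sin θ := by
      have := Real.mul_le_sin hx0.le (by linarith)
      rwa [Real.sin_pi_sub] at this
    refine fin (π - θ) (Real.sin θ) _ _ hx0 hS0.le hsin ?_ ?_
    · by_cases hc : π - θ₀ < 2 * δ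
      · rw [hcS hc]
        refine t2.1.trans ?_
        have : 0 ≤ (M1 + K) * (π - θ) ^ 3 := by positivity
        linarith
      · exact (far (π - θ) _ _ (by linarith) tq t3.2).1
    · refine t2.2.trans ?_
      have : 0 ≤ (M1 + K) * (π - θ) ^ 2 := by positivity
      linarith
end

noncomputable section

/-! ### Facts about the renormalizer and the solution -/

section facts
variable {A₁ Λ a : ℝ} {R : Renormalizer (Ioo (-2) 2) A₁} {t θ φ : ℝ}

/-- the logarithm of the renormalizer -/
def lw (R : Renormalizer (Ioo (-2) 2) A₁) : ℝ → ℝ → ℝ → ℝ := fun t θ φ => Real.log (R.ω t θ φ)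

lemma om_pos (R : Renormalizer (Ioo (-2) 2) A₁) (hO : (t, θ, φ) ∈ Om) : 0 < R.ω t θ φ :=
  R.pos t (mem_Om.1 hO).1 θ (mem_Om.1 hO).2 φ

lemma cn_om (R : Renormalizer (Ioo (-2) 2) A₁) (n : ℕ) : Cn n R.ω :=
  ContDiffOn.of_le (R.smooth) (by exact_mod_cast le_top)

lemma cn_lw (R : Renormalizer (Ioo (-2) 2) A₁) (n : ℕ) : Cn n (lw R) := by
  refine ContDiffOn.log (cn_om R n) ?_
  rintro ⟨t, θ, φ⟩ hp
  exact (om_pos R hp).ne'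

lemma lw_per (R : Renormalizer (Ioo (-2) 2) A₁) (t θ φ : ℝ) :
    lw R t θ (φ + 2 * π) = lw R t θ φ := by
  simp only [lw, R.periodic]

lemma lw_bd (R : Renormalizer (Ioo (-2) 2) A₁) (hO : (t, θ, φ) ∈ Om) :
    |lw R t θ φ - Real.log (Real.sin θ)| ≤ A₁ := by
  obtain ⟨G, -, h2, h3⟩ := R.deriv_ext 0 0 0 (by norm_num)
  have hO' := mem_Om.1 hO
  have := h3 t hO'.1 θ (Ioo_subset_Icc_self hO'.2) φ
  rw [h2 t hO'.1 θ hO'.2 φ] at this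
  exact this

lemma lwth_bd (R : Renormalizer (Ioo (-2) 2) A₁) (hO : (t, θ, φ) ∈ Om) :
    |cdθ (lw R) t θ φ| ≤ A₁ + (Real.sin θ)⁻¹ := by
  obtain ⟨G, -, h2, h3⟩ := R.deriv_ext 0 1 0 (by norm_num)
  have hO' := mem_Om.1 hO
  have := h3 t hO'.1 θ (Ioo_subset_Icc_self hO'.2) φ
  rw [h2 t hO'.1 θ hO'.2 φ] at this
  have hs : 0 < Real.sin θ := sin_pos_Om hO
  have e : (cdt^[0] (cdθ^[1] (cdφ^[0]
          (fun t θ φ => Real.log (R.ω t θ φ) - Real.log (Real.sin θ))))) t θ φ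
      = cdθ (lw R) t θ φ - Real.cos θ / Real.sin θ := by
    simp only [Function.iterate_zero, Function.iterate_one, id]
    exact ((Cn.hdθ (n := 0) (cn_lw R 1) hO).sub ((Real.hasDerivAt_sin θ).log hs.ne')).deriv
  rw [e] at this
  have h1 : |Real.cos θ / Real.sin θ| ≤ (Real.sin θ)⁻¹ := by
    rw [abs_div, abs_of_pos hs, div_eq_mul_inv]
    exact mul_le_of_le_one_left (by positivity) (Real.abs_cos_le_one θ)
  calc |cdθ (lw R) t θ φ| = |(cdθ (lw R) t θ φ - Real.cos θ / Real.sin θ) + Real.cos θ / Real.sin θ| := by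
        rw [sub_add_cancel]
    _ ≤ _ := (abs_add_le _ _).trans (add_le_add this h1)

lemma exp_lw (R : Renormalizer (Ioo (-2) 2) A₁) (hO : (t, θ, φ) ∈ Om) :
    Real.exp (-4 * lw R t θ φ) = ((R.ω t θ φ) ^ 4)⁻¹ := by
  have h := om_pos R hO
  rw [show -4 * lw R t θ φ = -((4 : ℕ) * lw R t θ φ) by push_cast; ring, Real.exp_neg,
    Real.exp_nat_mul, lw, Real.exp_log h]

lemma exp_lw_sin (hO : (t, θ, φ) ∈ Om) :
    Real.exp (-4 * Real.log (Real.sin θ)) = (Real.sin θ ^ 4)⁻¹ := by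
  rw [show -4 * Real.log (Real.sin θ) = -((4 : ℕ) * Real.log (Real.sin θ)) by push_cast; ring,
    Real.exp_neg, Real.exp_nat_mul, Real.exp_log (sin_pos_Om hO)]

lemma om_le (R : Renormalizer (Ioo (-2) 2) A₁) (hO : (t, θ, φ) ∈ Om) :
    ((R.ω t θ φ) ^ 4)⁻¹ ≤ Real.exp (4 * A₁) * (Real.sin θ ^ 4)⁻¹ := by
  rw [← exp_lw R hO, ← exp_lw_sin hO, ← Real.exp_add]
  have := abs_le.1 (lw_bd R hO)
  exact Real.exp_le_exp.2 (by linarith)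

lemma le_om (R : Renormalizer (Ioo (-2) 2) A₁) (hO : (t, θ, φ) ∈ Om) :
    Real.exp (-4 * A₁) * (Real.sin θ ^ 4)⁻¹ ≤ ((R.ω t θ φ) ^ 4)⁻¹ := by
  rw [← exp_lw R hO, ← exp_lw_sin hO, ← Real.exp_add]
  have := abs_le.1 (lw_bd R hO)
  exact Real.exp_le_exp.2 (by linarith)

variable (S : RHMSolution (Ioo (-2) 2) A₁ R Λ a)

lemma regP' : ContDiffOn ℝ (3 : ℕ) (unc S.Φ) UU := S.regΦ
lemma regv' : ContDiffOn ℝ (3 : ℕ) (unc S.v) UU := S.regv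
lemma cn_P : Cn 3 S.Φ := (regP' S).mono Om_sub_UU
lemma cn_v : Cn 3 S.v := (regv' S).mono Om_sub_UU

lemma bdP (hO : (t, θ, φ) ∈ Om) : |S.Φ t θ φ| ≤ Λ :=
  S.bddΦ t (mem_Om.1 hO).1 θ (Ioo_subset_Icc_self (mem_Om.1 hO).2) φ

lemma cont_gns {f : ℝ → ℝ → ℝ → ℝ} (h : Cn 1 f) : ContinuousOn (unc (cgradNormSq f)) Om :=
  cont_cgradDot h h

lemma cont_sin {s : Set (ℝ × ℝ × ℝ)} :
    ContinuousOn (fun p : ℝ × ℝ × ℝ => Real.sin p.2.1) s :=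
  (Real.continuous_sin.comp (continuous_fst.comp continuous_snd)).continuousOn

lemma cont_omi (R : Renormalizer (Ioo (-2) 2) A₁) :
    ContinuousOn (fun p : ℝ × ℝ × ℝ => ((R.ω p.1 p.2.1 p.2.2) ^ 4)⁻¹) Om := by
  refine ContinuousOn.inv₀ ((cn_om R 0).cont.pow 4) ?_
  rintro ⟨t, θ, φ⟩ hp
  exact pow_ne_zero _ (om_pos R hp).ne'

lemma FE_v : FE S.v := by
  intro s hs
  have hJ : Icc (-s) s ⊆ Ioo (-2 : ℝ) 2 := fun x hx => ⟨by linarith [hx.1], by linarith [hx.2]⟩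
  have h := S.energy_loc (Icc (-s) s) hJ isCompact_Icc
  have hms : MeasurableSet (Icc (-s) s ×ˢ (Ioo (0 : ℝ) π ×ˢ Ioo (0 : ℝ) (2 * π))) :=
    measurableSet_Icc.prod (measurableSet_Ioo.prod measurableSet_Ioo)
  have hsub : (Icc (-s) s ×ˢ (Ioo (0 : ℝ) π ×ˢ Ioo (0 : ℝ) (2 * π))) ⊆ Om :=
    prod_mono hJ (prod_mono_right (subset_univ _))
  refine Integrable.mono' (h.const_mul (Real.exp (4 * A₁))) ?_ ?_
  · refine ContinuousOn.aestronglyMeasurable ?_ hms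
    refine ContinuousOn.mul ((Cn.cont (Cn.dθ (n := 2) (cn_v S))).pow 2 |>.mono hsub) ?_
    refine ContinuousOn.inv₀ (cont_sin.pow 3) ?_
    rintro ⟨t, θ, φ⟩ hp
    exact pow_ne_zero _ (sin_pos_Om (hsub hp)).ne'
  · rw [ae_restrict_iff' hms]
    refine Eventually.of_forall ?_
    rintro ⟨t, θ, φ⟩ hp
    have hO := hsub hp
    have hs := sin_pos_Om hO
    have e0 : 0 ≤ cdθ S.v t θ φ ^ 2 * (Real.sin θ ^ 3)⁻¹ := by positivity
    rw [Real.norm_eq_abs, abs_of_nonneg e0]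
    have e1 := le_om R hO
    have e2 := cdth_sq_le S.v t θ φ
    have e3 := cgradNormSq_nonneg S.Φ t θ φ
    have e4 := cgradNormSq_nonneg S.v t θ φ
    have e5 : (Real.sin θ ^ 3)⁻¹ = Real.exp (4 * A₁) * ((Real.exp (-4 * A₁) * (Real.sin θ ^ 4)⁻¹) * Real.sin θ) := by
      rw [show -4 * A₁ = -(4 * A₁) by ring, Real.exp_neg]
      field_simp
    simp only
    rw [e5]
    calc _ ≤ cgradNormSq S.v t θ φ * (Real.exp (4 * A₁) * ((R.ω t θ φ ^ 4)⁻¹ * Real.sin θ)) := by gcongr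
      _ = Real.exp (4 * A₁) * ((0 + (R.ω t θ φ ^ 4)⁻¹ * cgradNormSq S.v t θ φ) * Real.sin θ) := by ring
      _ ≤ _ := by gcongr

lemma master_S {c₂ θ₀ δ s : ℝ} (hδ : 0 < δ) (hcN : θ₀ < 2 * δ → c₂ = a)
    (hcS : π - θ₀ < 2 * δ → c₂ = -a) (hs : s < 2) :
    ∃ M ≥ 0, ∀ t ∈ Icc (-s) s, ∀ θ ∈ Ioo 0 π, |θ - θ₀| < δ → ∀ φ,
      |S.v t θ φ - c₂| ≤ M * Real.sin θ ^ 3 ∧ |cdθ S.v t θ φ| ≤ M * Real.sin θ ^ 2 :=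
  master (FE_v S) (regv' S) S.periodicv S.traceN S.traceS hδ hcN hcS hs

end facts
end

noncomputable section

/-! ### Integrability of the right-hand side -/

lemma hardy_half {q q' : ℝ → ℝ} {τ : ℝ} (hτ : 0 ≤ τ) (hq : ∀ t ∈ Icc 0 τ, HasDerivAt q (q' t) t)
    (hq' : ContinuousOn q' (Icc 0 τ)) :
    ∫ t in (0:ℝ)..τ, q t ^ 2 ≤ 2 * τ * q 0 ^ 2 + 4 * ∫ t in (0:ℝ)..τ, ((τ - t) * q' t) ^ 2 := by
  have hqc : ContinuousOn q (Icc 0 τ) := fun t ht => (hq t ht).continuousAt.continuousWithinAt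
  have hu : uIcc 0 τ = Icc 0 τ := uIcc_of_le hτ
  have i1 : IntervalIntegrable (fun t => q t ^ 2) volume 0 τ :=
    ContinuousOn.intervalIntegrable (by rw [hu]; exact hqc.pow 2)
  have i2 : IntervalIntegrable (fun t => ((τ - t) * q' t) ^ 2) volume 0 τ :=
    ContinuousOn.intervalIntegrable (by
      rw [hu]; exact (((continuous_const.sub continuous_id).continuousOn).mul hq').pow 2)
  have hG : ∀ t ∈ uIcc 0 τ, HasDerivAt (fun t => (τ - t) * q t ^ 2)
      (- q t ^ 2 + 2 * q t * ((τ - t) * q' t)) t := by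
    intro t ht
    rw [hu] at ht
    have := ((hasDerivAt_id t).const_sub τ).mul ((hq t ht).pow 2)
    refine this.congr_deriv ?_
    simp
    ring
  have i3 : IntervalIntegrable (fun t => - q t ^ 2 + 2 * q t * ((τ - t) * q' t)) volume 0 τ :=
    ContinuousOn.intervalIntegrable (by
      rw [hu]
      exact ((hqc.pow 2).neg).add ((continuousOn_const.mul hqc).mul
        (((continuous_const.sub continuous_id).continuousOn).mul hq')))
  have ftc := intervalIntegral.integral_eq_sub_of_hasDerivAt hG i3
  have mono : ∫ t in (0:ℝ)..τ, (- q t ^ 2 + 2 * q t * ((τ - t) * q' t))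
      ≤ ∫ t in (0:ℝ)..τ, (-(1/2) * q t ^ 2 + 2 * ((τ - t) * q' t) ^ 2) := by
    refine intervalIntegral.integral_mono_on hτ i3 ((i1.const_mul _).add (i2.const_mul _)) ?_
    intro t _
    nlinarith [sq_nonneg (q t - 2 * ((τ - t) * q' t))]
  rw [intervalIntegral.integral_add (i1.const_mul _) (i2.const_mul _),
    intervalIntegral.integral_const_mul, intervalIntegral.integral_const_mul] at mono
  simp only [sub_self, zero_mul, sub_zero] at ftc
  linarith

lemma hardy {q q' : ℝ → ℝ} {τ : ℝ} (hτ : 1 ≤ τ) (hτ2 : τ ≤ 2)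
    (hq : ∀ t ∈ Icc (-τ) τ, HasDerivAt q (q' t) t)
    (hq' : ContinuousOn q' (Icc (-τ) τ)) :
    ∫ t in Ioo (-τ) τ, q t ^ 2 ≤ 8 * q 0 ^ 2 + 4 * ∫ t in Ioo (-τ) τ, ((τ ^ 2 - t ^ 2) * q' t) ^ 2 := by
  have hqc : ContinuousOn q (Icc (-τ) τ) := fun t ht => (hq t ht).continuousAt.continuousWithinAt
  have h0 : (0:ℝ) ≤ τ := by linarith
  have hs1 : Icc 0 τ ⊆ Icc (-τ) τ := Icc_subset_Icc_left (by linarith)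
  have hs2 : Icc (-τ) 0 ⊆ Icc (-τ) τ := Icc_subset_Icc_right (by linarith)
  have a1 := hardy_half h0 (fun t ht => hq t (hs1 ht)) (hq'.mono hs1)
  have hneg : ∀ t ∈ Icc 0 τ, -t ∈ Icc (-τ) τ := fun t ht => ⟨by linarith [ht.2], by linarith [ht.1]⟩
  have a2 := hardy_half (q := fun t => q (-t)) (q' := fun t => -q' (-t)) h0
    (fun t ht => by
      have := HasDerivAt.comp t (hq _ (hneg t ht)) (hasDerivAt_neg t)
      exact this.congr_deriv (by ring))
    ((hq'.comp continuous_neg.continuousOn hneg).neg)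
  have e1 : ∫ t in (0:ℝ)..τ, (q (-t)) ^ 2 = ∫ t in (-τ)..0, q t ^ 2 := by
    have := intervalIntegral.integral_comp_neg (a := 0) (b := τ) (fun t => q t ^ 2)
    simpa using this
  have e2 : ∫ t in (0:ℝ)..τ, ((τ - t) * -q' (-t)) ^ 2 = ∫ t in (-τ)..0, ((τ + t) * q' t) ^ 2 := by
    have := intervalIntegral.integral_comp_neg (a := 0) (b := τ) (fun t => ((τ + t) * q' t) ^ 2)
    rw [neg_zero] at this
    rw [← this]
    refine intervalIntegral.integral_congr fun t _ => ?_
    ring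
  simp only [neg_zero] at a2
  rw [e1, e2] at a2
  have hwc : ContinuousOn (fun t => ((τ ^ 2 - t ^ 2) * q' t) ^ 2) (Icc (-τ) τ) :=
    (((continuous_const.sub (continuous_id.pow 2)).continuousOn).mul hq').pow 2
  have m1 : ∫ t in (0:ℝ)..τ, ((τ - t) * q' t) ^ 2 ≤ ∫ t in (0:ℝ)..τ, ((τ ^ 2 - t ^ 2) * q' t) ^ 2 := by
    refine intervalIntegral.integral_mono_on h0 (ContinuousOn.intervalIntegrable ?_)
      (ContinuousOn.intervalIntegrable ?_) ?_
    · rw [uIcc_of_le h0]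
      exact (((continuous_const.sub continuous_id).continuousOn).mul (hq'.mono hs1)).pow 2
    · rw [uIcc_of_le h0]; exact hwc.mono hs1
    · intro t ht
      rw [mul_pow, mul_pow]
      have : τ - t ≤ τ ^ 2 - t ^ 2 := by nlinarith [ht.1, ht.2]
      have : 0 ≤ τ - t := by linarith [ht.2]
      gcongr
  have m2 : ∫ t in (-τ)..0, ((τ + t) * q' t) ^ 2 ≤ ∫ t in (-τ)..0, ((τ ^ 2 - t ^ 2) * q' t) ^ 2 := by
    refine intervalIntegral.integral_mono_on (by linarith) (ContinuousOn.intervalIntegrable ?_)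
      (ContinuousOn.intervalIntegrable ?_) ?_
    · rw [uIcc_of_le (by linarith)]
      exact (((continuous_const.add continuous_id).continuousOn).mul (hq'.mono hs2)).pow 2
    · rw [uIcc_of_le (by linarith)]; exact hwc.mono hs2
    · intro t ht
      rw [mul_pow, mul_pow]
      have : τ + t ≤ τ ^ 2 - t ^ 2 := by nlinarith [ht.1, ht.2]
      have : 0 ≤ τ + t := by linarith [ht.1]
      gcongr
  rw [Ioo_integral_eq (by linarith), Ioo_integral_eq (by linarith)]
  rw [← intervalIntegral.integral_add_adjacent_intervals (a := -τ) (b := 0) (c := τ)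
    (f := fun t => q t ^ 2), ← intervalIntegral.integral_add_adjacent_intervals (a := -τ) (b := 0) (c := τ)
    (f := fun t => ((τ ^ 2 - t ^ 2) * q' t) ^ 2)]
  · nlinarith [sq_nonneg (q 0)]
  · exact ContinuousOn.intervalIntegrable (by rw [uIcc_of_le (by linarith)]; exact hwc.mono hs2)
  · exact ContinuousOn.intervalIntegrable (by rw [uIcc_of_le (by linarith)]; exact hwc.mono hs1)
  · exact ContinuousOn.intervalIntegrable
      (by rw [uIcc_of_le (by linarith)]; exact (hqc.pow 2).mono hs2)
  · exact ContinuousOn.intervalIntegrable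
      (by rw [uIcc_of_le (by linarith)]; exact (hqc.pow 2).mono hs1)

lemma box_int_t {f : ℝ × ℝ × ℝ → ℝ} {t₁ t₂ α β φ₁ φ₂ : ℝ}
    (hf : IntegrableOn f (box t₁ t₂ α β φ₁ φ₂)) :
    IntegrableOn (fun q : ℝ × ℝ => ∫ t in Ioo t₁ t₂, f (t, q.1, q.2)) (Ioo α β ×ˢ Ioo φ₁ φ₂) := by
  unfold box at *
  rw [Measure.volume_eq_prod ℝ (ℝ × ℝ)] at hf
  rw [IntegrableOn, ← Measure.prod_restrict] at hf
  exact hf.integral_prod_right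

/-- Hardy on boxes -/
lemma hardy_box {v : ℝ → ℝ → ℝ → ℝ} (hv : Cn 1 v) {c τ α β φ₁ φ₂ M : ℝ} (hτ : 1 ≤ τ) (hτ2 : τ < 2)
    (hα : 0 < α) (hβ : β < π) (hab : α ≤ β) (hφ : φ₁ ≤ φ₂)
    (hM : ∀ θ ∈ Ioo α β, ∀ φ, |v 0 θ φ - c| ≤ M * Real.sin θ ^ 3) :
    ∫ p in box (-τ) τ α β φ₁ φ₂, (v p.1 p.2.1 p.2.2 - c) ^ 2 * (Real.sin p.2.1 ^ 3)⁻¹ ≤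
    8 * M ^ 2 * ((β - α) * (φ₂ - φ₁)) + 4 * ∫ p in box (-τ) τ α β φ₁ φ₂,
      ((τ ^ 2 - p.1 ^ 2) * cdt v p.1 p.2.1 p.2.2) ^ 2 * (Real.sin p.2.1 ^ 3)⁻¹ := by
  have hsub : cbox (-τ) τ α β φ₁ φ₂ ⊆ Om := cbox_sub_Om (by linarith) hτ2 hα hβ
  have csin : ContinuousOn (fun p : ℝ × ℝ × ℝ => (Real.sin p.2.1 ^ 3)⁻¹) (cbox (-τ) τ α β φ₁ φ₂) := by
    refine ContinuousOn.inv₀ (cont_sin.pow 3) ?_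
    rintro ⟨t, θ, φ⟩ hp
    exact pow_ne_zero _ (sin_pos_Om (hsub hp)).ne'
  have i1 : IntegrableOn (fun p : ℝ × ℝ × ℝ => (v p.1 p.2.1 p.2.2 - c) ^ 2 * (Real.sin p.2.1 ^ 3)⁻¹)
      (box (-τ) τ α β φ₁ φ₂) := by
    refine integrableOn_box (ContinuousOn.mul ?_ csin)
    exact ((hv.cont.mono hsub).sub continuousOn_const).pow 2
  have i2 : IntegrableOn (fun p : ℝ × ℝ × ℝ => ((τ ^ 2 - p.1 ^ 2) * cdt v p.1 p.2.1 p.2.2) ^ 2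
      * (Real.sin p.2.1 ^ 3)⁻¹) (box (-τ) τ α β φ₁ φ₂) := by
    refine integrableOn_box (ContinuousOn.mul (ContinuousOn.pow (ContinuousOn.mul ?_ ?_) 2) csin)
    · fun_prop
    · exact (Cn.dt (n := 0) hv).cont.mono hsub
  rw [box_fubini_t i1, box_fubini_t i2, ← vol_Ioo_prod hab hφ]
  have e : 8 * M ^ 2 * (volume (Ioo α β ×ˢ Ioo φ₁ φ₂)).toReal
      = ∫ q in Ioo α β ×ˢ Ioo φ₁ φ₂, 8 * M ^ 2 := by
    rw [setIntegral_const, smul_eq_mul, mul_comm]; rfl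
  have ic : IntegrableOn (fun _ : ℝ × ℝ => 8 * M ^ 2) (Ioo α β ×ˢ Ioo φ₁ φ₂) :=
    integrableOn_const vol_Ioo_prod_lt.ne
  rw [e, ← integral_const_mul, ← integral_add ic ((box_int_t i2).const_mul 4)]
  refine setIntegral_mono_on (box_int_t i1) (ic.add ((box_int_t i2).const_mul 4))
    (measurableSet_Ioo.prod measurableSet_Ioo) ?_
  rintro ⟨θ, φ⟩ ⟨h1, h2⟩
  simp only at h1 h2 ⊢
  have hO : ∀ t ∈ Icc (-τ) τ, (t, θ, φ) ∈ Om := fun t ht =>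
    hsub ⟨ht, Ioo_subset_Icc_self h1, Ioo_subset_Icc_self h2⟩
  have hs : 0 < Real.sin θ := sin_pos_Om (hO 0 ⟨by linarith, by linarith⟩)
  have H := hardy (q := fun t => v t θ φ - c) (q' := fun t => cdt v t θ φ) hτ hτ2.le
    (fun t ht => (Cn.hdt (n := 0) hv (hO t ht)).sub_const c)
    (ContinuousOn.comp (Cn.dt (n := 0) hv).cont (f := fun t : ℝ => (t, θ, φ)) (by fun_prop) hO)
  rw [integral_mul_const, integral_mul_const]
  have k : (v 0 θ φ - c) ^ 2 * (Real.sin θ ^ 3)⁻¹ ≤ M ^ 2 := by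
    have := hM θ h1 φ
    have hs1 := Real.sin_le_one θ
    have h3 : |v 0 θ φ - c| ^ 2 ≤ (M * Real.sin θ ^ 3) ^ 2 := by gcongr
    rw [sq_abs] at h3
    calc _ ≤ (M * Real.sin θ ^ 3) ^ 2 * (Real.sin θ ^ 3)⁻¹ := by gcongr
      _ = M ^ 2 * Real.sin θ ^ 3 := by field_simp
      _ ≤ M ^ 2 * 1 := by gcongr; exact pow_le_one₀ hs.le hs1
      _ = M ^ 2 := by ring
  have k2 := mul_le_mul_of_nonneg_right H (inv_nonneg.2 (pow_nonneg hs.le 3))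
  refine k2.trans ?_
  rw [add_mul]
  nlinarith
end

noncomputable section

section integ
variable {A₁ Λ a : ℝ} {R : Renormalizer (Ioo (-2) 2) A₁}

lemma eqP (S : RHMSolution (Ioo (-2) 2) A₁ R Λ a)
    (hL : ∀ t ∈ Ioo (-2 : ℝ) 2, ∀ θ ∈ Ioo (0 : ℝ) π, ∀ φ : ℝ,
        cL (fun t θ φ => Real.log (R.ω t θ φ)) t θ φ = 0) {t θ φ : ℝ} (hO : (t, θ, φ) ∈ Om) :
    cL S.Φ t θ φ = 2 * Real.exp (4 * (S.Φ t θ φ - lw R t θ φ)) * cgradNormSq S.v t θ φ := by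
  have h := mem_Om.1 hO
  rw [S.eqΦ t h.1 θ h.2 φ, hL t h.1 θ h.2 φ, add_zero]; rfl

lemma cont_exp_lw (R : Renormalizer (Ioo (-2) 2) A₁) (S : RHMSolution (Ioo (-2) 2) A₁ R Λ a) :
    ContinuousOn (fun p : ℝ × ℝ × ℝ =>
      Real.exp (4 * (S.Φ p.1 p.2.1 p.2.2 - lw R p.1 p.2.1 p.2.2))) Om :=
  Real.continuous_exp.comp_continuousOn
    (continuousOn_const.mul ((cn_P S).cont.sub (cn_lw R 0).cont))

lemma H1 (S : RHMSolution (Ioo (-2) 2) A₁ R Λ a)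
    (hL : ∀ t ∈ Ioo (-2 : ℝ) 2, ∀ θ ∈ Ioo (0 : ℝ) π, ∀ φ : ℝ,
        cL (fun t θ φ => Real.log (R.ω t θ φ)) t θ φ = 0) (φ₁ : ℝ) :
    ∃ K : ℝ, ∀ τ : ℝ, 1 ≤ τ → τ < 2 → ∃ ε₀ > 0, ∀ ε, 0 < ε → ε < ε₀ → ε < π / 2 →
      ∫ p in box (-τ) τ ε (π - ε) φ₁ (φ₁ + 2 * π),
        ((τ ^ 2 - p.1 ^ 2) * cdt S.v p.1 p.2.1 p.2.2) ^ 2 * (Real.sin p.2.1 ^ 3)⁻¹ ≤ K := by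
  have hpi := Real.pi_pos
  set c : ℝ := 2 * (Real.exp (-2) * Real.exp (-Λ) * Real.exp (-4 * Λ) * Real.exp (-4 * A₁)) with hc
  have hc0 : 0 < c := by positivity
  set D : ℝ := 16 * Real.exp (2 + Λ) with hD
  have hD0 : 0 < D := by positivity
  refine ⟨(2 * 1 * (2 * π) * 4 + D * (4 * (π * (2 * π)))) / c, ?_⟩
  intro τ hτ hτ2
  obtain ⟨M, hM0, hM⟩ := c1_bound (regP' S) S.periodicΦ hτ2
  refine ⟨(16 * Real.exp 2 * Real.exp Λ * (M + 1))⁻¹, by positivity, ?_⟩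
  intro ε hε hε0 hε2
  have hsub : cbox (-τ) τ ε (π - ε) φ₁ (φ₁ + 2 * π) ⊆ Om :=
    cbox_sub_Om (by linarith) hτ2 hε (by linarith)
  have hP2 : Cn 2 (fun t θ φ => Real.exp (S.Φ t θ φ)) := by
    exact ContDiffOn.exp ((cn_P S).mono (by norm_num : 2 ≤ 3))
  have hζ : Cn 1 (fun t _ _ => (τ ^ 2 - t ^ 2) ^ 2) := by
    refine Cn.of ?_
    unfold unc
    fun_prop
  have bdry : ∀ t ∈ Ioo (-τ) τ, ∀ θ ∈ Ioo 0 π, Real.sin θ ≤ ε → ∀ φ,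
      |(τ ^ 2 - t ^ 2) ^ 2 * (Real.exp (-t) * Real.sin θ)
        * cdθ (fun t θ φ => Real.exp (S.Φ t θ φ)) t θ φ| ≤ 1 := by
    intro t ht θ hθ hsε φ
    have hO : (t, θ, φ) ∈ Om := mem_Om.2 ⟨⟨by linarith [ht.1], by linarith [ht.2]⟩, hθ⟩
    have hs := sin_pos_Om hO
    have e : cdθ (fun t θ φ => Real.exp (S.Φ t θ φ)) t θ φ
        = Real.exp (S.Φ t θ φ) * cdθ S.Φ t θ φ := (Cn.hdθ (n := 2) (cn_P S) hO).exp.deriv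
    have m := (hM t (Ioo_subset_Icc_self ht) θ hθ φ).2
    have b := abs_le.1 (bdP S hO)
    rw [e, abs_mul, abs_mul, abs_mul, abs_mul, abs_of_pos (Real.exp_pos _), abs_of_pos hs,
      abs_of_pos (Real.exp_pos (S.Φ t θ φ)), abs_of_nonneg (sq_nonneg _)]
    have w : (τ ^ 2 - t ^ 2) ^ 2 ≤ 16 := by
      have h1 : 0 ≤ τ ^ 2 - t ^ 2 := by nlinarith [ht.1, ht.2]
      have h2 : τ ^ 2 - t ^ 2 ≤ 4 := by nlinarith [sq_nonneg t]
      nlinarith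
    calc _ ≤ 16 * (Real.exp 2 * ε) * (Real.exp Λ * (M + 1)) := by
          gcongr
          · linarith [ht.1]
          · exact b.2
          · linarith
      _ = (16 * Real.exp 2 * Real.exp Λ * (M + 1)) * ε := by ring
      _ ≤ (16 * Real.exp 2 * Real.exp Λ * (M + 1)) * (16 * Real.exp 2 * Real.exp Λ * (M + 1))⁻¹ := by
          gcongr
      _ = 1 := mul_inv_cancel₀ (by positivity)
  have hsin : Real.sin ε ≤ ε := Real.sin_le hε.le
  have G := green (κ := 1) (φ₁ := φ₁) (by linarith) hτ2 hε (by linarith : π - ε < π)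
    (by linarith : -τ ≤ τ) (by linarith) hP2 hζ
    (fun t θ φ => by simp only [S.periodicΦ]) (fun t θ φ => rfl)
    (fun θ φ => by ring) (fun θ φ => by ring)
    (fun t ht φ _ => bdry t ht ε ⟨hε, by linarith⟩ hsin φ)
    (fun t ht φ _ => bdry t ht (π - ε) ⟨by linarith, by linarith⟩ (by rw [Real.sin_pi_sub]; exact hsin) φ)
  have G' := (abs_le.1 G).2
  have iG : IntegrableOn (fun p : ℝ × ℝ × ℝ => (Real.exp (-p.1) * Real.sin p.2.1) *
      ((τ ^ 2 - p.1 ^ 2) ^ 2 * cL (fun t θ φ => Real.exp (S.Φ t θ φ)) p.1 p.2.1 p.2.2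
        + cgradDot (fun t _ _ => (τ ^ 2 - t ^ 2) ^ 2) (fun t θ φ => Real.exp (S.Φ t θ φ)) p.1 p.2.1 p.2.2))
      (box (-τ) τ ε (π - ε) φ₁ (φ₁ + 2 * π)) := by
    refine integrableOn_box (ContinuousOn.mul (by fun_prop) (ContinuousOn.add (ContinuousOn.mul (by fun_prop) ?_) ?_))
    · exact (cont_cL hP2).mono hsub
    · exact (cont_cgradDot hζ (hP2.mono (by norm_num))).mono hsub
  have csin : ContinuousOn (fun p : ℝ × ℝ × ℝ => (Real.sin p.2.1 ^ 3)⁻¹) (cbox (-τ) τ ε (π - ε) φ₁ (φ₁ + 2 * π)) := by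
    refine ContinuousOn.inv₀ (cont_sin.pow 3) ?_
    rintro ⟨t, θ, φ⟩ hp
    exact pow_ne_zero _ (sin_pos_Om (hsub hp)).ne'
  have i2 : IntegrableOn (fun p : ℝ × ℝ × ℝ => ((τ ^ 2 - p.1 ^ 2) * cdt S.v p.1 p.2.1 p.2.2) ^ 2
      * (Real.sin p.2.1 ^ 3)⁻¹) (box (-τ) τ ε (π - ε) φ₁ (φ₁ + 2 * π)) := by
    refine integrableOn_box (ContinuousOn.mul (ContinuousOn.pow (ContinuousOn.mul ?_ ?_) 2) csin)
    · fun_prop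
    · exact (Cn.dt (n := 2) (cn_v S)).cont.mono hsub
  have ic : IntegrableOn (fun _ : ℝ × ℝ × ℝ => D) (box (-τ) τ ε (π - ε) φ₁ (φ₁ + 2 * π)) :=
    integrableOn_box continuousOn_const
  have hvol : ∫ _p in box (-τ) τ ε (π - ε) φ₁ (φ₁ + 2 * π), D ≤ D * (4 * (π * (2 * π))) := by
    rw [box_fubini_t ic]
    simp only [setIntegral_const, smul_eq_mul]
    rw [measureReal_def, measureReal_def, vol_Ioo_prod (by linarith) (by linarith), Real.volume_Ioo,
      ENNReal.toReal_ofReal (by linarith)]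
    have : (π - ε - ε) * (φ₁ + 2 * π - φ₁) ≤ π * (2 * π) := by nlinarith
    calc _ ≤ (π * (2 * π)) * (4 * D) := by
          have h2 : (τ - -τ) ≤ 4 := by linarith
          have h3 : 0 ≤ (τ - -τ) * D := mul_nonneg (by linarith) hD0.le
          gcongr
      _ = _ := by ring
  have mono := setIntegral_mono_on ((i2.const_mul c).sub ic) iG measurableSet_box (by
    rintro ⟨t, θ, φ⟩ hp
    have hO := hsub (box_sub_cbox hp)
    have hs := sin_pos_Om hO
    have hs1 := Real.sin_le_one θ
    have pw := pw_exp (τ := τ) ((cn_P S).mono (by norm_num : 2 ≤ 3)) hO (eqP S hL hO)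
    have hw : 0 ≤ Real.exp (-t) * Real.sin θ := by positivity
    have pw' := mul_le_mul_of_nonneg_left pw hw
    refine le_trans ?_ pw'
    have b := abs_le.1 (bdP S hO)
    have ht : t ∈ Ioo (-τ) τ := hp.1
    have t1 : Real.exp (-2) ≤ Real.exp (-t) := Real.exp_le_exp.2 (by linarith [ht.2])
    have t2 : Real.exp (-t) ≤ Real.exp 2 := Real.exp_le_exp.2 (by linarith [ht.1])
    have p1 : Real.exp (-Λ) ≤ Real.exp (S.Φ t θ φ) := Real.exp_le_exp.2 b.1
    have p2 : Real.exp (S.Φ t θ φ) ≤ Real.exp Λ := Real.exp_le_exp.2 b.2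
    have o : Real.exp (-4 * Λ) * (Real.exp (-4 * A₁) * (Real.sin θ ^ 4)⁻¹)
        ≤ Real.exp (4 * (S.Φ t θ φ - lw R t θ φ)) := by
      rw [show 4 * (S.Φ t θ φ - lw R t θ φ) = 4 * S.Φ t θ φ + (-4 * lw R t θ φ) by ring, Real.exp_add,
        exp_lw R hO]
      exact mul_le_mul (Real.exp_le_exp.2 (by linarith [b.1])) (le_om R hO) (by positivity)
        (by positivity)
    have f1 : D ≥ (Real.exp (-t) * Real.sin θ) * (Real.exp (S.Φ t θ φ) * (4 * t ^ 2)) := by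
      have : t ^ 2 ≤ 4 := by nlinarith [ht.1, ht.2]
      rw [hD, Real.exp_add]
      calc _ ≤ (Real.exp 2 * 1) * (Real.exp Λ * (4 * 4)) := by gcongr
        _ = _ := by ring
    have f2 : c * (((τ ^ 2 - t ^ 2) * cdt S.v t θ φ) ^ 2 * (Real.sin θ ^ 3)⁻¹) ≤
        (Real.exp (-t) * Real.sin θ) * (Real.exp (S.Φ t θ φ) * (2 * (τ ^ 2 - t ^ 2) ^ 2 *
      (Real.exp (4 * (S.Φ t θ φ - lw R t θ φ)) * cdt S.v t θ φ ^ 2))) := by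
      calc _ = (Real.exp (-2) * Real.sin θ) * (Real.exp (-Λ) * (2 * (τ ^ 2 - t ^ 2) ^ 2 *
            ((Real.exp (-4 * Λ) * (Real.exp (-4 * A₁) * (Real.sin θ ^ 4)⁻¹)) * cdt S.v t θ φ ^ 2))) := by
              rw [hc]; field_simp
        _ ≤ _ := by gcongr
    simp only [Pi.sub_apply]
    rw [mul_sub, mul_sub]
    linarith)
  have e := integral_sub (i2.const_mul c) ic
  simp only [Pi.sub_apply] at mono
  rw [e, integral_const_mul] at mono
  rw [le_div_iff₀ hc0]
  have : 2 * 1 * (2 * π) * (τ - -τ) ≤ 2 * 1 * (2 * π) * 4 := by gcongr; linarith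
  linarith
end integ
end

noncomputable section

lemma box_mono {t₁ t₂ α β φ₁ φ₂ t₁' t₂' α' β' : ℝ} (h1 : t₁' ≤ t₁) (h2 : t₂ ≤ t₂') (h3 : α' ≤ α)
    (h4 : β ≤ β') : box t₁ t₂ α β φ₁ φ₂ ⊆ box t₁' t₂' α' β' φ₁ φ₂ :=
  prod_mono (Ioo_subset_Ioo h1 h2) (prod_mono_left (Ioo_subset_Ioo h3 h4))

lemma box_const {t₁ t₂ α β φ₁ φ₂ D : ℝ} (h1 : t₁ ≤ t₂) (h2 : α ≤ β) (h3 : φ₁ ≤ φ₂) :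
    ∫ _p in box t₁ t₂ α β φ₁ φ₂, D = (β - α) * (φ₂ - φ₁) * ((t₂ - t₁) * D) := by
  have ic : IntegrableOn (fun _ : ℝ × ℝ × ℝ => D) (box t₁ t₂ α β φ₁ φ₂) :=
    integrableOn_box continuousOn_const
  rw [box_fubini_t ic]
  simp only [setIntegral_const, smul_eq_mul]
  rw [measureReal_def, measureReal_def, vol_Ioo_prod h2 h3, Real.volume_Ioo,
    ENNReal.toReal_ofReal (by linarith)]

section integ
variable {A₁ Λ a : ℝ} {R : Renormalizer (Ioo (-2) 2) A₁}

/-- the integrand of the right-hand side -/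
def rhsI (S : RHMSolution (Ioo (-2) 2) A₁ R Λ a) (c₁ c₂ : ℝ) (p : ℝ × ℝ × ℝ) : ℝ :=
  ((S.Φ p.1 p.2.1 p.2.2 - c₁) ^ 2
    + ((R.ω p.1 p.2.1 p.2.2) ^ 4)⁻¹ * (S.v p.1 p.2.1 p.2.2 - c₂) ^ 2) * Real.sin p.2.1

lemma rhsI_cont (S : RHMSolution (Ioo (-2) 2) A₁ R Λ a) (c₁ c₂ : ℝ) :
    ContinuousOn (rhsI S c₁ c₂) Om :=
  ((((cn_P S).cont.sub continuousOn_const).pow 2).add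
    ((cont_omi R).mul (((cn_v S).cont.sub continuousOn_const).pow 2))).mul cont_sin

lemma rhsI_nonneg (S : RHMSolution (Ioo (-2) 2) A₁ R Λ a) (c₁ c₂ : ℝ) {p : ℝ × ℝ × ℝ}
    (hp : p ∈ Om) : 0 ≤ rhsI S c₁ c₂ p := by
  obtain ⟨t, θ, φ⟩ := p
  have := sin_pos_Om hp
  have := om_pos R hp
  unfold rhsI
  positivity

lemma rhs_int (S : RHMSolution (Ioo (-2) 2) A₁ R Λ a)
    (hL : ∀ t ∈ Ioo (-2 : ℝ) 2, ∀ θ ∈ Ioo (0 : ℝ) π, ∀ φ : ℝ,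
        cL (fun t θ φ => Real.log (R.ω t θ φ)) t θ φ = 0)
    {c₁ c₂ θ₀ δ : ℝ} (φ₁ : ℝ) (hδ : 0 < δ) (hθ₀ : θ₀ ∈ Icc 0 π) (hcN : θ₀ < 2 * δ → c₂ = a)
    (hcS : π - θ₀ < 2 * δ → c₂ = -a) :
    IntegrableOn (rhsI S c₁ c₂)
      (box (-2) 2 (max 0 (θ₀ - δ)) (min π (θ₀ + δ)) φ₁ (φ₁ + 2 * π)) := by
  have hpi := Real.pi_pos
  set A := max 0 (θ₀ - δ) with hA
  set B := min π (θ₀ + δ) with hB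
  have hA0 : 0 ≤ A := le_max_left _ _
  have hA1 : θ₀ - δ ≤ A := le_max_right _ _
  have hB0 : B ≤ π := min_le_left _ _
  have hB1 : B ≤ θ₀ + δ := min_le_right _ _
  have hAB : A < B := by
    rw [hA, hB, max_lt_iff, lt_min_iff, lt_min_iff]
    exact ⟨⟨hpi, by linarith [hθ₀.1]⟩, by linarith [hθ₀.2], by linarith⟩
  obtain ⟨M, hM0, hM⟩ := master_S S hδ hcN hcS (s := 1) (by norm_num)
  obtain ⟨K, hK⟩ := H1 S hL φ₁
  have hseq : ∀ n : ℕ, ∃ ε : ℝ, 0 < ε ∧ ε ≤ 1 / ((n : ℝ) + 1) ∧ ε ≤ (B - A) / 4 ∧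
      ∫ p in box (-(2 - 1 / ((n : ℝ) + 1))) (2 - 1 / ((n : ℝ) + 1)) ε (π - ε) φ₁ (φ₁ + 2 * π),
        (((2 - 1 / ((n : ℝ) + 1)) ^ 2 - p.1 ^ 2) * cdt S.v p.1 p.2.1 p.2.2) ^ 2
          * (Real.sin p.2.1 ^ 3)⁻¹ ≤ K := by
    intro n
    have h1 : 1 / ((n : ℝ) + 1) ≤ 1 := by
      rw [div_le_one (by positivity)]
      linarith [Nat.cast_nonneg (α := ℝ) n]
    have h2 : 0 < 1 / ((n : ℝ) + 1) := by positivity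
    obtain ⟨ε₀, h0, h⟩ := hK (2 - 1 / ((n : ℝ) + 1)) (by linarith) (by linarith)
    set ε := min (ε₀ / 2) (min (1 / ((n : ℝ) + 1)) ((B - A) / 4)) with hε
    have e1 : ε ≤ ε₀ / 2 := min_le_left _ _
    have e2 : ε ≤ 1 / ((n : ℝ) + 1) := (min_le_right _ _).trans (min_le_left _ _)
    have e3 : ε ≤ (B - A) / 4 := (min_le_right _ _).trans (min_le_right _ _)
    have e0 : 0 < ε := by
      rw [hε, lt_min_iff, lt_min_iff]
      exact ⟨by linarith, h2, by linarith⟩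
    exact ⟨ε, e0, e2, e3, h ε e0 (by linarith) (by linarith)⟩
  choose ε e0 e1 e2 e3 using hseq
  set τ : ℕ → ℝ := fun n => 2 - 1 / ((n : ℝ) + 1) with hτ
  have t1 : ∀ n, 1 ≤ τ n := by
    intro n
    have h1 : 1 / ((n : ℝ) + 1) ≤ 1 := by
      rw [div_le_one (by positivity)]
      linarith [Nat.cast_nonneg (α := ℝ) n]
    simp only [hτ]; linarith
  have t2 : ∀ n, τ n < 2 := by
    intro n
    have h2 : 0 < 1 / ((n : ℝ) + 1) := by positivity
    simp only [hτ]; linarith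
  have lim := tendsto_one_div_add_atTop_nhds_zero_nat (𝕜 := ℝ)
  set W := box (-2) 2 A B φ₁ (φ₁ + 2 * π) with hW
  set V : ℕ → Set (ℝ × ℝ × ℝ) := fun n => box (-τ n) (τ n) (A + ε n) (B - ε n) φ₁ (φ₁ + 2 * π) with hV
  have hVW : ∀ n, V n ⊆ W := fun n => box_mono (by linarith [t2 n]) (t2 n).le (by linarith [e0 n])
    (by linarith [e0 n])
  have hcV : ∀ n, cbox (-τ n) (τ n) (A + ε n) (B - ε n) φ₁ (φ₁ + 2 * π) ⊆ Om := fun n =>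
    cbox_sub_Om (by linarith [t2 n]) (t2 n) (by linarith [e0 n]) (by linarith [e0 n])
  have hcov : AECover (volume.restrict W) atTop V := by
    refine ⟨?_, fun n => measurableSet_box⟩
    rw [ae_restrict_iff' measurableSet_box]
    refine Eventually.of_forall ?_
    rintro ⟨t, θ, φ⟩ ⟨⟨a1, a2⟩, ⟨a3, a4⟩, a5⟩
    simp only at a1 a2 a3 a4 a5
    filter_upwards [lim.eventually_lt_const (show 0 < t + 2 by linarith),
      lim.eventually_lt_const (show 0 < 2 - t by linarith),
      lim.eventually_lt_const (show 0 < θ - A by linarith),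
      lim.eventually_lt_const (show 0 < B - θ by linarith)] with n b1 b2 b3 b4
    have := e1 n
    exact ⟨⟨by simp only [hτ]; linarith, by simp only [hτ]; linarith⟩,
      ⟨by simp only; linarith, by simp only; linarith⟩, a5⟩
  set D := (Λ + |c₁|) ^ 2 with hD
  have hD0 : 0 ≤ D := sq_nonneg _
  refine hcov.integrable_of_integral_norm_bounded
    ((π * (2 * π)) * (4 * D) + Real.exp (4 * A₁) * (8 * M ^ 2 * (π * (2 * π)) + 4 * K)) ?_ ?_
  · intro n
    rw [IntegrableOn, Measure.restrict_restrict_of_subset (hVW n)]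
    exact integrableOn_box ((rhsI_cont S c₁ c₂).mono (hcV n))
  · refine Eventually.of_forall fun n => ?_
    rw [Measure.restrict_restrict_of_subset (hVW n)]
    have hH := hardy_box (v := S.v) ((cn_v S).mono (by norm_num)) (c := c₂) (φ₁ := φ₁)
      (φ₂ := φ₁ + 2 * π) (t1 n) (t2 n)
      (show 0 < A + ε n by linarith [e0 n]) (show B - ε n < π by linarith [e0 n])
      (show A + ε n ≤ B - ε n by linarith [e2 n]) (by linarith)
      (M := M) (fun θ hθ φ => (hM 0 ⟨by norm_num, by norm_num⟩ θ
        ⟨by linarith [hθ.1, e0 n], by linarith [hθ.2, e0 n]⟩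
        (abs_lt.2 ⟨by linarith [hθ.1, e0 n], by linarith [hθ.2, e0 n]⟩) φ).1)
    have csin : ContinuousOn (fun p : ℝ × ℝ × ℝ => (Real.sin p.2.1 ^ 3)⁻¹) Om := by
      refine ContinuousOn.inv₀ (cont_sin.pow 3) ?_
      rintro ⟨t, θ, φ⟩ hp
      exact pow_ne_zero _ (sin_pos_Om hp).ne'
    have i1 : IntegrableOn (fun p : ℝ × ℝ × ℝ => (S.v p.1 p.2.1 p.2.2 - c₂) ^ 2 * (Real.sin p.2.1 ^ 3)⁻¹)
        (V n) := by
      refine integrableOn_box (ContinuousOn.mul ?_ (csin.mono (hcV n)))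
      exact (((cn_v S).cont.mono (hcV n)).sub continuousOn_const).pow 2
    have ic : IntegrableOn (fun _ : ℝ × ℝ × ℝ => D) (V n) := integrableOn_box continuousOn_const
    have hc' : cbox (-τ n) (τ n) (ε n) (π - ε n) φ₁ (φ₁ + 2 * π) ⊆ Om :=
      cbox_sub_Om (by linarith [t2 n]) (t2 n) (e0 n) (by linarith [e0 n])
    have i2 : IntegrableOn (fun p : ℝ × ℝ × ℝ => ((τ n ^ 2 - p.1 ^ 2) * cdt S.v p.1 p.2.1 p.2.2) ^ 2
        * (Real.sin p.2.1 ^ 3)⁻¹) (box (-τ n) (τ n) (ε n) (π - ε n) φ₁ (φ₁ + 2 * π)) := by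
      refine integrableOn_box (ContinuousOn.mul (ContinuousOn.pow (ContinuousOn.mul ?_ ?_) 2)
        (csin.mono hc'))
      · fun_prop
      · exact (Cn.dt (n := 2) (cn_v S)).cont.mono hc'
    have hmo : ∫ p in V n, ((τ n ^ 2 - p.1 ^ 2) * cdt S.v p.1 p.2.1 p.2.2) ^ 2
        * (Real.sin p.2.1 ^ 3)⁻¹ ≤ K := by
      refine le_trans (setIntegral_mono_set i2 ?_ ?_) (e3 n)
      · refine (ae_restrict_iff' measurableSet_box).2 (Eventually.of_forall ?_)
        rintro ⟨t, θ, φ⟩ hp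
        have := sin_pos_Om (hc' (box_sub_cbox hp))
        simp only [Pi.zero_apply]
        positivity
      · exact (box_mono le_rfl le_rfl (by linarith) (by linarith)).eventuallyLE
    have mono : ∫ p in V n, ‖rhsI S c₁ c₂ p‖ ≤ ∫ p in V n, (D + Real.exp (4 * A₁) *
        ((S.v p.1 p.2.1 p.2.2 - c₂) ^ 2 * (Real.sin p.2.1 ^ 3)⁻¹)) := by
      refine setIntegral_mono_on
        (integrableOn_box ((rhsI_cont S c₁ c₂).norm.mono (hcV n))) (ic.add (i1.const_mul _))
        measurableSet_box ?_
      rintro ⟨t, θ, φ⟩ hp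
      have hO := hcV n (box_sub_cbox hp)
      have hs := sin_pos_Om hO
      have hs1 := Real.sin_le_one θ
      rw [Real.norm_eq_abs, abs_of_nonneg (rhsI_nonneg S c₁ c₂ hO)]
      unfold rhsI
      simp only
      rw [add_mul]
      have k1 : (S.Φ t θ φ - c₁) ^ 2 * Real.sin θ ≤ D := by
        have : |S.Φ t θ φ - c₁| ≤ Λ + |c₁| := (abs_sub _ _).trans (by linarith [bdP S hO])
        have h2 : |S.Φ t θ φ - c₁| ^ 2 ≤ (Λ + |c₁|) ^ 2 := by gcongr
        rw [sq_abs] at h2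
        calc _ ≤ D * 1 := by gcongr
          _ = D := mul_one _
      have k2 : (R.ω t θ φ ^ 4)⁻¹ * (S.v t θ φ - c₂) ^ 2 * Real.sin θ
          ≤ Real.exp (4 * A₁) * ((S.v t θ φ - c₂) ^ 2 * (Real.sin θ ^ 3)⁻¹) := by
        calc _ ≤ (Real.exp (4 * A₁) * (Real.sin θ ^ 4)⁻¹) * (S.v t θ φ - c₂) ^ 2 * Real.sin θ := by
              have := om_le R hO
              gcongr
          _ = _ := by field_simp
      linarith
    rw [integral_add ic (i1.const_mul _), integral_const_mul,
      box_const (by linarith [t1 n]) (by linarith [e2 n]) (by linarith)] at mono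
    refine mono.trans ?_
    have w : (B - ε n - (A + ε n)) * (φ₁ + 2 * π - φ₁) ≤ π * (2 * π) := by
      have : B - ε n - (A + ε n) ≤ π := by linarith [e0 n]
      rw [add_sub_cancel_left]
      gcongr
    have w2 : (τ n - -τ n) * D ≤ 4 * D := by
      have := t2 n
      gcongr
      linarith
    have w3 : 0 ≤ (τ n - -τ n) * D := mul_nonneg (by linarith [t1 n]) hD0
    have w4 : 8 * M ^ 2 * ((B - ε n - (A + ε n)) * (φ₁ + 2 * π - φ₁)) ≤ 8 * M ^ 2 * (π * (2 * π)) := by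
      gcongr
    have w5 : (B - ε n - (A + ε n)) * (φ₁ + 2 * π - φ₁) * ((τ n - -τ n) * D)
        ≤ (π * (2 * π)) * (4 * D) := by gcongr
    refine add_le_add w5 ?_
    gcongr
    exact hH.trans (add_le_add w4 (by linarith))

end integ
end

noncomputable section

/-! ### The cutoff function -/

/-- cosine of the distance to the center -/
def yy (θ₀ φ₀ θ φ : ℝ) : ℝ :=
  Real.cos θ * Real.cos θ₀ + Real.sin θ * Real.sin θ₀ * Real.cos (φ - φ₀)

lemma yy_le {θ₀ φ₀ θ φ : ℝ} (h1 : θ ∈ Icc 0 π) (h2 : θ₀ ∈ Icc 0 π) :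
    yy θ₀ φ₀ θ φ ≤ Real.cos (θ - θ₀) := by
  have s1 := Real.sin_nonneg_of_nonneg_of_le_pi h1.1 h1.2
  have s2 := Real.sin_nonneg_of_nonneg_of_le_pi h2.1 h2.2
  have c := Real.cos_le_one (φ - φ₀)
  rw [Real.cos_sub, yy]
  have : Real.sin θ * Real.sin θ₀ * Real.cos (φ - φ₀) ≤ Real.sin θ * Real.sin θ₀ * 1 := by gcongr
  linarith

lemma le_yy {θ₀ φ₀ θ φ : ℝ} (h1 : θ ∈ Icc 0 π) (h2 : θ₀ ∈ Icc 0 π) :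
    -1 ≤ yy θ₀ φ₀ θ φ := by
  have s1 := Real.sin_nonneg_of_nonneg_of_le_pi h1.1 h1.2
  have s2 := Real.sin_nonneg_of_nonneg_of_le_pi h2.1 h2.2
  have c := Real.neg_one_le_cos (φ - φ₀)
  have e := Real.neg_one_le_cos (θ + θ₀)
  rw [Real.cos_add] at e
  rw [yy]
  have : Real.sin θ * Real.sin θ₀ * (-1) ≤ Real.sin θ * Real.sin θ₀ * Real.cos (φ - φ₀) := by gcongr
  linarith

lemma sDist_lt {θ₀ φ₀ θ φ r : ℝ} (h1 : θ ∈ Icc 0 π) (h2 : θ₀ ∈ Icc 0 π) (hr : 0 ≤ r) (hr' : r ≤ π) :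
    sDist θ φ θ₀ φ₀ < r ↔ Real.cos r < yy θ₀ φ₀ θ φ := by
  have a1 := (yy_le (φ₀ := φ₀) (φ := φ) h1 h2).trans (Real.cos_le_one _)
  have a2 := le_yy (φ₀ := φ₀) (φ := φ) h1 h2
  have e : sDist θ φ θ₀ φ₀ = Real.arccos (yy θ₀ φ₀ θ φ) := rfl
  rw [e]
  constructor
  · intro h
    have := Real.strictAntiOn_cos ⟨Real.arccos_nonneg _, Real.arccos_le_pi _⟩ ⟨hr, hr'⟩ h
    rwa [Real.cos_arccos a2 a1] at this
  · intro h
    have := Real.strictAntiOn_arccos ⟨Real.neg_one_le_cos r, Real.cos_le_one r⟩ ⟨a2, a1⟩ h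
    rwa [Real.arccos_cos hr hr'] at this

lemma mem_Q {t₀ θ₀ φ₀ r t θ φ : ℝ} (h2 : θ₀ ∈ Icc 0 π) (hr : 0 ≤ r) (hr' : r ≤ π) :
    (t, θ, φ) ∈ Qset t₀ θ₀ φ₀ r ↔ t ∈ Ioo (t₀ - r) (t₀ + r) ∧ θ ∈ Ioo 0 π ∧
      φ ∈ Ioo (φ₀ - π) (φ₀ + π) ∧ Real.cos r < yy θ₀ φ₀ θ φ := by
  unfold Qset
  simp only [Set.mem_ofPred_eq]
  constructor
  · rintro ⟨a, b, c, d⟩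
    exact ⟨a, b, c, (sDist_lt (Ioo_subset_Icc_self b) h2 hr hr').1 d⟩
  · rintro ⟨a, b, c, d⟩
    exact ⟨a, b, c, (sDist_lt (Ioo_subset_Icc_self b) h2 hr hr').2 d⟩

lemma yy_close {θ₀ φ₀ θ φ r : ℝ} (h1 : θ ∈ Icc 0 π) (h2 : θ₀ ∈ Icc 0 π) (hr : 0 ≤ r)
    (h : Real.cos r < yy θ₀ φ₀ θ φ) : |θ - θ₀| < r := by
  by_contra hc
  rw [not_lt] at hc
  have h3 := h.trans_le (yy_le h1 h2)
  rw [← Real.cos_abs (θ - θ₀)] at h3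
  have : |θ - θ₀| ≤ π := abs_le.2 ⟨by linarith [h1.1, h2.2], by linarith [h1.2, h2.1]⟩
  exact absurd (Real.cos_le_cos_of_nonneg_of_le_pi hr this hc) (not_le.2 h3)

lemma isOpen_Qset (t₀ θ₀ φ₀ r : ℝ) : IsOpen (Qset t₀ θ₀ φ₀ r) := by
  have hc : Continuous (fun p : ℝ × ℝ × ℝ => sDist p.2.1 p.2.2 θ₀ φ₀) := by
    unfold sDist
    exact Real.continuous_arccos.comp (by fun_prop)
  exact IsOpen.inter (isOpen_Ioo.preimage continuous_fst) (IsOpen.inter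
    (isOpen_Ioo.preimage (continuous_fst.comp continuous_snd)) (IsOpen.inter
    (isOpen_Ioo.preimage (continuous_snd.comp continuous_snd)) (isOpen_Iio.preimage hc)))

/-! smooth transition -/

lemma chi_deriv : ∃ B : ℝ, 0 < B ∧ ∀ x, |deriv Real.smoothTransition x| ≤ B := by
  have hc : Continuous (deriv Real.smoothTransition) :=
    (Real.smoothTransition.contDiff (n := 1)).continuous_deriv le_rfl
  obtain ⟨B, hB⟩ := (isCompact_Icc (a := (0:ℝ)) (b := 1)).exists_bound_of_continuousOn hc.continuousOn
  refine ⟨|B| + 1, by positivity, fun x => ?_⟩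
  by_cases hx : x ∈ Icc (0:ℝ) 1
  · exact ((hB x hx).trans (le_abs_self B)).trans (by linarith)
  · have : deriv Real.smoothTransition x = 0 := by
      rw [mem_Icc, not_and_or, not_le, not_le] at hx
      rcases hx with hx | hx
      · have : Real.smoothTransition =ᶠ[nhds x] fun _ => 0 := by
          filter_upwards [Iio_mem_nhds hx] with y hy
          exact Real.smoothTransition.zero_of_nonpos (le_of_lt hy)
        rw [this.deriv_eq]; simp
      · have : Real.smoothTransition =ᶠ[nhds x] fun _ => 1 := by
          filter_upwards [Ioi_mem_nhds hx] with y hy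
          exact Real.smoothTransition.one_of_one_le (le_of_lt hy)
        rw [this.deriv_eq]; simp
    rw [this, abs_zero]; positivity

lemma chi_deriv_nonpos {x : ℝ} (hx : x ≤ 0) : deriv Real.smoothTransition x = 0 := by
  apply IsLocalMin.deriv_eq_zero
  refine Eventually.of_forall fun y => ?_
  rw [Real.smoothTransition.zero_of_nonpos hx]
  exact Real.smoothTransition.nonneg y

lemma chi_deriv_one {x : ℝ} (hx : 1 ≤ x) : deriv Real.smoothTransition x = 0 := by
  apply IsLocalMax.deriv_eq_zero
  refine Eventually.of_forall fun y => ?_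
  rw [Real.smoothTransition.one_of_one_le hx]
  exact Real.smoothTransition.le_one y

lemma chi_hd (x : ℝ) : HasDerivAt Real.smoothTransition (deriv Real.smoothTransition x) x :=
  (((Real.smoothTransition.contDiff (n := 1)).differentiable one_ne_zero) x).hasDerivAt

/-- the cutoff -/
def cut (t₀ θ₀ φ₀ δ : ℝ) : ℝ → ℝ → ℝ → ℝ := fun t θ φ =>
  Real.smoothTransition ((9 / 16 * δ ^ 2 - (t - t₀) ^ 2) / (5 / 16 * δ ^ 2)) *
  Real.smoothTransition ((yy θ₀ φ₀ θ φ - Real.cos δ) / (Real.cos (δ / 2) - Real.cos δ))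

lemma cos_gap {δ : ℝ} (h0 : 0 < δ) (h1 : δ < 1 / 2) : δ ^ 2 / 10 ≤ Real.cos (δ / 2) - Real.cos δ := by
  have p3 := Real.pi_gt_three
  have p4 := Real.pi_lt_d2
  have e : Real.cos (δ / 2) - Real.cos δ = 2 * Real.sin (3 / 4 * δ) * Real.sin (δ / 4) := by
    rw [Real.cos_sub_cos]
    rw [show (δ / 2 + δ) / 2 = 3 / 4 * δ by ring, show (δ / 2 - δ) / 2 = -(δ / 4) by ring, Real.sin_neg]
    ring
  have s1 := Real.mul_le_sin (x := 3 / 4 * δ) (by linarith) (by linarith)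
  have s2 := Real.mul_le_sin (x := δ / 4) (by linarith) (by linarith)
  have k : 0.6 ≤ 2 / π := by rw [le_div_iff₀ Real.pi_pos]; linarith
  have s1' : 0.6 * (3 / 4 * δ) ≤ Real.sin (3 / 4 * δ) := le_trans (by gcongr) s1
  have s2' : 0.6 * (δ / 4) ≤ Real.sin (δ / 4) := le_trans (by gcongr) s2
  rw [e]
  calc δ ^ 2 / 10 ≤ 2 * (0.6 * (3 / 4 * δ)) * (0.6 * (δ / 4)) := by nlinarith [sq_nonneg δ]
    _ ≤ _ := by
      have : 0 ≤ 0.6 * (3 / 4 * δ) := by positivity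
      have h2 : 0 ≤ 2 * Real.sin (3 / 4 * δ) := by linarith
      gcongr

section cutoff
variable {t₀ θ₀ φ₀ δ t θ φ : ℝ}

lemma cut_contDiff : ContDiff ℝ 1 (unc (cut t₀ θ₀ φ₀ δ)) := by
  unfold unc cut yy
  refine ContDiff.mul ?_ ?_
  · exact Real.smoothTransition.contDiff.comp (by fun_prop)
  · refine Real.smoothTransition.contDiff.comp (ContDiff.div_const (ContDiff.sub ?_ contDiff_const) _)
    refine ContDiff.add (ContDiff.mul ?_ contDiff_const) (ContDiff.mul (ContDiff.mul ?_ contDiff_const) ?_)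
    · exact Real.contDiff_cos.comp (by fun_prop)
    · exact Real.contDiff_sin.comp (by fun_prop)
    · exact Real.contDiff_cos.comp (by fun_prop)

lemma cut_per : cut t₀ θ₀ φ₀ δ t θ (φ + 2 * π) = cut t₀ θ₀ φ₀ δ t θ φ := by
  unfold cut yy
  rw [show φ + 2 * π - φ₀ = φ - φ₀ + 2 * π by ring, Real.cos_add_two_pi]

lemma cut_nonneg : 0 ≤ cut t₀ θ₀ φ₀ δ t θ φ :=
  mul_nonneg (Real.smoothTransition.nonneg _) (Real.smoothTransition.nonneg _)

lemma cut_le_one : cut t₀ θ₀ φ₀ δ t θ φ ≤ 1 :=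
  mul_le_one₀ (Real.smoothTransition.le_one _) (Real.smoothTransition.nonneg _)
    (Real.smoothTransition.le_one _)

lemma cut_t1 : cut t₀ θ₀ φ₀ δ (t₀ - 3 / 4 * δ) θ φ = 0 := by
  unfold cut
  rw [show 9 / 16 * δ ^ 2 - (t₀ - 3 / 4 * δ - t₀) ^ 2 = 0 by ring, zero_div,
    Real.smoothTransition.zero, zero_mul]

lemma cut_t2 : cut t₀ θ₀ φ₀ δ (t₀ + 3 / 4 * δ) θ φ = 0 := by
  unfold cut
  rw [show 9 / 16 * δ ^ 2 - (t₀ + 3 / 4 * δ - t₀) ^ 2 = 0 by ring, zero_div,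
    Real.smoothTransition.zero, zero_mul]

lemma cut_ne (h0 : 0 < δ) (h1 : δ < 1 / 2) (h : cut t₀ θ₀ φ₀ δ t θ φ ≠ 0) :
    Real.cos δ < yy θ₀ φ₀ θ φ := by
  by_contra hc
  rw [not_lt] at hc
  apply h
  unfold cut
  have g : 0 < Real.cos (δ / 2) - Real.cos δ := lt_of_lt_of_le (by positivity) (cos_gap h0 h1)
  rw [Real.smoothTransition.zero_of_nonpos (x := (yy θ₀ φ₀ θ φ - Real.cos δ) / _)
    (div_nonpos_of_nonpos_of_nonneg (by linarith) g.le), mul_zero]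

lemma a_ge (h0 : 0 < δ) (ht : t ∈ Ioo (t₀ - δ / 2) (t₀ + δ / 2)) :
    1 ≤ (9 / 16 * δ ^ 2 - (t - t₀) ^ 2) / (5 / 16 * δ ^ 2) := by
  rw [le_div_iff₀ (by positivity)]
  nlinarith [ht.1, ht.2]

lemma b_ge (h0 : 0 < δ) (h1 : δ < 1 / 2) (h : Real.cos (δ / 2) < yy θ₀ φ₀ θ φ) :
    1 ≤ (yy θ₀ φ₀ θ φ - Real.cos δ) / (Real.cos (δ / 2) - Real.cos δ) := by
  have g : 0 < Real.cos (δ / 2) - Real.cos δ := lt_of_lt_of_le (by positivity) (cos_gap h0 h1)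
  rw [le_div_iff₀ g]; linarith

lemma cut_grad (hs : 0 < Real.sin θ) :
    cgradNormSq (cut t₀ θ₀ φ₀ δ) t θ φ =
      (deriv Real.smoothTransition ((9 / 16 * δ ^ 2 - (t - t₀) ^ 2) / (5 / 16 * δ ^ 2))
        * (-(2 * (t - t₀)) / (5 / 16 * δ ^ 2)) *
        Real.smoothTransition ((yy θ₀ φ₀ θ φ - Real.cos δ) / (Real.cos (δ / 2) - Real.cos δ))) ^ 2
      + (Real.smoothTransition ((9 / 16 * δ ^ 2 - (t - t₀) ^ 2) / (5 / 16 * δ ^ 2)) *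
        deriv Real.smoothTransition ((yy θ₀ φ₀ θ φ - Real.cos δ) / (Real.cos (δ / 2) - Real.cos δ))
        / (Real.cos (δ / 2) - Real.cos δ)) ^ 2 * (1 - yy θ₀ φ₀ θ φ ^ 2) := by
  have d1 : cdt (cut t₀ θ₀ φ₀ δ) t θ φ =
      deriv Real.smoothTransition ((9 / 16 * δ ^ 2 - (t - t₀) ^ 2) / (5 / 16 * δ ^ 2)) * (-(2 * (t - t₀)) / (5 / 16 * δ ^ 2)) *
      Real.smoothTransition ((yy θ₀ φ₀ θ φ - Real.cos δ) / (Real.cos (δ / 2) - Real.cos δ)) := by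
    have h : HasDerivAt (fun t => (9 / 16 * δ ^ 2 - (t - t₀) ^ 2) / (5 / 16 * δ ^ 2))
        (-(2 * (t - t₀)) / (5 / 16 * δ ^ 2)) t := by
      have := (((((hasDerivAt_id t).sub_const t₀).pow 2).const_sub (9 / 16 * δ ^ 2)).div_const
        (5 / 16 * δ ^ 2))
      refine this.congr_deriv ?_
      simp
    exact (((chi_hd _).comp t h).mul_const _).deriv
  have d2 : cdθ (cut t₀ θ₀ φ₀ δ) t θ φ =
      Real.smoothTransition ((9 / 16 * δ ^ 2 - (t - t₀) ^ 2) / (5 / 16 * δ ^ 2)) * (deriv Real.smoothTransition ((yy θ₀ φ₀ θ φ - Real.cos δ) / (Real.cos (δ / 2) - Real.cos δ)) *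
      ((-Real.sin θ * Real.cos θ₀ + Real.cos θ * Real.sin θ₀ * Real.cos (φ - φ₀))
          / (Real.cos (δ / 2) - Real.cos δ))) := by
    have h : HasDerivAt (fun θ => (yy θ₀ φ₀ θ φ - Real.cos δ) / (Real.cos (δ / 2) - Real.cos δ))
        ((-Real.sin θ * Real.cos θ₀ + Real.cos θ * Real.sin θ₀ * Real.cos (φ - φ₀))
          / (Real.cos (δ / 2) - Real.cos δ)) θ := by
      exact (((((Real.hasDerivAt_cos θ).mul_const _).add
        (((Real.hasDerivAt_sin θ).mul_const _).mul_const _)).sub_const _).div_const _)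
    exact (((chi_hd _).comp θ h).const_mul _).deriv
  have d3 : cdφ (cut t₀ θ₀ φ₀ δ) t θ φ =
      Real.smoothTransition ((9 / 16 * δ ^ 2 - (t - t₀) ^ 2) / (5 / 16 * δ ^ 2)) * (deriv Real.smoothTransition ((yy θ₀ φ₀ θ φ - Real.cos δ) / (Real.cos (δ / 2) - Real.cos δ)) *
      ((Real.sin θ * Real.sin θ₀ * -Real.sin (φ - φ₀))
          / (Real.cos (δ / 2) - Real.cos δ))) := by
    have h : HasDerivAt (fun φ => (yy θ₀ φ₀ θ φ - Real.cos δ) / (Real.cos (δ / 2) - Real.cos δ))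
        ((Real.sin θ * Real.sin θ₀ * -Real.sin (φ - φ₀))
          / (Real.cos (δ / 2) - Real.cos δ)) φ := by
      have h1 : HasDerivAt (fun φ => Real.cos (φ - φ₀)) (-Real.sin (φ - φ₀)) φ := by
        have := (Real.hasDerivAt_cos (φ - φ₀)).comp φ ((hasDerivAt_id φ).sub_const φ₀)
        exact this.congr_deriv (by simp)
      exact (((h1.const_mul _).const_add _).sub_const _).div_const _
    exact (((chi_hd _).comp φ h).const_mul _).deriv
  have e : cgradNormSq (cut t₀ θ₀ φ₀ δ) t θ φ = cdt (cut t₀ θ₀ φ₀ δ) t θ φ ^ 2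
      + cdθ (cut t₀ θ₀ φ₀ δ) t θ φ ^ 2
      + (Real.sin θ ^ 2)⁻¹ * cdφ (cut t₀ θ₀ φ₀ δ) t θ φ ^ 2 := by
    simp only [cgradNormSq, cgradDot, gradDotS2, cdθ, cdφ]
    ring
  have id1 : (-Real.sin θ * Real.cos θ₀ + Real.cos θ * Real.sin θ₀ * Real.cos (φ - φ₀)) ^ 2
      + (Real.sin θ₀ * Real.sin (φ - φ₀)) ^ 2 = 1 - yy θ₀ φ₀ θ φ ^ 2 := by
    unfold yy
    have a1 := Real.sin_sq_add_cos_sq θ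
    have a2 := Real.sin_sq_add_cos_sq θ₀
    have a3 := Real.sin_sq_add_cos_sq (φ - φ₀)
    generalize Real.sin θ = x1 at *
    generalize Real.cos θ = y1 at *
    generalize Real.sin θ₀ = x2 at *
    generalize Real.cos θ₀ = y2 at *
    generalize Real.sin (φ - φ₀) = x3 at *
    generalize Real.cos (φ - φ₀) = y3 at *
    linear_combination (y2 ^ 2 + x2 ^ 2 * y3 ^ 2) * a1 + a2 + x2 ^ 2 * a3
  rw [e, d1, d2, d3, ← id1]
  generalize Real.cos (δ / 2) - Real.cos δ = m
  field_simp
  ring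

lemma cut_grad_zero (h0 : 0 < δ) (h1 : δ < 1 / 2) (h2 : θ₀ ∈ Icc 0 π)
    (hp : (t, θ, φ) ∈ box (t₀ - 3 / 4 * δ) (t₀ + 3 / 4 * δ) 0 π (φ₀ - π) (φ₀ + π))
    (hn : (t, θ, φ) ∉ Qset t₀ θ₀ φ₀ δ \ Qset t₀ θ₀ φ₀ (δ / 2)) :
    cgradNormSq (cut t₀ θ₀ φ₀ δ) t θ φ = 0 := by
  have p3 := Real.pi_gt_three
  have hθ : θ ∈ Ioo 0 π := hp.2.1
  have hφ : φ ∈ Ioo (φ₀ - π) (φ₀ + π) := hp.2.2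
  have ht : t ∈ Ioo (t₀ - 3 / 4 * δ) (t₀ + 3 / 4 * δ) := hp.1
  have hs : 0 < Real.sin θ := Real.sin_pos_of_pos_of_lt_pi hθ.1 hθ.2
  have g : 0 < Real.cos (δ / 2) - Real.cos δ := lt_of_lt_of_le (by positivity) (cos_gap h0 h1)
  rw [cut_grad hs]
  by_cases hy : Real.cos δ < yy θ₀ φ₀ θ φ
  · have hQ : (t, θ, φ) ∈ Qset t₀ θ₀ φ₀ δ :=
      (mem_Q h2 h0.le (by linarith)).2 ⟨⟨by linarith [ht.1], by linarith [ht.2]⟩, hθ, hφ, hy⟩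
    have hQ2 : (t, θ, φ) ∈ Qset t₀ θ₀ φ₀ (δ / 2) := by
      by_contra h; exact hn ⟨hQ, h⟩
    have hQ3 := (mem_Q h2 (by linarith) (by linarith)).1 hQ2
    rw [chi_deriv_one (a_ge h0 hQ3.1), chi_deriv_one (b_ge h0 h1 hQ3.2.2.2)]
    simp
  · have : (yy θ₀ φ₀ θ φ - Real.cos δ) / (Real.cos (δ / 2) - Real.cos δ) ≤ 0 :=
      div_nonpos_of_nonpos_of_nonneg (by linarith) g.le
    rw [chi_deriv_nonpos this, Real.smoothTransition.zero_of_nonpos this]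
    simp

lemma cut_grad_le {B : ℝ} (hB : ∀ x, |deriv Real.smoothTransition x| ≤ B)
    (h0 : 0 < δ) (h1 : δ < 1 / 2)
    (ht : t ∈ Ioo (t₀ - 3 / 4 * δ) (t₀ + 3 / 4 * δ)) (hθ : θ ∈ Ioo 0 π) :
    cgradNormSq (cut t₀ θ₀ φ₀ δ) t θ φ ≤ 125 * B ^ 2 / δ ^ 2 := by
  have p3 := Real.pi_gt_three
  have hs : 0 < Real.sin θ := Real.sin_pos_of_pos_of_lt_pi hθ.1 hθ.2
  have hg := cos_gap h0 h1
  have g : 0 < Real.cos (δ / 2) - Real.cos δ := lt_of_lt_of_le (by positivity) hg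
  have hB0 : 0 ≤ B := (abs_nonneg _).trans (hB 0)
  rw [cut_grad hs]
  set x := (9 / 16 * δ ^ 2 - (t - t₀) ^ 2) / (5 / 16 * δ ^ 2)
  set z := (yy θ₀ φ₀ θ φ - Real.cos δ) / (Real.cos (δ / 2) - Real.cos δ) with hz
  have x1 : |Real.smoothTransition x| ≤ 1 := by
    rw [abs_of_nonneg (Real.smoothTransition.nonneg _)]; exact Real.smoothTransition.le_one _
  have z1 : |Real.smoothTransition z| ≤ 1 := by
    rw [abs_of_nonneg (Real.smoothTransition.nonneg _)]; exact Real.smoothTransition.le_one _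
  have k1 : (deriv Real.smoothTransition x * (-(2 * (t - t₀)) / (5 / 16 * δ ^ 2)) *
      Real.smoothTransition z) ^ 2 ≤ 25 * B ^ 2 / δ ^ 2 := by
    have : |-(2 * (t - t₀)) / (5 / 16 * δ ^ 2)| ≤ 5 / δ := by
      rw [abs_div, abs_neg, abs_of_pos (show 0 < 5 / 16 * δ ^ 2 by positivity), div_le_div_iff₀ (by positivity) h0]
      have : |2 * (t - t₀)| ≤ 2 * (3 / 4 * δ) := by
        rw [abs_le]; constructor <;> linarith [ht.1, ht.2]
      calc _ ≤ 2 * (3 / 4 * δ) * δ := by gcongr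
        _ ≤ _ := by nlinarith [sq_nonneg δ]
    rw [← sq_abs, abs_mul, abs_mul]
    calc _ ≤ (B * (5 / δ) * 1) ^ 2 := by
          have := hB x
          gcongr
      _ = _ := by field_simp; ring
  have k2 : (Real.smoothTransition x * deriv Real.smoothTransition z
        / (Real.cos (δ / 2) - Real.cos δ)) ^ 2 * (1 - yy θ₀ φ₀ θ φ ^ 2) ≤ 100 * B ^ 2 / δ ^ 2 := by
    by_cases hy : Real.cos δ < yy θ₀ φ₀ θ φ
    · have c0 : 0 < Real.cos δ := Real.cos_pos_of_mem_Ioo ⟨by linarith, by linarith⟩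
      have w : 1 - yy θ₀ φ₀ θ φ ^ 2 ≤ δ ^ 2 := by
        have h := Real.sin_sq_add_cos_sq δ
        have h3 := Real.sin_le h0.le
        have h4 : 0 ≤ Real.sin δ := Real.sin_nonneg_of_nonneg_of_le_pi h0.le (by linarith)
        nlinarith
      rw [← sq_abs, abs_div, abs_mul, abs_of_pos g]
      refine (mul_le_mul_of_nonneg_left w (sq_nonneg _)).trans ?_
      calc _ ≤ (1 * B / (δ ^ 2 / 10)) ^ 2 * δ ^ 2 := by
            have := hB z
            gcongr
        _ = _ := by field_simp; ring
    · have : z ≤ 0 := div_nonpos_of_nonpos_of_nonneg (by linarith) g.le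
      rw [chi_deriv_nonpos this]
      simp
      positivity
  calc _ ≤ 25 * B ^ 2 / δ ^ 2 + 100 * B ^ 2 / δ ^ 2 := add_le_add k1 k2
    _ = _ := by ring

lemma cut_one (h0 : 0 < δ) (h1 : δ < 1 / 2) (h2 : θ₀ ∈ Icc 0 π)
    (hp : (t, θ, φ) ∈ Qset t₀ θ₀ φ₀ (δ / 2)) : cut t₀ θ₀ φ₀ δ t θ φ = 1 := by
  have p3 := Real.pi_gt_three
  have h := (mem_Q h2 (by linarith) (by linarith)).1 hp
  unfold cut
  rw [Real.smoothTransition.one_of_one_le (a_ge h0 h.1),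
    Real.smoothTransition.one_of_one_le (b_ge h0 h1 h.2.2.2), one_mul]

end cutoff
end

noncomputable section

section assembly
variable {A₁ Λ a : ℝ} {R : Renormalizer (Ioo (-2) 2) A₁}

/-- left-hand integrand -/
def lhsI (S : RHMSolution (Ioo (-2) 2) A₁ R Λ a) (p : ℝ × ℝ × ℝ) : ℝ :=
  (cgradNormSq S.Φ p.1 p.2.1 p.2.2
    + Real.exp (4 * (S.Φ p.1 p.2.1 p.2.2 - Real.log (R.ω p.1 p.2.1 p.2.2)))
      * cgradNormSq S.v p.1 p.2.1 p.2.2) * Real.sin p.2.1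

lemma lhsI_cont (S : RHMSolution (Ioo (-2) 2) A₁ R Λ a) : ContinuousOn (lhsI S) Om :=
  ((cont_gns ((cn_P S).mono (by norm_num))).add
    ((cont_exp_lw R S).mul (cont_gns ((cn_v S).mono (by norm_num))))).mul cont_sin

lemma lhsI_nonneg (S : RHMSolution (Ioo (-2) 2) A₁ R Λ a) {p : ℝ × ℝ × ℝ}
    (hp : p ∈ Om) : 0 ≤ lhsI S p := by
  obtain ⟨t, θ, φ⟩ := p
  have h1 := sin_pos_Om hp
  have h2 := cgradNormSq_nonneg S.Φ t θ φ
  have h3 := cgradNormSq_nonneg S.v t θ φ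
  unfold lhsI
  positivity

lemma cn_EE (S : RHMSolution (Ioo (-2) 2) A₁ R Λ a) (c₁ c₂ : ℝ) :
    Cn 2 (EE c₁ c₂ S.Φ (lw R) S.v) := by
  have hP : ContDiffOn ℝ (2 : ℕ) (unc S.Φ) Om := (cn_P S).mono (by norm_num)
  have hv : ContDiffOn ℝ (2 : ℕ) (unc S.v) Om := (cn_v S).mono (by norm_num)
  have hl : ContDiffOn ℝ (2 : ℕ) (unc (lw R)) Om := cn_lw R 2
  have hch : ContDiff ℝ (2 : ℕ) Real.cosh := Real.contDiff_cosh
  have h1 : ContDiffOn ℝ (2 : ℕ) (fun p => Real.cosh (2 * (unc S.Φ p - c₁))) Om :=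
    hch.comp_contDiffOn (contDiffOn_const.mul (hP.sub contDiffOn_const))
  have h2 : ContDiffOn ℝ (2 : ℕ)
      (fun p => Real.exp (2 * unc S.Φ p + 2 * c₁ - 4 * unc (lw R) p)) Om :=
    (((contDiffOn_const.mul hP).add contDiffOn_const).sub (contDiffOn_const.mul hl)).exp
  have h3 : ContDiffOn ℝ (2 : ℕ) (fun p => (unc S.v p - c₂) ^ 2) Om :=
    (hv.sub contDiffOn_const).pow 2
  exact h1.add ((contDiffOn_const.mul h2).mul h3)

lemma abs_sinh_le {x b : ℝ} (h : |x| ≤ b) : |Real.sinh x| ≤ Real.exp b := by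
  rw [Real.sinh_eq]
  have h1 := abs_le.1 h
  have e1 : Real.exp x ≤ Real.exp b := Real.exp_le_exp.2 h1.2
  have e2 : Real.exp (-x) ≤ Real.exp b := Real.exp_le_exp.2 (by linarith)
  have p1 := Real.exp_pos x
  have p2 := Real.exp_pos (-x)
  rw [abs_le]; constructor <;> linarith

/-- algebraic bound of the normal derivative -/
lemma E1_bd {S X P1 l1 q q1 s e G N A M : ℝ} (hs : 0 < s) (hs1 : s ≤ 1)
    (hS : |S| ≤ e) (hX0 : 0 ≤ X) (hX : X ≤ G * (s ^ 4)⁻¹) (hP : |P1| ≤ N)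
    (hl : |l1| ≤ A + s⁻¹) (hq : |q| ≤ M * s ^ 3) (hq1 : |q1| ≤ M * s ^ 2) (hM : 0 ≤ M)
    (hG : 0 ≤ G) (hA : 0 ≤ A) :
    |E1 S X P1 l1 q q1| ≤ 2 * e * N + 2 * (G * (M ^ 2 * (2 * N + 4 * A + 6))) := by
  have hN : 0 ≤ N := (abs_nonneg _).trans hP
  have he : 0 ≤ e := (abs_nonneg _).trans hS
  have b1 : |2 * S * P1| ≤ 2 * e * N := by
    rw [abs_mul, abs_mul, abs_of_pos (by norm_num : (0:ℝ) < 2)]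
    gcongr
  have b2 : |(2 * P1 - 4 * l1) * q ^ 2 + 2 * q * q1|
      ≤ (2 * N + 4 * (A + s⁻¹)) * (M * s ^ 3) ^ 2 + 2 * (M * s ^ 3) * (M * s ^ 2) := by
    have k : |2 * P1 - 4 * l1| ≤ 2 * N + 4 * (A + s⁻¹) := by
      have h1 := abs_le.1 hP
      have h2 := abs_le.1 hl
      rw [abs_le]; constructor <;> linarith [h1.1, h1.2, h2.1, h2.2]
    refine (abs_add_le _ _).trans ?_
    rw [abs_mul, abs_mul, abs_mul, abs_pow, abs_of_pos (by norm_num : (0:ℝ) < 2)]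
    gcongr
  have b3 : |2 * X * ((2 * P1 - 4 * l1) * q ^ 2 + 2 * q * q1)|
      ≤ 2 * (G * (M ^ 2 * (2 * N + 4 * A + 6))) := by
    rw [abs_mul, abs_mul, abs_of_pos (by norm_num : (0:ℝ) < 2), abs_of_nonneg hX0, mul_assoc]
    refine mul_le_mul_of_nonneg_left ?_ (by norm_num)
    refine (mul_le_mul hX b2 (abs_nonneg _) (by positivity)).trans ?_
    have e1 : G * (s ^ 4)⁻¹ * ((2 * N + 4 * (A + s⁻¹)) * (M * s ^ 3) ^ 2
        + 2 * (M * s ^ 3) * (M * s ^ 2))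
        = G * (M ^ 2 * ((2 * N + 4 * A) * s ^ 2 + 6 * s)) := by
      field_simp
      ring
    rw [e1]
    have s2 : s ^ 2 ≤ 1 := pow_le_one₀ hs.le hs1
    have : (2 * N + 4 * A) * s ^ 2 + 6 * s ≤ (2 * N + 4 * A) * 1 + 6 * 1 := by gcongr
    have : (2 * N + 4 * A) * s ^ 2 + 6 * s ≤ 2 * N + 4 * A + 6 := by linarith
    gcongr
  unfold E1
  exact (abs_add_le _ _).trans (add_le_add b1 b3)

lemma bdry (S : RHMSolution (Ioo (-2) 2) A₁ R Λ a) {t₀ θ₀ φ₀ δ c₁ c₂ : ℝ} (h0 : 0 < δ)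
    (h1 : δ < 1 / 2) (hθ₀ : θ₀ ∈ Icc 0 π) (hc : |c₁| ≤ Λ)
    (ht1 : -2 < t₀ - 3 / 4 * δ) (ht2 : t₀ + 3 / 4 * δ < 2)
    (hcN : θ₀ < 2 * δ → c₂ = a) (hcS : π - θ₀ < 2 * δ → c₂ = -a) :
    ∃ K : ℝ, ∀ t ∈ Ioo (t₀ - 3 / 4 * δ) (t₀ + 3 / 4 * δ), ∀ θ ∈ Ioo 0 π, ∀ φ,
      |cut t₀ θ₀ φ₀ δ t θ φ ^ 2 * (Real.exp (-t) * Real.sin θ) *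
        cdθ (EE c₁ c₂ S.Φ (lw R) S.v) t θ φ| ≤ K * Real.sin θ := by
  set s := max |t₀ - 3 / 4 * δ| |t₀ + 3 / 4 * δ| with hsd
  have hs : s < 2 := max_lt (abs_lt.2 ⟨by linarith, by linarith⟩) (abs_lt.2 ⟨by linarith, by linarith⟩)
  obtain ⟨M, hM, hv⟩ := master_S S h0 hcN hcS hs
  obtain ⟨N, hN, hP⟩ := c1_bound (regP' S) S.periodicΦ hs
  have hA := R.A₁_ge
  set K' := 2 * Real.exp (4 * Λ) * N
    + 2 * (Real.exp (4 * Λ) * Real.exp (4 * A₁) * (M ^ 2 * (2 * N + 4 * A₁ + 6))) with hK'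
  have hK0 : 0 ≤ K' := by positivity
  refine ⟨Real.exp 2 * K', fun t ht θ hθ φ => ?_⟩
  have hsin : 0 < Real.sin θ := Real.sin_pos_of_pos_of_lt_pi hθ.1 hθ.2
  by_cases hz : cut t₀ θ₀ φ₀ δ t θ φ = 0
  · rw [hz]; simp; positivity
  have hcl := yy_close (Ioo_subset_Icc_self hθ) hθ₀ h0.le (cut_ne h0 h1 hz)
  have hts : t ∈ Icc (-s) s := by
    constructor
    · have := (neg_abs_le (t₀ - 3 / 4 * δ))
      have := le_max_left |t₀ - 3 / 4 * δ| |t₀ + 3 / 4 * δ|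
      linarith [ht.1]
    · have := (le_abs_self (t₀ + 3 / 4 * δ))
      have := le_max_right |t₀ - 3 / 4 * δ| |t₀ + 3 / 4 * δ|
      linarith [ht.2]
  have hO : (t, θ, φ) ∈ Om := mem_Om.2 ⟨⟨by linarith [ht.1], by linarith [ht.2]⟩, hθ⟩
  have hb := abs_le.1 (bdP S hO)
  have hcc := abs_le.1 hc
  have key : |cdθ (EE c₁ c₂ S.Φ (lw R) S.v) t θ φ| ≤ K' := by
    rw [EE_th c₁ c₂ ((cn_P S).mono (by norm_num)) (cn_lw R 2) ((cn_v S).mono (by norm_num)) hO]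
    refine E1_bd hsin (Real.sin_le_one θ) (abs_sinh_le ?_) (Real.exp_pos _).le ?_
      (hP t hts θ hθ φ).2 (lwth_bd R hO) (hv t hts θ hθ hcl φ).1 (hv t hts θ hθ hcl φ).2 hM
      (by positivity) (by linarith)
    · rw [abs_le]; constructor <;> linarith [hb.1, hb.2, hcc.1, hcc.2]
    · have h3 := om_le R hO
      rw [← exp_lw R hO] at h3
      rw [show 2 * S.Φ t θ φ + 2 * c₁ - 4 * lw R t θ φ
        = (2 * S.Φ t θ φ + 2 * c₁) + -4 * lw R t θ φ by ring, Real.exp_add, mul_assoc]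
      have : Real.exp (2 * S.Φ t θ φ + 2 * c₁) ≤ Real.exp (4 * Λ) :=
        Real.exp_le_exp.2 (by linarith [hb.2, hcc.2])
      gcongr
  have z0 := cut_nonneg (t₀ := t₀) (θ₀ := θ₀) (φ₀ := φ₀) (δ := δ) (t := t) (θ := θ) (φ := φ)
  have z1 := cut_le_one (t₀ := t₀) (θ₀ := θ₀) (φ₀ := φ₀) (δ := δ) (t := t) (θ := θ) (φ := φ)
  have z2 : cut t₀ θ₀ φ₀ δ t θ φ ^ 2 ≤ 1 := pow_le_one₀ z0 z1
  have et : Real.exp (-t) ≤ Real.exp 2 := Real.exp_le_exp.2 (by linarith [ht.1])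
  rw [abs_mul, abs_of_nonneg (show 0 ≤ cut t₀ θ₀ φ₀ δ t θ φ ^ 2 * (Real.exp (-t) * Real.sin θ) by
    positivity)]
  calc _ ≤ 1 * (Real.exp 2 * Real.sin θ) * K' := by gcongr
    _ = _ := by ring

lemma core (S : RHMSolution (Ioo (-2) 2) A₁ R Λ a)
    (hL : ∀ t ∈ Ioo (-2 : ℝ) 2, ∀ θ ∈ Ioo (0 : ℝ) π, ∀ φ : ℝ,
        cL (fun t θ φ => Real.log (R.ω t θ φ)) t θ φ = 0)
    {B : ℝ} (hB : ∀ x, |deriv Real.smoothTransition x| ≤ B)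
    {t₀ θ₀ φ₀ δ c₁ c₂ : ℝ} (h0 : 0 < δ)
    (h1 : δ < 1 / 2) (hθ₀ : θ₀ ∈ Icc 0 π) (hc : |c₁| ≤ Λ)
    (ht1 : -2 < t₀ - 3 / 4 * δ) (ht2 : t₀ + 3 / 4 * δ < 2)
    (hD : Qset t₀ θ₀ φ₀ δ \ Qset t₀ θ₀ φ₀ (δ / 2) ⊆ Om)
    (hI : IntegrableOn (rhsI S c₁ c₂) (Qset t₀ θ₀ φ₀ δ \ Qset t₀ θ₀ φ₀ (δ / 2)))
    (hcN : θ₀ < 2 * δ → c₂ = a) (hcS : π - θ₀ < 2 * δ → c₂ = -a) :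
    ∃ K : ℝ, ∀ ε, 0 < ε → ε < π / 2 →
      Real.exp (-4 * Λ) * Real.exp (-2) *
      ∫ p in box (t₀ - 3 / 4 * δ) (t₀ + 3 / 4 * δ) ε (π - ε) (φ₀ - π) (φ₀ + π)
        ∩ Qset t₀ θ₀ φ₀ (δ / 2), lhsI S p
      ≤ 125 * B ^ 2 / δ ^ 2 * (16 * Real.exp (16 * Λ)) * Real.exp 2 *
        (∫ p in Qset t₀ θ₀ φ₀ δ \ Qset t₀ θ₀ φ₀ (δ / 2), rhsI S c₁ c₂ p) + K * Real.sin ε := by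
  obtain ⟨K, hK⟩ := bdry (φ₀ := φ₀) S h0 h1 hθ₀ hc ht1 ht2 hcN hcS
  have hpi := Real.pi_pos
  have hB0 : 0 ≤ B := (abs_nonneg _).trans (hB 0)
  set η := cut t₀ θ₀ φ₀ δ with hη
  set D := Qset t₀ θ₀ φ₀ δ \ Qset t₀ θ₀ φ₀ (δ / 2) with hDd
  have mD : MeasurableSet D := (isOpen_Qset _ _ _ _).measurableSet.diff (isOpen_Qset _ _ _ _).measurableSet
  have cη : Cn 1 η := Cn.of cut_contDiff
  have cη2 : Cn 1 (fun t θ φ => η t θ φ ^ 2) := ContDiffOn.pow cη 2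
  refine ⟨2 * K * (2 * π) * ((t₀ + 3 / 4 * δ) - (t₀ - 3 / 4 * δ)), fun ε e0 e1 => ?_⟩
  have hs' : Real.sin (π - ε) = Real.sin ε := Real.sin_pi_sub ε
  have hG := green (f := EE c₁ c₂ S.Φ (lw R) S.v) (ζ := fun t θ φ => η t θ φ ^ 2)
    (φ₁ := φ₀ - π) (κ := K * Real.sin ε) ht1 ht2 e0 (by linarith : π - ε < π) (by linarith)
    (by linarith) (cn_EE S c₁ c₂) (ContDiffOn.pow cη 2)
    (fun t θ φ => by simp only [EE, S.periodicΦ, S.periodicv, lw_per])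
    (fun t θ φ => by simp only [hη, cut_per])
    (fun θ φ => by simp only [hη, cut_t1]; norm_num) (fun θ φ => by simp only [hη, cut_t2]; norm_num)
    (fun t ht φ _ => hK t ht ε ⟨e0, by linarith⟩ φ)
    (fun t ht φ _ => by
      have := hK t ht (π - ε) ⟨by linarith, by linarith⟩ φ
      rwa [hs'] at this ⊢)
  rw [show φ₀ - π + 2 * π = φ₀ + π by ring] at hG
  set b := box (t₀ - 3 / 4 * δ) (t₀ + 3 / 4 * δ) ε (π - ε) (φ₀ - π) (φ₀ + π) with hbd
  have mb : MeasurableSet b := measurableSet_box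
  have hcb : cbox (t₀ - 3 / 4 * δ) (t₀ + 3 / 4 * δ) ε (π - ε) (φ₀ - π) (φ₀ + π) ⊆ Om :=
    cbox_sub_Om ht1 ht2 e0 (by linarith)
  have hbO : b ⊆ Om := box_sub_cbox.trans hcb
  have cw : ContinuousOn (fun p : ℝ × ℝ × ℝ => Real.exp (-p.1)) Om := by fun_prop
  have iG : IntegrableOn (fun p : ℝ × ℝ × ℝ => (Real.exp (-p.1) * Real.sin p.2.1) *
      (η p.1 p.2.1 p.2.2 ^ 2 * cL (EE c₁ c₂ S.Φ (lw R) S.v) p.1 p.2.1 p.2.2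
        + cgradDot (fun t θ φ => η t θ φ ^ 2) (EE c₁ c₂ S.Φ (lw R) S.v) p.1 p.2.1 p.2.2)) b :=
    integrableOn_box (((cw.mul cont_sin).mul (((cη.cont.pow 2).mul (cont_cL (cn_EE S c₁ c₂))).add
      (cont_cgradDot cη2 ((cn_EE S c₁ c₂).mono (by norm_num))))).mono hcb)
  have iF1 : IntegrableOn (fun p : ℝ × ℝ × ℝ => Real.exp (-4 * Λ) * Real.exp (-p.1) *
      (η p.1 p.2.1 p.2.2 ^ 2 * lhsI S p)) b :=
    integrableOn_box (((continuousOn_const.mul cw).mul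
      ((cη.cont.pow 2).mul (lhsI_cont S))).mono hcb)
  have iF2 : IntegrableOn (fun p : ℝ × ℝ × ℝ => cgradNormSq η p.1 p.2.1 p.2.2 *
      (16 * Real.exp (16 * Λ)) * Real.exp (-p.1) * rhsI S c₁ c₂ p) b :=
    integrableOn_box (((((cont_gns cη).mul continuousOn_const).mul cw).mul
      (rhsI_cont S c₁ c₂)).mono hcb)
  set Gf : ℝ × ℝ × ℝ → ℝ := fun p => (Real.exp (-p.1) * Real.sin p.2.1) *
      (η p.1 p.2.1 p.2.2 ^ 2 * cL (EE c₁ c₂ S.Φ (lw R) S.v) p.1 p.2.1 p.2.2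
        + cgradDot (fun t θ φ => η t θ φ ^ 2) (EE c₁ c₂ S.Φ (lw R) S.v) p.1 p.2.1 p.2.2) with hGf
  set F1 : ℝ × ℝ × ℝ → ℝ := fun p => Real.exp (-4 * Λ) * Real.exp (-p.1) *
      (η p.1 p.2.1 p.2.2 ^ 2 * lhsI S p) with hF1
  set F2 : ℝ × ℝ × ℝ → ℝ := fun p => cgradNormSq η p.1 p.2.1 p.2.2 *
      (16 * Real.exp (16 * Λ)) * Real.exp (-p.1) * rhsI S c₁ c₂ p with hF2
  have hΛ : 0 ≤ Λ := by linarith [S.Λ_ge]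
  have pw : ∀ p ∈ b, F1 p ≤ F2 p + Gf p := by
    rintro ⟨t, θ, φ⟩ hp
    have hO := hbO hp
    have hO' := mem_Om.1 hO
    have h := pw2 c₁ c₂ hΛ (om_pos R hO) ((cn_P S).mono (by norm_num)) (cn_lw R 2)
      ((cn_v S).mono (by norm_num)) cη hO (bdP S hO) hc (eqP S hL hO)
      (hL t hO'.1 θ hO'.2 φ) (S.eqv t hO'.1 θ hO'.2 φ)
    have hw : 0 ≤ Real.exp (-t) * Real.sin θ := (mul_pos (Real.exp_pos _) (sin_pos_Om hO)).le
    have h2 := mul_le_mul_of_nonneg_left h hw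
    have e : (fun t θ φ => Real.log (R.ω t θ φ)) = lw R := rfl
    rw [e] at h2
    simp only [hF1, hF2, hGf, lhsI, rhsI]
    linarith [h2]
  have I1 : ∫ p in b, F1 p ≤ (∫ p in b, F2 p) + ∫ p in b, Gf p := by
    rw [← integral_add iF2 iG]
    exact setIntegral_mono_on iF1 (iF2.add iG) mb pw
  have I2 : Real.exp (-4 * Λ) * Real.exp (-2) * ∫ p in b ∩ Qset t₀ θ₀ φ₀ (δ / 2), lhsI S p
      ≤ ∫ p in b, F1 p := by
    have mQ := (isOpen_Qset t₀ θ₀ φ₀ (δ / 2)).measurableSet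
    have il : IntegrableOn (lhsI S) b := integrableOn_box ((lhsI_cont S).mono hcb)
    have s1 : ∫ p in b ∩ Qset t₀ θ₀ φ₀ (δ / 2), F1 p ≤ ∫ p in b, F1 p := by
      refine setIntegral_mono_set iF1 ?_ (Eventually.of_forall inter_subset_left)
      refine (ae_restrict_iff' mb).2 (Eventually.of_forall fun p hp => ?_)
      have := lhsI_nonneg S (hbO hp)
      simp only [hF1, Pi.zero_apply]
      positivity
    refine le_trans ?_ s1
    rw [← integral_const_mul]
    refine setIntegral_mono_on ((il.mono_set inter_subset_left).const_mul _)
      (iF1.mono_set inter_subset_left) (mb.inter mQ) ?_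
    rintro ⟨t, θ, φ⟩ ⟨hp, hq⟩
    have hl := lhsI_nonneg S (hbO hp)
    have ht := (mem_Om.1 (hbO hp)).1
    have et : Real.exp (-2) ≤ Real.exp (-t) := Real.exp_le_exp.2 (by linarith [ht.2])
    simp only [hF1, hη, cut_one h0 h1 hθ₀ hq, one_pow, one_mul]
    gcongr
  have I3 : ∫ p in b, F2 p ≤ 125 * B ^ 2 / δ ^ 2 * (16 * Real.exp (16 * Λ)) * Real.exp 2 *
        (∫ p in D, rhsI S c₁ c₂ p) := by
    set m := 125 * B ^ 2 / δ ^ 2 * (16 * Real.exp (16 * Λ)) * Real.exp 2 with hm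
    have hm0 : 0 ≤ m := by positivity
    have iD : IntegrableOn (fun p => m * rhsI S c₁ c₂ p) D := hI.const_mul m
    calc ∫ p in b, F2 p ≤ ∫ p in b, D.indicator (fun p => m * rhsI S c₁ c₂ p) p := by
          refine setIntegral_mono_on iF2 ((integrable_indicator_iff mD).2 iD).integrableOn mb ?_
          rintro ⟨t, θ, φ⟩ hp
          have hO := hbO hp
          have ht := (mem_Om.1 hO).1
          have hr := rhsI_nonneg S c₁ c₂ hO
          by_cases hd : (t, θ, φ) ∈ D
          · rw [indicator_of_mem hd]
            have g1 := cut_grad_le (φ := φ) (θ₀ := θ₀) (φ₀ := φ₀) hB h0 h1 hp.1 (mem_Om.1 hO).2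
            have et : Real.exp (-t) ≤ Real.exp 2 := Real.exp_le_exp.2 (by linarith [ht.1])
            simp only [hF2, hm]
            gcongr
          · rw [indicator_of_notMem hd]
            have := cut_grad_zero h0 h1 hθ₀ (box_mono le_rfl le_rfl e0.le (by linarith) hp) hd
            simp only [hF2, hη, this]
            simp
      _ = ∫ p in b ∩ D, m * rhsI S c₁ c₂ p := setIntegral_indicator mD
      _ ≤ ∫ p in D, m * rhsI S c₁ c₂ p := by
          refine setIntegral_mono_set iD ?_ (Eventually.of_forall inter_subset_right)
          refine (ae_restrict_iff' mD).2 (Eventually.of_forall fun p hp => ?_)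
          exact mul_nonneg hm0 (rhsI_nonneg S c₁ c₂ (hD hp))
      _ = _ := integral_const_mul _ _
  have I4 := (le_abs_self _).trans hG
  calc _ ≤ _ := I2
    _ ≤ _ := I1
    _ ≤ _ := add_le_add I3 I4
    _ = _ := by ring

end assembly
end

/-- Lemma `lem:monotonicity`: Caccioppoli-type (reverse Poincaré)
inequality on cylinders `Q_δ(t₀,P₀)`, with a constant depending only on `Λ`, `A₁`. -/
theorem statement_8
    (Λ A₁ : ℝ) (hΛ : 1 ≤ Λ) (hA : 1 ≤ A₁) :
    ∃ C > (0 : ℝ), ∀ (a : ℝ) (Rω : Renormalizer (Ioo (-2) 2) A₁)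
      (S : RHMSolution (Ioo (-2) 2) A₁ Rω Λ a),
      (∀ t ∈ Ioo (-2 : ℝ) 2, ∀ θ ∈ Ioo (0 : ℝ) π, ∀ φ : ℝ,
        cL (fun t θ φ => Real.log (Rω.ω t θ φ)) t θ φ = 0) →
      ∀ t₀ θ₀ φ₀ δ : ℝ, 0 < δ → δ < 1 / 2 → θ₀ ∈ Icc (0 : ℝ) π →
        Ioo (t₀ - δ) (t₀ + δ) ⊆ Ioo (-2 : ℝ) 2 →
      ∀ c₁ c₂ : ℝ, c₁ ∈ Icc (-Λ) Λ →
        (θ₀ < 2 * δ → c₂ = a) → (π - θ₀ < 2 * δ → c₂ = -a) →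
      (∫ p in Qset t₀ θ₀ φ₀ (δ / 2),
          (cgradNormSq S.Φ p.1 p.2.1 p.2.2
            + Real.exp (4 * (S.Φ p.1 p.2.1 p.2.2 - Real.log (Rω.ω p.1 p.2.1 p.2.2)))
              * cgradNormSq S.v p.1 p.2.1 p.2.2) * Real.sin p.2.1)
        ≤ C / δ ^ 2 *
          ∫ p in Qset t₀ θ₀ φ₀ δ \ Qset t₀ θ₀ φ₀ (δ / 2),
            ((S.Φ p.1 p.2.1 p.2.2 - c₁) ^ 2
              + ((Rω.ω p.1 p.2.1 p.2.2) ^ 4)⁻¹ * (S.v p.1 p.2.1 p.2.2 - c₂) ^ 2)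
              * Real.sin p.2.1 := by
  obtain ⟨B, hBp, hB⟩ := chi_deriv
  refine ⟨125 * B ^ 2 * (16 * Real.exp (16 * Λ)) * Real.exp 2 *
    (Real.exp (4 * Λ) * Real.exp 2), by positivity, ?_⟩
  intro a R S hL t₀ θ₀ φ₀ δ h0 h1 hθ₀ hT c₁ c₂ hc1 hcN hcS
  have hpi := Real.pi_gt_three
  have hT' := (Ioo_subset_Ioo_iff (by linarith : t₀ - δ < t₀ + δ)).1 hT
  have ht1 : -2 < t₀ - 3 / 4 * δ := by linarith [hT'.1]
  have ht2 : t₀ + 3 / 4 * δ < 2 := by linarith [hT'.2]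
  have hc : |c₁| ≤ Λ := abs_le.2 hc1
  have hQO : ∀ r, 0 < r → r ≤ δ → Qset t₀ θ₀ φ₀ r ⊆ Om := by
    rintro r hr hr' ⟨t, θ, φ⟩ hp
    have h := (mem_Q hθ₀ hr.le (by linarith)).1 hp
    exact mem_Om.2 ⟨⟨by linarith [h.1.1, hT'.1], by linarith [h.1.2, hT'.2]⟩, h.2.1⟩
  have hD : Qset t₀ θ₀ φ₀ δ \ Qset t₀ θ₀ φ₀ (δ / 2) ⊆ Om :=
    diff_subset.trans (hQO δ h0 le_rfl)
  have mQ := (isOpen_Qset t₀ θ₀ φ₀ (δ / 2)).measurableSet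
  have mD : MeasurableSet (Qset t₀ θ₀ φ₀ δ \ Qset t₀ θ₀ φ₀ (δ / 2)) :=
    (isOpen_Qset _ _ _ _).measurableSet.diff mQ
  have hI : IntegrableOn (rhsI S c₁ c₂) (Qset t₀ θ₀ φ₀ δ \ Qset t₀ θ₀ φ₀ (δ / 2)) := by
    refine (rhs_int S hL (φ₀ - π) h0 hθ₀ hcN hcS).mono_set ?_
    rintro ⟨t, θ, φ⟩ ⟨hp, -⟩
    have h := (mem_Q hθ₀ h0.le (by linarith)).1 hp
    have hcl := abs_lt.1 (yy_close (Ioo_subset_Icc_self h.2.1) hθ₀ h0.le h.2.2.2)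
    refine ⟨hT h.1, ⟨max_lt h.2.1.1 (by linarith), lt_min h.2.1.2 (by linarith)⟩, h.2.2.1.1, ?_⟩
    have := h.2.2.1.2
    simp only
    linarith
  obtain ⟨K, hK⟩ := core (φ₀ := φ₀) S hL hB h0 h1 hθ₀ hc ht1 ht2 hD hI hcN hcS
  have hR0 : 0 ≤ ∫ p in Qset t₀ θ₀ φ₀ δ \ Qset t₀ θ₀ φ₀ (δ / 2), rhsI S c₁ c₂ p :=
    setIntegral_nonneg mD fun p hp => rhsI_nonneg S c₁ c₂ (hD hp)
  change ∫ p in Qset t₀ θ₀ φ₀ (δ / 2), lhsI S p ≤ _ *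
    ∫ p in Qset t₀ θ₀ φ₀ δ \ Qset t₀ θ₀ φ₀ (δ / 2), rhsI S c₁ c₂ p
  by_cases hli : IntegrableOn (lhsI S) (Qset t₀ θ₀ φ₀ (δ / 2))
  swap
  · rw [integral_undef hli]
    positivity
  set I := ∫ p in Qset t₀ θ₀ φ₀ δ \ Qset t₀ θ₀ φ₀ (δ / 2), rhsI S c₁ c₂ p with hId
  have hε0 : ∀ n : ℕ, 0 < 1 / ((n : ℝ) + 1) := fun n => by positivity
  have hε1 : ∀ n : ℕ, 1 / ((n : ℝ) + 1) < π / 2 := fun n => by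
    have : 1 / ((n : ℝ) + 1) ≤ 1 := by
      rw [div_le_one (by positivity)]
      linarith [Nat.cast_nonneg (α := ℝ) n]
    linarith
  set s : ℕ → Set (ℝ × ℝ × ℝ) := fun n => box (t₀ - 3 / 4 * δ) (t₀ + 3 / 4 * δ)
    (1 / ((n : ℝ) + 1)) (π - 1 / ((n : ℝ) + 1)) (φ₀ - π) (φ₀ + π)
        ∩ Qset t₀ θ₀ φ₀ (δ / 2) with hs
  have sU : ⋃ n, s n = Qset t₀ θ₀ φ₀ (δ / 2) := by
    apply Subset.antisymm
    · exact iUnion_subset fun n => inter_subset_right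
    · rintro ⟨t, θ, φ⟩ hp
      have h := (mem_Q hθ₀ (by linarith) (by linarith)).1 hp
      obtain ⟨n, hn⟩ := exists_nat_one_div_lt
        (show 0 < min θ (π - θ) from lt_min h.2.1.1 (by linarith [h.2.1.2]))
      have n1 := lt_of_lt_of_le hn (min_le_left _ _)
      have n2 := lt_of_lt_of_le hn (min_le_right _ _)
      refine mem_iUnion.2 ⟨n, ⟨⟨?_, ?_⟩, ⟨n1, ?_⟩, h.2.2.1⟩, hp⟩
      · show t₀ - 3 / 4 * δ < t
        linarith [h.1.1]
      · show t < t₀ + 3 / 4 * δ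
        linarith [h.1.2]
      · show θ < π - 1 / ((n : ℝ) + 1)
        linarith
  have sm : Monotone s := by
    intro n m hnm
    have : 1 / ((m : ℝ) + 1) ≤ 1 / ((n : ℝ) + 1) := Nat.one_div_le_one_div hnm
    exact inter_subset_inter_left _ (box_mono le_rfl le_rfl this (by linarith))
  have T1 := tendsto_setIntegral_of_monotone (μ := volume) (f := lhsI S)
    (fun n => (measurableSet_box.inter mQ : MeasurableSet (s n))) sm (by rw [sU]; exact hli)
  rw [sU] at T1
  have T2 : Tendsto (fun n : ℕ => K * Real.sin (1 / ((n : ℝ) + 1))) atTop (nhds 0) := by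
    have := ((Real.continuous_sin.tendsto 0).comp
      (tendsto_one_div_add_atTop_nhds_zero_nat (𝕜 := ℝ))).const_mul K
    simpa using this
  have T3 := le_of_tendsto_of_tendsto' (T1.const_mul (Real.exp (-4 * Λ) * Real.exp (-2)))
    (T2.const_add (125 * B ^ 2 / δ ^ 2 * (16 * Real.exp (16 * Λ)) * Real.exp 2 * I))
    (fun n => hK _ (hε0 n) (hε1 n))
  rw [add_zero] at T3
  have e1 : Real.exp (4 * Λ) * Real.exp 2 * (Real.exp (-4 * Λ) * Real.exp (-2)) = 1 := by
    rw [← Real.exp_add, ← Real.exp_add, ← Real.exp_add]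
    rw [← Real.exp_zero]
    congr 1
    ring
  have T4 := mul_le_mul_of_nonneg_left T3
    (show 0 ≤ Real.exp (4 * Λ) * Real.exp 2 by positivity)
  rw [← mul_assoc, e1, one_mul] at T4
  refine T4.trans (le_of_eq ?_)
  ring
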